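/- arXiv:2405.12763 — 2 statements merged into one kernel-verified Lean document; each statement's English description precedes it below -/
import Mathlib

section
/- Let k be a field of prime characteristic p, and G a finite group whose order is divisible by p. Let M and N be two finitely generated left modules over the group algebra kG. Then either Ext_{kG}^n(M, N) = 0 for all n > 0, or there exist integers d > 0 and m_0 and an integer j with 0 ≤ j < d such that Ext_{kG}^n(M, N) ≠ 0 for every n ≥ m_0 with n ≡ j (mod d). -/
/-!
Choose a prime `p` which is the characteristic of `k` if that is positive. Inducing faithful
characters from the subgroups of order `p` gives a finite `G`-set `Ω` and a monomial action of `G`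
on `Ω → ZMod p` without fixed points of elements of order `p`, so that all stabilizers have order
prime to `p`. The tensor product over `Ω` of the two-periodic resolutions for the groups `ZMod p`,
with coefficients in the functions `(Ω → ZMod p) → M`, is then a projective resolution of `M` over
`kG` by Higman's criterion. Symmetric polynomials in `Ω` act on it by chain maps of negative
degree, and the elementary symmetric ones, being a regular sequence, act surjectively on the
common kernels of the preceding ones.

If one of them acts on `Ext(M, N)` in a way that is not locally nilpotent, then the iterated
images of some class are nonzero and lie in an arithmetic progression of degrees. If all of them
act locally nilpotently, cocycles and coboundaries can be carried through the common kernels. The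
last of these vanishes in degrees beyond `|Ω|²`, and the operators of degrees `2, 4, …, 2|Ω|`
shift this bound by `1 + 3 + ⋯ + (2|Ω| - 1) = |Ω|²`, so `Ext(M, N)` vanishes in positive degrees.
-/

open CategoryTheory

section LinearMap

theorem exists_comp_eq_of_ker_le_ker {k U V W : Type*} [DivisionRing k] [AddCommGroup U]
    [AddCommGroup V] [AddCommGroup W] [Module k U] [Module k V] [Module k W]
    (a : U →ₗ[k] V) (h : U →ₗ[k] W) (hk : LinearMap.ker a ≤ LinearMap.ker h) :
    ∃ v : V →ₗ[k] W, v ∘ₗ a = h := by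
  obtain ⟨l, hl⟩ := ((LinearMap.ker a).liftQ a le_rfl).exists_leftInverse_of_injective
    (Submodule.ker_liftQ_eq_bot _ _ _ le_rfl)
  refine ⟨(LinearMap.ker a).liftQ h hk ∘ₗ l, LinearMap.ext fun x => ?_⟩
  exact congrArg ((LinearMap.ker a).liftQ h hk) (LinearMap.congr_fun hl (Submodule.Quotient.mk x))

end LinearMap

section SymmetricPolynomials

variable {R ι : Type*} [CommRing R]

/-- `rs` is a weakly regular sequence on the quotient ring `R ⧸ I`, phrased without passing to
quotients. -/
def IsRegularModulo (I : Ideal R) : List R → Prop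
  | [] => True
  | r :: rs => (∀ q, r * q ∈ I → q ∈ I) ∧ IsRegularModulo (I ⊔ Ideal.span {r}) rs

theorem isRegularModulo_top (rs : List R) : IsRegularModulo ⊤ rs := by
  induction rs with
  | nil => trivial
  | cons r rs ih => exact ⟨fun _ _ => trivial, by rwa [top_sup_eq]⟩

theorem IsRegularModulo.congr {I : Ideal R} {rs rs' : List R} (h : IsRegularModulo I rs)
    (hrs : List.Forall₂ (fun r r' => r - r' ∈ I) rs rs') : IsRegularModulo I rs' := by
  induction rs generalizing I rs' with
  | nil => cases hrs; trivial
  | cons r rs ih =>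
    obtain _ | @⟨_, r', _, rs', hr, hrs⟩ := hrs
    have hspan : I ⊔ Ideal.span {r} = I ⊔ Ideal.span {r'} := by
      refine le_antisymm (sup_le le_sup_left ?_) (sup_le le_sup_left ?_) <;>
        rw [Ideal.span_singleton_le_iff_mem]
      · simpa using add_mem (Ideal.mem_sup_left hr)
          (Ideal.mem_sup_right (Ideal.mem_span_singleton_self r'))
      · simpa using sub_mem (Ideal.mem_sup_right (Ideal.mem_span_singleton_self r))
          (Ideal.mem_sup_left hr)
    refine ⟨fun q hq => h.1 q ?_, ?_⟩
    · have : r * q = r' * q + (r - r') * q := by ring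
      exact this ▸ add_mem hq (I.mul_mem_right q hr)
    · rw [← hspan]
      exact ih h.2 (hrs.imp fun _ _ => Ideal.mem_sup_left)

/-- The hypotheses say that `0 → R ⧸ I → R ⧸ K → R ⧸ (K ⊔ (b)) → 0`, with first map
multiplication by `b`, is exact. -/
theorem IsRegularModulo.of_exact {I K : Ideal R} {b : R} (hI : ∀ q, b * q ∈ K ↔ q ∈ I)
    {rs : List R} (h₁ : IsRegularModulo I rs) (h₃ : IsRegularModulo (K ⊔ Ideal.span {b}) rs) :
    IsRegularModulo K rs := by
  induction rs generalizing I K with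
  | nil => trivial
  | cons r rs ih =>
    have exists_sub_mem : ∀ q, r * q ∈ K → ∃ t, q - b * t ∈ K ∧ t ∈ I := fun q hq => by
      obtain ⟨i, hi, j, hj, rfl⟩ := Submodule.mem_sup.1 (h₃.1 q (Ideal.mem_sup_left hq))
      obtain ⟨t, rfl⟩ := Ideal.mem_span_singleton'.1 hj
      refine ⟨t, by simpa [mul_comm b t] using hi, h₁.1 t ((hI _).1 ?_)⟩
      have : b * (r * t) = r * (i + t * b) - r * i := by ring
      exact this ▸ sub_mem hq (K.mul_mem_left r hi)
    refine ⟨fun q hq => ?_, ih (I := I ⊔ Ideal.span {r}) (fun q => ⟨fun hq => ?_, fun hq => ?_⟩)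
      h₁.2 (by simpa only [sup_right_comm] using h₃.2)⟩
    · obtain ⟨t, hqt, ht⟩ := exists_sub_mem q hq
      simpa using add_mem hqt ((hI t).2 ht)
    · obtain ⟨i, hi, j, hj, hij⟩ := Submodule.mem_sup.1 hq
      obtain ⟨u, rfl⟩ := Ideal.mem_span_singleton'.1 hj
      have hu : r * u ∈ K ⊔ Ideal.span {b} := by
        have : r * u = q * b - i := by linear_combination hij
        exact this ▸ sub_mem (Ideal.mem_sup_right (Ideal.mul_mem_left _ _
          (Ideal.mem_span_singleton_self b))) (Ideal.mem_sup_left hi)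
      obtain ⟨i', hi', j', hj', rfl⟩ := Submodule.mem_sup.1 (h₃.1 u hu)
      obtain ⟨w, rfl⟩ := Ideal.mem_span_singleton'.1 hj'
      have hqw : q - r * w ∈ I := (hI _).1 <| by
        have : b * (q - r * w) = i + r * i' := by linear_combination -hij
        exact this ▸ add_mem hi (K.mul_mem_left r hi')
      simpa using add_mem (Ideal.mem_sup_left hqw) (Ideal.mem_sup_right
        (Ideal.mul_mem_right w _ (Ideal.mem_span_singleton_self r)))
    · obtain ⟨i, hi, j, hj, rfl⟩ := Submodule.mem_sup.1 hq
      obtain ⟨u, rfl⟩ := Ideal.mem_span_singleton'.1 hj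
      rw [mul_add, ← mul_assoc]
      exact add_mem (Ideal.mem_sup_left ((hI i).2 hi)) (Ideal.mem_sup_right
        (Ideal.mul_mem_left _ _ (Ideal.mem_span_singleton_self r)))

/-- The `n`-th elementary symmetric polynomial in the family `x` restricted to `s`. -/
def elemSymm (x : ι → R) (s : Finset ι) (n : ℕ) : R := ∑ t ∈ s.powersetCard n, ∏ i ∈ t, x i

variable (x : ι → R)

theorem elemSymm_card (s : Finset ι) : elemSymm x s s.card = ∏ i ∈ s, x i := by
  rw [elemSymm, Finset.powersetCard_self, Finset.sum_singleton]

theorem elemSymm_insert [DecidableEq ι] {i : ι} {s : Finset ι} (hi : i ∉ s) (n : ℕ) :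
    elemSymm x (insert i s) (n + 1) = elemSymm x s (n + 1) + x i * elemSymm x s n := by
  have notMem {t : Finset ι} (ht : t ∈ s.powersetCard n) : i ∉ t :=
    fun h => hi ((Finset.mem_powersetCard.1 ht).1 h)
  rw [elemSymm, Finset.powersetCard_succ_insert hi, Finset.sum_union, Finset.sum_image,
    elemSymm, elemSymm, Finset.mul_sum]
  · exact congrArg _ (Finset.sum_congr rfl fun t ht => Finset.prod_insert (notMem ht))
  · intro t ht t' ht' h
    rw [← Finset.erase_insert (notMem ht), h, Finset.erase_insert (notMem ht')]
  · refine Finset.disjoint_left.2 fun t ht ht' => hi ?_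
    obtain ⟨t', -, rfl⟩ := Finset.mem_image.1 ht'
    exact (Finset.mem_powersetCard.1 ht).1 (Finset.mem_insert_self i t')

/-- The elementary symmetric polynomials of degrees `n, n - 1, …, 1` in the family `x` restricted
to `s`. -/
def elemSymmList (s : Finset ι) (n : ℕ) : List R :=
  (List.range n).reverse.map fun j => elemSymm x s (j + 1)

theorem elemSymmList_succ (s : Finset ι) (n : ℕ) :
    elemSymmList x s (n + 1) = elemSymm x s (n + 1) :: elemSymmList x s n := by
  simp only [elemSymmList, List.range_succ, List.reverse_append, List.reverse_singleton,
    List.singleton_append, List.map_cons]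

theorem forall₂_elemSymmList_insert [DecidableEq ι] {I : Ideal R} {i : ι} {s : Finset ι}
    (hi : i ∉ s) (hI : x i ∈ I) (n : ℕ) : List.Forall₂ (fun r r' => r - r' ∈ I)
      (elemSymmList x s n) (elemSymmList x (insert i s) n) := by
  induction n with
  | zero => exact .nil
  | succ n ih =>
    simp only [elemSymmList_succ]
    refine .cons ?_ ih
    rw [elemSymm_insert x hi, sub_add_cancel_left]
    exact neg_mem (I.mul_mem_right _ hI)

variable {x}

theorem mul_prod_mem_span_image
    (hx : ∀ (A : Finset ι), ∀ i ∉ A, ∀ q, x i * q ∈ Ideal.span (x '' A) → q ∈ Ideal.span (x '' A))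
    {A s : Finset ι} (hAs : Disjoint A s) (q : R) (hq : (∏ i ∈ s, x i) * q ∈ Ideal.span (x '' A)) :
    q ∈ Ideal.span (x '' A) := by
  classical
  induction s using Finset.induction with
  | empty => simpa using hq
  | insert i s hi ih =>
    rw [Finset.disjoint_insert_right] at hAs
    exact ih hAs.2 (hx A i hAs.1 _ (by rwa [Finset.prod_insert hi, mul_assoc] at hq))

theorem mul_mem_sup_span_prod_insert_iff [DecidableEq ι] {I : Ideal R} {j : ι}
    (hI : ∀ q, x j * q ∈ I → q ∈ I) {B : Finset ι} (hj : j ∉ B) (q : R) :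
    x j * q ∈ I ⊔ Ideal.span {∏ i ∈ insert j B, x i} ↔ q ∈ I ⊔ Ideal.span {∏ i ∈ B, x i} := by
  rw [Finset.prod_insert hj]
  constructor <;> intro hq <;> obtain ⟨i, hi, _, hj, hq⟩ := Submodule.mem_sup.1 hq <;>
    obtain ⟨u, rfl⟩ := Ideal.mem_span_singleton'.1 hj
  · have : q - u * ∏ i ∈ B, x i ∈ I := hI _ <| by
      have : x j * (q - u * ∏ i ∈ B, x i) = i := by linear_combination -hq
      exact this ▸ hi
    exact (Submodule.sub_mem_iff_left _ (Ideal.mem_sup_right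
      (Ideal.mul_mem_left _ u (Ideal.mem_span_singleton_self _)))).1 (Ideal.mem_sup_left this)
  · rw [← hq, mul_add, mul_left_comm]
    exact add_mem (Ideal.mem_sup_left (I.mul_mem_left _ hi)) (Ideal.mem_sup_right
      (Ideal.mul_mem_left _ u (Ideal.mem_span_singleton_self _)))

/-- The elementary symmetric polynomials in `s` are filtered through the ideals `∏ i ∈ B, x i` with
`B ⊆ s`, and modulo `x j` they become those in `s \ {j}`. -/
theorem isRegularModulo_elemSymmList
    (hx : ∀ (A : Finset ι), ∀ i ∉ A, ∀ q, x i * q ∈ Ideal.span (x '' A) → q ∈ Ideal.span (x '' A))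
    {n : ℕ} {A s : Finset ι} (hs : s.card = n) (hAs : Disjoint A s) :
    IsRegularModulo (Ideal.span (x '' A)) (elemSymmList x s n) := by
  classical
  induction n generalizing A s with
  | zero => trivial
  | succ n ih =>
    rw [elemSymmList_succ]
    refine ⟨fun q => ?_, ?_⟩ <;> rw [← hs, elemSymm_card]
    · exact mul_prod_mem_span_image hx hAs q
    suffices ∀ B ⊆ s, IsRegularModulo (Ideal.span (x '' A) ⊔ Ideal.span {∏ i ∈ B, x i})
      (elemSymmList x s n) from this s subset_rfl
    intro B
    induction B using Finset.induction with
    | empty => simpa using isRegularModulo_top (elemSymmList x s n)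
    | insert j B hj ihB =>
      intro hB
      have hjs : j ∈ s := hB (Finset.mem_insert_self j B)
      have hjA : j ∉ A := Finset.disjoint_right.1 hAs hjs
      refine .of_exact (mul_mem_sup_span_prod_insert_iff (hx A j hjA) hj)
        (ihB ((Finset.subset_insert j B).trans hB)) ?_
      have hsup : Ideal.span (x '' A) ⊔ Ideal.span {∏ i ∈ insert j B, x i} ⊔ Ideal.span {x j}
          = Ideal.span (x '' (insert j A : Finset ι)) := by
        have : Ideal.span {∏ i ∈ insert j B, x i} ≤ Ideal.span {x j} :=
          Ideal.span_singleton_le_span_singleton.2 ⟨∏ i ∈ B, x i, Finset.prod_insert hj⟩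
        rw [sup_assoc, sup_eq_right.2 this, Finset.coe_insert, Set.image_insert_eq,
          Ideal.span_insert, sup_comm]
      rw [hsup]
      have hA : Disjoint (insert j A) (s.erase j) := by
        rw [Finset.disjoint_insert_left]
        exact ⟨Finset.notMem_erase j s, hAs.mono_right (Finset.erase_subset j s)⟩
      have := forall₂_elemSymmList_insert x (I := Ideal.span (x '' (insert j A : Finset ι)))
        (Finset.notMem_erase j s)
        (Ideal.subset_span ⟨j, Finset.mem_coe.2 (Finset.mem_insert_self j A), rfl⟩) n
      rw [Finset.insert_erase hjs] at this
      exact (ih (by rw [Finset.card_erase_of_mem hjs, hs, Nat.add_sub_cancel]) hA).congr this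

theorem sup_pow_le (I J : Ideal R) (n : ℕ) : (I ⊔ J) ^ (n + 1) ≤ I ^ (n + 1) ⊔ J * (I ⊔ J) ^ n := by
  induction n with
  | zero => simp
  | succ n ih =>
    calc (I ⊔ J) ^ (n + 2) = I * (I ⊔ J) ^ (n + 1) ⊔ J * (I ⊔ J) ^ (n + 1) := by
          rw [pow_succ' _ (n + 1), Ideal.sup_mul]
      _ ≤ (I ^ (n + 2) ⊔ J * (I ⊔ J) ^ (n + 1)) ⊔ J * (I ⊔ J) ^ (n + 1) := by
          refine sup_le_sup_right ((Ideal.mul_mono_right ih).trans ?_) _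
          rw [Ideal.mul_sup, ← pow_succ', mul_left_comm, pow_succ' (I ⊔ J)]
          exact sup_le_sup_left (Ideal.mul_mono_right (Ideal.mul_mono_left le_sup_left)) _
      _ = I ^ (n + 2) ⊔ J * (I ⊔ J) ^ (n + 1) := by rw [sup_assoc, sup_idem]

theorem prod_mem_span_image_pow (s : Finset ι) {t : Finset ι} (ht : t ⊆ s) :
    ∏ i ∈ t, x i ∈ Ideal.span (x '' s) ^ t.card := by
  rw [← Finset.prod_const]
  exact Ideal.prod_mem_prod fun i hi => Ideal.subset_span ⟨i, ht hi, rfl⟩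

theorem elemSymm_mem_span_image_pow (s : Finset ι) (n : ℕ) :
    elemSymm x s n ∈ Ideal.span (x '' s) ^ n :=
  sum_mem fun _ ht => (Finset.mem_powersetCard.1 ht).2 ▸
    prod_mem_span_image_pow s (Finset.mem_powersetCard.1 ht).1

variable (x) in
/-- The degree `N` part of the ideal generated by the elementary symmetric polynomials in `s`, when
`x` are variables of degree one. -/
def elemSymmIdeal (s : Finset ι) (N : ℕ) : Ideal R :=
  ⨆ j ∈ Finset.Icc 1 s.card, Ideal.span {elemSymm x s j} * Ideal.span (x '' s) ^ (N - j)

theorem span_image_pow_insert_le [DecidableEq ι] {i : ι} {s : Finset ι} (hi : i ∉ s) {N : ℕ}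
    (h : Ideal.span (x '' s) ^ (N + 1) ≤ elemSymmIdeal x s (N + 1)) :
    Ideal.span (x '' (insert i s : Finset ι)) ^ (N + 1) ≤ elemSymmIdeal x (insert i s) (N + 1) ⊔
      Ideal.span {x i} * Ideal.span (x '' (insert i s : Finset ι)) ^ N := by
  set J := Ideal.span (x '' (insert i s : Finset ι)) with hJ
  have hsup : Ideal.span (x '' s) ⊔ Ideal.span {x i} = J := by
    rw [hJ, Finset.coe_insert, Set.image_insert_eq, Ideal.span_insert, sup_comm]
  have hsJ : Ideal.span (x '' s) ≤ J := hsup ▸ le_sup_left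
  rw [← hsup]
  refine (sup_pow_le _ _ N).trans (sup_le (h.trans (iSup₂_le fun j hj => ?_)) le_sup_right)
  rw [hsup, Ideal.span_singleton_mul_le_iff]
  obtain ⟨hj₁, hj₂⟩ := Finset.mem_Icc.1 hj
  obtain ⟨j, rfl⟩ := Nat.exists_eq_add_of_le' hj₁
  intro q hq
  have hqJ : q ∈ J ^ (N + 1 - (j + 1)) := Ideal.pow_right_mono hsJ _ hq
  rw [show elemSymm x s (j + 1) * q = elemSymm x (insert i s) (j + 1) * q
    - x i * (elemSymm x s j * q) by rw [elemSymm_insert x hi]; ring]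
  refine sub_mem (Ideal.mem_sup_left ?_) (Ideal.mem_sup_right ?_)
  · refine Ideal.mem_iSup_of_mem (j + 1) (Ideal.mem_iSup_of_mem ?_
      (Ideal.mul_mem_mul (Ideal.mem_span_singleton_self _) hqJ))
    rw [Finset.card_insert_of_notMem hi, Finset.mem_Icc]
    omega
  · refine Ideal.mul_mem_mul (Ideal.mem_span_singleton_self _)
      (Ideal.pow_le_pow_right (show N ≤ j + (N + 1 - (j + 1)) by omega) ?_)
    rw [pow_add]
    exact Ideal.mul_mem_mul (Ideal.pow_right_mono hsJ _ (elemSymm_mem_span_image_pow s j)) hqJ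

theorem span_singleton_mul_elemSymmIdeal_le {s : Finset ι} {r : R} {a : ℕ}
    (hr : r ∈ Ideal.span (x '' s) ^ a) (N : ℕ) :
    Ideal.span {r} * elemSymmIdeal x s N ≤ elemSymmIdeal x s (a + N) := by
  simp only [elemSymmIdeal, Ideal.mul_iSup]
  refine iSup₂_mono fun j _ => ?_
  rw [mul_left_comm]
  refine Ideal.mul_mono_right ((Ideal.mul_mono_left
    ((Ideal.span_singleton_le_iff_mem _).2 hr)).trans ?_)
  rw [← pow_add]
  exact Ideal.pow_le_pow_right (by omega)

/-- The bound is sharp: the top degree of the coinvariant algebra is `s.card.choose 2`. -/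
theorem span_image_pow_le_elemSymmIdeal {m : ℕ} {s : Finset ι} (hs : s.card = m)
    {N : ℕ} (hN : m.choose 2 < N) : Ideal.span (x '' s) ^ N ≤ elemSymmIdeal x s N := by
  classical
  induction m generalizing s N with
  | zero =>
    rw [Finset.card_eq_zero.1 hs]
    simp [(Nat.zero_le _).trans_lt hN |>.ne']
  | succ m ih =>
    have hchoose : (m + 1).choose 2 = m + m.choose 2 := by
      rw [Nat.choose_succ_succ' m 1, Nat.choose_one_right]
    set J := Ideal.span (x '' s)
    have hstep : ∀ i ∈ s, ∀ M, m.choose 2 ≤ M →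
        J ^ (M + 1) ≤ elemSymmIdeal x s (M + 1) ⊔ Ideal.span {x i} * J ^ M := fun i hi M hM => by
      have := span_image_pow_insert_le (Finset.notMem_erase i s)
        (ih (by rw [Finset.card_erase_of_mem hi, hs, Nat.add_sub_cancel]) (Nat.lt_succ_of_le hM))
      rwa [Finset.insert_erase hi] at this
    suffices h : ∀ B ⊆ s,
        J ^ N ≤ elemSymmIdeal x s N ⊔ Ideal.span {∏ i ∈ B, x i} * J ^ (N - B.card) by
      refine (h s subset_rfl).trans (sup_le le_rfl ?_)
      rw [← elemSymm_card]
      exact le_iSup₂_of_le s.card (Finset.mem_Icc.2 ⟨by omega, le_rfl⟩) le_rfl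
    intro B
    induction B using Finset.induction with
    | empty => simp
    | insert i B hi ihB =>
      intro hB
      have hBs := (Finset.subset_insert i B).trans hB
      have hcard := Finset.card_le_card hB
      rw [Finset.card_insert_of_notMem hi] at hcard ⊢
      obtain ⟨M, rfl⟩ : ∃ M, N = B.card + (M + 1) := ⟨N - B.card - 1, by omega⟩
      rw [Nat.add_sub_cancel_left] at ihB
      refine (ihB hBs).trans (sup_le le_sup_left ((Ideal.mul_mono_right
        (hstep i (hB (Finset.mem_insert_self i B)) M (by omega))).trans ?_))
      rw [Ideal.mul_sup, ← mul_assoc, Ideal.span_singleton_mul_span_singleton,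
        mul_comm _ (x i), ← Finset.prod_insert hi,
        show B.card + (M + 1) - (B.card + 1) = M by omega]
      exact sup_le_sup_right
        (span_singleton_mul_elemSymmIdeal_le (prod_mem_span_image_pow s hBs) _) _

end SymmetricPolynomials

section MvPolynomial

variable {k Ω : Type*} [Field k]

theorem mem_span_image_X_of_X_mul_mem {A : Set Ω} {i : Ω} (hi : i ∉ A)
    (q : MvPolynomial Ω k) (hq : MvPolynomial.X i * q ∈ Ideal.span (MvPolynomial.X '' A)) :
    q ∈ Ideal.span (MvPolynomial.X '' A) := by
  classical
  rw [MvPolynomial.mem_ideal_span_X_image] at hq ⊢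
  intro v hv
  obtain ⟨j, hj, hvj⟩ := hq (Finsupp.single i 1 + v) <| by
    rwa [MvPolynomial.mem_support_iff, MvPolynomial.coeff_X_mul, ← MvPolynomial.mem_support_iff]
  refine ⟨j, hj, ?_⟩
  rwa [Finsupp.add_apply, Finsupp.single_eq_of_ne (ne_of_mem_of_not_mem hj hi), zero_add] at hvj

theorem exists_linearMap_eq_homogeneousComponent
    (r : MvPolynomial Ω k →ₗ[k] MvPolynomial Ω k) (d : ℕ) :
    ∃ r' : MvPolynomial Ω k →ₗ[k] MvPolynomial Ω k, ∀ i q, q.IsHomogeneous i →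
      r' q = if d ≤ i then MvPolynomial.homogeneousComponent (i - d) (r q) else 0 := by
  refine ⟨(MvPolynomial.basisMonomials Ω k).constr k fun v => if d ≤ v.degree then
    MvPolynomial.homogeneousComponent (v.degree - d) (r (MvPolynomial.monomial v 1)) else 0,
    fun i q hq => ?_⟩
  have hmonomial : ∀ v c, MvPolynomial.monomial v c =
      c • MvPolynomial.basisMonomials Ω k v := fun v c => by
    rw [MvPolynomial.coe_basisMonomials, MvPolynomial.smul_monomial, smul_eq_mul, mul_one]
  trans (if d ≤ i then MvPolynomial.homogeneousComponent (i - d) ∘ₗ r else 0) q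
  · rw [q.as_sum, map_sum, map_sum]
    refine Finset.sum_congr rfl fun v hv => ?_
    have hvi : v.degree = i := by_contra fun h =>
      MvPolynomial.mem_support_iff.1 hv (hq.coeff_eq_zero h)
    rw [hmonomial, map_smul, map_smul, Module.Basis.constr_basis, hvi]
    split_ifs <;> simp
  · split_ifs <;> rfl

attribute [local instance] MvPolynomial.gradedAlgebra

theorem exists_graded_leftInverse {I : Ideal (MvPolynomial Ω k)}
    (hI : I.IsHomogeneous (MvPolynomial.homogeneousSubmodule Ω k)) {z : MvPolynomial Ω k} {d : ℕ}
    (hz : z.IsHomogeneous d) (hzI : ∀ q, z * q ∈ I → q ∈ I) :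
    ∃ r : MvPolynomial Ω k →ₗ[k] MvPolynomial Ω k,
      (∀ i q, q.IsHomogeneous i → i < d → r q = 0) ∧
      (∀ i q, q.IsHomogeneous (i + d) → (r q).IsHomogeneous i) ∧
      (∀ q ∈ I, r q ∈ I) ∧ ∀ q, r (z * q) - q ∈ I := by
  set mk := (I.restrictScalars k).mkQ
  have mk_eq_zero : ∀ q, mk q = 0 ↔ q ∈ I := fun q => Submodule.Quotient.mk_eq_zero _
  obtain ⟨s, hs⟩ := mk.exists_rightInverse_of_surjective (Submodule.range_mkQ _)
  obtain ⟨v, hv⟩ := exists_comp_eq_of_ker_le_ker (mk ∘ₗ LinearMap.mulLeft k z) mk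
    fun q hq => (mk_eq_zero q).2 (hzI q ((mk_eq_zero _).1 hq))
  obtain ⟨r, hr⟩ := exists_linearMap_eq_homogeneousComponent (s ∘ₗ v ∘ₗ mk) d
  have hsum : ∀ (f : MvPolynomial Ω k →ₗ[k] MvPolynomial Ω k) (q : MvPolynomial Ω k),
      (∀ i, f (MvPolynomial.homogeneousComponent i q) ∈ I) → f q ∈ I := fun f q h => by
    rw [← MvPolynomial.sum_homogeneousComponent q, map_sum]
    exact sum_mem fun i _ => h i
  refine ⟨r, fun i q hq hi => by rw [hr i q hq, if_neg hi.not_ge], fun i q hq => ?_,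
    fun q hq => hsum r q fun i => ?_,
    fun q => hsum (r ∘ₗ LinearMap.mulLeft k z - .id) q fun i => ?_⟩
  · rw [hr _ q hq, if_pos le_add_self, Nat.add_sub_cancel]
    exact MvPolynomial.homogeneousComponent_isHomogeneous _ _
  · rw [hr i _ (MvPolynomial.homogeneousComponent_isHomogeneous i q), LinearMap.comp_apply,
      LinearMap.comp_apply, (mk_eq_zero _).2 (MvPolynomial.homogeneousComponent_mem_of_mem hI hq i)]
    simp
  · set q' := MvPolynomial.homogeneousComponent i q
    have hq' : q'.IsHomogeneous i := MvPolynomial.homogeneousComponent_isHomogeneous i q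
    have hmem : s (mk q') - q' ∈ I := by
      rw [← mk_eq_zero, map_sub, sub_eq_zero]
      exact LinearMap.congr_fun hs (mk q')
    have hv' : v (mk (z * q')) = mk q' := LinearMap.congr_fun hv q'
    have := MvPolynomial.homogeneousComponent_mem_of_mem hI hmem i
    rw [map_sub, MvPolynomial.homogeneousComponent_eq_self hq'] at this
    rwa [LinearMap.sub_apply, LinearMap.comp_apply, LinearMap.mulLeft_apply,
      hr (d + i) _ (hz.mul hq'), if_pos le_self_add, Nat.add_sub_cancel_left, LinearMap.comp_apply,
      LinearMap.comp_apply, hv']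

variable [Fintype Ω]

theorem isRegularModulo_bot_esymm : IsRegularModulo (⊥ : Ideal (MvPolynomial Ω k))
    ((List.range (Fintype.card Ω)).reverse.map fun j => MvPolynomial.esymm Ω k (j + 1)) := by
  classical
  have := isRegularModulo_elemSymmList (x := (MvPolynomial.X : Ω → MvPolynomial Ω k)) (A := ∅)
    (fun A i hi => mem_span_image_X_of_X_mul_mem hi) Finset.card_univ (Finset.disjoint_empty_left _)
  rwa [Finset.coe_empty, Set.image_empty, Ideal.span_empty] at this

theorem isHomogeneous_esymm (n : ℕ) :
    (MvPolynomial.esymm Ω k n).IsHomogeneous n := by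
  refine MvPolynomial.IsHomogeneous.sum _ _ _ fun t ht => ?_
  have := MvPolynomial.IsHomogeneous.prod t (fun i => (MvPolynomial.X i : MvPolynomial Ω k)) 1
    fun i _ => MvPolynomial.isHomogeneous_X k i
  simpa [(Finset.mem_powersetCard.1 ht).2] using this

theorem mem_of_isHomogeneous_of_choose_lt {I : Ideal (MvPolynomial Ω k)}
    (hI : ∀ j < Fintype.card Ω, MvPolynomial.esymm Ω k (j + 1) ∈ I)
    {q : MvPolynomial Ω k} {n : ℕ} (hq : q.IsHomogeneous n) (hn : (Fintype.card Ω).choose 2 < n) :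
    q ∈ I := by
  classical
  have hqn : q ∈ MvPolynomial.idealOfVars Ω k ^ n :=
    (MvPolynomial.mem_pow_idealOfVars_iff' n q).2 fun v hv => hq.coeff_eq_zero hv.ne
  rw [MvPolynomial.idealOfVars, ← Set.image_univ, ← Finset.coe_univ] at hqn
  refine (iSup₂_le fun j hj => ?_ : elemSymmIdeal MvPolynomial.X Finset.univ n ≤ I)
    (span_image_pow_le_elemSymmIdeal Finset.card_univ hn hqn)
  obtain ⟨hj₁, hj₂⟩ := Finset.mem_Icc.1 hj
  obtain ⟨j, rfl⟩ := Nat.exists_eq_add_of_le' hj₁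
  exact Ideal.mul_le_left.trans ((Ideal.span_singleton_le_iff_mem _).2 (hI j hj₂))

end MvPolynomial

section Higman

variable {k G : Type*} [Field k] [Group G] [Fintype G]
  {X Y N : Type*} [AddCommGroup X] [Module k X] [Module (MonoidAlgebra k G) X]
  [IsScalarTower k (MonoidAlgebra k G) X] [AddCommGroup Y] [Module k Y]
  [Module (MonoidAlgebra k G) Y] [IsScalarTower k (MonoidAlgebra k G) Y] [AddCommGroup N]
  [Module k N] [Module (MonoidAlgebra k G) N] [IsScalarTower k (MonoidAlgebra k G) N]

variable (G) in
/-- A Higman operator: a linear endomorphism whose conjugates under `G` sum to the identity. Its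
existence on a module is Higman's criterion for relative projectivity. -/
def IsHigman (φ : Y →ₗ[k] Y) : Prop := φ.sumOfConjugates G = .id

theorem sumOfConjugates_comp (u : Y →ₗ[k] N) (a : X →ₗ[MonoidAlgebra k G] Y) :
    u.sumOfConjugates G ∘ₗ a.restrictScalars k =
      (u ∘ₗ a.restrictScalars k).sumOfConjugates G := by
  ext x
  simp only [LinearMap.comp_apply, LinearMap.sumOfConjugates_apply, LinearMap.conjugate_apply,
    LinearMap.restrictScalars_apply, map_smul]

theorem comp_sumOfConjugates (a : Y →ₗ[MonoidAlgebra k G] N) (u : X →ₗ[k] Y) :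
    a.restrictScalars k ∘ₗ u.sumOfConjugates G =
      (a.restrictScalars k ∘ₗ u).sumOfConjugates G := by
  ext x
  simp only [LinearMap.comp_apply, LinearMap.sumOfConjugates_apply, LinearMap.conjugate_apply,
    LinearMap.restrictScalars_apply, map_smul, map_sum]

theorem IsHigman.exists_comp_eq {φX : X →ₗ[k] X} (hφ : IsHigman G φX) {φY : Y →ₗ[k] Y}
    (a : X →ₗ[MonoidAlgebra k G] Y) (ha : φY ∘ₗ a.restrictScalars k = a.restrictScalars k ∘ₗ φX)
    (h : X →ₗ[MonoidAlgebra k G] N) (hk : LinearMap.ker a ≤ LinearMap.ker h) :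
    ∃ v : Y →ₗ[MonoidAlgebra k G] N, v ∘ₗ a = h := by
  obtain ⟨v, hv⟩ := exists_comp_eq_of_ker_le_ker (a.restrictScalars k) (h.restrictScalars k) hk
  refine ⟨(v ∘ₗ φY).sumOfConjugatesEquivariant G, LinearMap.restrictScalars_injective k ?_⟩
  calc (v ∘ₗ φY).sumOfConjugates G ∘ₗ a.restrictScalars k
      = (v ∘ₗ φY ∘ₗ a.restrictScalars k).sumOfConjugates G := sumOfConjugates_comp _ a
    _ = (h.restrictScalars k ∘ₗ φX).sumOfConjugates G := by rw [ha, ← LinearMap.comp_assoc, hv]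
    _ = h.restrictScalars k := by rw [← comp_sumOfConjugates, hφ, LinearMap.comp_id]

theorem IsHigman.projective {φ : Y →ₗ[k] Y} (hφ : IsHigman G φ) :
    Module.Projective (MonoidAlgebra k G) Y := by
  set c := Finsupp.linearCombination (MonoidAlgebra k G) (id : Y → Y)
  obtain ⟨s, hs⟩ := (c.restrictScalars k).exists_rightInverse_of_surjective
    (LinearMap.range_eq_top.2 (Finsupp.linearCombination_id_surjective (MonoidAlgebra k G) Y))
  refine Module.projective_def'.2 ⟨(s ∘ₗ φ).sumOfConjugatesEquivariant G,
    LinearMap.restrictScalars_injective k ?_⟩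
  calc c.restrictScalars k ∘ₗ (s ∘ₗ φ).sumOfConjugates G
      = ((c.restrictScalars k ∘ₗ s) ∘ₗ φ).sumOfConjugates G := comp_sumOfConjugates c _
    _ = .id := by rw [hs, LinearMap.id_comp, hφ]

end Higman

section ChainOperators

variable {k G Y N : Type*} [Field k] [Group G] [AddCommGroup Y] [Module k Y]
  [Module (MonoidAlgebra k G) Y] [AddCommGroup N] [Module (MonoidAlgebra k G) N]

/-- `z` lowers degrees by `d`, and it commutes with the differential and the Higman operator. -/
structure IsChainOperator (φ : Y →ₗ[k] Y) (D : Module.End (MonoidAlgebra k G) Y)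
    (W : ℤ → Submodule (MonoidAlgebra k G) Y) (d : ℕ) (z : Module.End (MonoidAlgebra k G) Y) :
    Prop where
  mem : ∀ n, ∀ y ∈ W (n + d), z y ∈ W n
  commute_d : Commute z D
  comm_higman : ∀ y, z (φ y) = φ (z y)

variable {φ : Y →ₗ[k] Y} {D z w : Module.End (MonoidAlgebra k G) Y}
  {W : ℤ → Submodule (MonoidAlgebra k G) Y} {d e : ℕ}

theorem IsChainOperator.inf_ker (hw : IsChainOperator φ D W e w) (hwz : Commute z w) :
    IsChainOperator φ D (fun n => W n ⊓ LinearMap.ker z) e w where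
  mem n y hy := ⟨hw.mem n y hy.1, show z (w y) = 0 by
    rw [← Module.End.mul_apply, hwz.eq, Module.End.mul_apply, hy.2, map_zero]⟩
  commute_d := hw.commute_d
  comm_higman := hw.comm_higman

theorem IsChainOperator.pow (hz : IsChainOperator φ D W d z) (a : ℕ) :
    IsChainOperator φ D W (a * d) (z ^ a) where
  mem n y hy := by
    induction a generalizing y with
    | zero => simpa using hy
    | succ a ih =>
      rw [pow_succ, Module.End.mul_apply]
      refine ih _ (hz.mem _ y ?_)
      convert hy using 2
      push_cast
      ring
  commute_d := hz.commute_d.pow_left a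
  comm_higman y := by
    induction a with
    | zero => rfl
    | succ a ih => rw [pow_succ', Module.End.mul_apply, ih, hz.comm_higman, Module.End.mul_apply]

variable (D W) in
/-- `f` restricts to a cocycle of degree `n` in the complex of maps from `(W, D)` to `N`. -/
def IsCocycle (n : ℤ) (f : Y →ₗ[MonoidAlgebra k G] N) : Prop := ∀ y ∈ W (n + 1), f (D y) = 0

variable (D W) in
/-- `f` restricts to a coboundary of degree `n` in the complex of maps from `(W, D)` to `N`. -/
def IsCoboundary (n : ℤ) (f : Y →ₗ[MonoidAlgebra k G] N) : Prop :=
  ∃ g : Y →ₗ[MonoidAlgebra k G] N, ∀ y ∈ W n, f y = g (D y)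

theorem IsCocycle.comp (hz : IsChainOperator φ D W d z) {n : ℤ} {f : Y →ₗ[MonoidAlgebra k G] N}
    (hf : IsCocycle D W n f) : IsCocycle D W (n + d) (f ∘ₗ z) := fun y hy => by
  rw [LinearMap.comp_apply, ← Module.End.mul_apply, hz.commute_d.eq]
  exact hf _ (hz.mem _ y (by rwa [add_right_comm]))

variable (N D W) in
/-- `w` acts locally nilpotently on the cohomology of the complex of maps from `(W, D)` to `N`. -/
def IsCohomologicallyNilpotent (e : ℕ) (w : Module.End (MonoidAlgebra k G) Y) : Prop :=
  ∀ n, ∀ f : Y →ₗ[MonoidAlgebra k G] N, IsCocycle D W n f →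
    ∃ a : ℕ, IsCoboundary D W (n + (a * e : ℕ)) (f ∘ₗ w ^ a)

end ChainOperators

section Complexes

variable {k G Y N : Type*} [Field k] [Group G] [Fintype G] [AddCommGroup Y] [Module k Y]
  [Module (MonoidAlgebra k G) Y] [IsScalarTower k (MonoidAlgebra k G) Y] [AddCommGroup N]
  [Module k N] [Module (MonoidAlgebra k G) N] [IsScalarTower k (MonoidAlgebra k G) N]

theorem IsHigman.exists_restrict {φ : Y →ₗ[k] Y} (hφ : IsHigman G φ)
    (P : Submodule (MonoidAlgebra k G) Y) (hP : ∀ y ∈ P, φ y ∈ P) :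
    ∃ φP : P →ₗ[k] P, IsHigman G φP ∧
      φ ∘ₗ P.subtype.restrictScalars k = P.subtype.restrictScalars k ∘ₗ φP := by
  set ι := P.subtype.restrictScalars k
  let φP : P →ₗ[k] P := LinearMap.codRestrict (P.restrictScalars k) (φ ∘ₗ ι) fun y => hP y y.2
  have hι : φ ∘ₗ ι = ι ∘ₗ φP := rfl
  refine ⟨φP, LinearMap.ext fun y =>
    P.subtype_injective (LinearMap.congr_fun (?_ : ι ∘ₗ _ = ι ∘ₗ .id) y), hι⟩
  calc ι ∘ₗ φP.sumOfConjugates G = (ι ∘ₗ φP).sumOfConjugates G := comp_sumOfConjugates P.subtype φP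
    _ = φ.sumOfConjugates G ∘ₗ ι := by rw [← hι, sumOfConjugates_comp]
    _ = ι ∘ₗ .id := by rw [hφ]; rfl

theorem IsHigman.exists_comp_eqOn {φ : Y →ₗ[k] Y} (hφ : IsHigman G φ)
    {P : Submodule (MonoidAlgebra k G) Y} (hP : ∀ y ∈ P, φ y ∈ P)
    {z : Module.End (MonoidAlgebra k G) Y} (hz : ∀ y, z (φ y) = φ (z y))
    {h : Y →ₗ[MonoidAlgebra k G] N} (hk : ∀ y ∈ P, z y = 0 → h y = 0) :
    ∃ v : Y →ₗ[MonoidAlgebra k G] N, ∀ y ∈ P, v (z y) = h y := by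
  obtain ⟨φP, hφP, hι⟩ := hφ.exists_restrict P hP
  obtain ⟨v, hv⟩ := hφP.exists_comp_eq (φY := φ) (z ∘ₗ P.subtype) (LinearMap.ext fun y =>
      (hz y).symm.trans (congrArg z (LinearMap.congr_fun hι y)))
    (h ∘ₗ P.subtype) fun y hy => hk y y.2 hy
  exact ⟨v, fun y hy => LinearMap.congr_fun hv ⟨y, hy⟩⟩

/-- The submodules `W n` form a chain complex with differential `D`, and the Higman operator `φ`
preserves them; in particular every `W n` is projective. -/
structure IsHigmanComplex (φ : Y →ₗ[k] Y) (D : Module.End (MonoidAlgebra k G) Y)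
    (W : ℤ → Submodule (MonoidAlgebra k G) Y) : Prop where
  isHigman : IsHigman G φ
  higman_mem : ∀ n, ∀ y ∈ W n, φ y ∈ W n
  d_d : ∀ y, D (D y) = 0
  d_mem : ∀ n, ∀ y ∈ W (n + 1), D y ∈ W n

variable {φ : Y →ₗ[k] Y} {D z w : Module.End (MonoidAlgebra k G) Y}
  {W : ℤ → Submodule (MonoidAlgebra k G) Y} {d e : ℕ}

theorem IsHigmanComplex.inf_ker (h : IsHigmanComplex φ D W) (hz : IsChainOperator φ D W d z) :
    IsHigmanComplex φ D fun n => W n ⊓ LinearMap.ker z where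
  isHigman := h.isHigman
  higman_mem n y hy := ⟨h.higman_mem n y hy.1, show z (φ y) = 0 by
    rw [hz.comm_higman, hy.2, map_zero]⟩
  d_d := h.d_d
  d_mem n y hy := ⟨h.d_mem n y hy.1, show z (D y) = 0 by
    rw [← Module.End.mul_apply, hz.commute_d.eq, Module.End.mul_apply, hy.2, map_zero]⟩

variable (h : IsHigmanComplex φ D W) (hz : IsChainOperator φ D W d z)
  (hsurj : ∀ n, ∀ y ∈ W n, ∃ x ∈ W (n + d), z x = y)

include h hz hsurj

/-- If `f z = g D` on `W`, then `g` is a cocycle on `ker z`, so `g = u D + v z` and `f = v D`. -/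
theorem IsCoboundary.of_comp {n : ℤ}
    (hker : ∀ g : Y →ₗ[MonoidAlgebra k G] N,
      IsCocycle D (fun n => W n ⊓ LinearMap.ker z) (n + d - 1) g →
      IsCoboundary D (fun n => W n ⊓ LinearMap.ker z) (n + d - 1) g)
    {f : Y →ₗ[MonoidAlgebra k G] N} (hf : IsCoboundary D W (n + d) (f ∘ₗ z)) :
    IsCoboundary D W n f := by
  obtain ⟨g, hg⟩ := hf
  obtain ⟨u, hu⟩ := hker g fun y hy => by
    rw [← hg y (by simpa using hy.1), LinearMap.comp_apply, hy.2, map_zero]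
  obtain ⟨v, hv⟩ := h.isHigman.exists_comp_eqOn (h := g - u ∘ₗ D) (h.higman_mem (n + d - 1))
    hz.comm_higman fun y hy hzy => sub_eq_zero.2 (hu y ⟨hy, hzy⟩)
  refine ⟨v, fun y hy => ?_⟩
  obtain ⟨x, hx, rfl⟩ := hsurj n y hy
  calc f (z x) = g (D x) - u (D (D x)) := by rw [h.d_d, map_zero, sub_zero]; exact hg x hx
    _ = v (z (D x)) := (hv (D x) (h.d_mem _ x (by simpa using hx))).symm
    _ = v (D (z x)) := congrArg v (LinearMap.congr_fun hz.commute_d x)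

/-- A cocycle `f` on `ker z` satisfies `f D = g z` on `W` for a cocycle `g`, and then
`g wᵃ = u D` makes `f wᵃ - u z` a cocycle on `W`. -/
theorem IsCohomologicallyNilpotent.inf_ker (hw : IsChainOperator φ D W e w) (hzw : Commute z w)
    (hnil : IsCohomologicallyNilpotent N D W e w) :
    IsCohomologicallyNilpotent N D (fun n => W n ⊓ LinearMap.ker z) e w := fun n f hf => by
  obtain ⟨g, hg⟩ := h.isHigman.exists_comp_eqOn (h := f ∘ₗ D) (h.higman_mem (n + 1))
    hz.comm_higman fun y hy hzy => hf y ⟨hy, hzy⟩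
  have hgcocycle : IsCocycle D W (n + 1 - d) g := fun y hy => by
    obtain ⟨x, hx, rfl⟩ := hsurj _ y hy
    rw [show n + 1 - d + 1 + d = n + 1 + 1 by ring] at hx
    rw [← Module.End.mul_apply, ← hz.commute_d.eq, Module.End.mul_apply, hg _ (h.d_mem _ x hx),
      LinearMap.comp_apply, h.d_d, map_zero]
  obtain ⟨a, u, hu⟩ := hnil _ g hgcocycle
  have hcocycle : IsCocycle D W (n + (a * e : ℕ)) (f ∘ₗ w ^ a - u ∘ₗ z) := fun y hy => by
    refine sub_eq_zero.2 ?_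
    have hwy : (w ^ a) y ∈ W (n + 1) := (hw.pow a).mem _ y (by rwa [add_right_comm])
    have hzy : z y ∈ W (n + 1 - d + (a * e : ℕ)) := hz.mem _ y (by convert hy using 2; ring)
    calc f ((w ^ a) (D y)) = f (D ((w ^ a) y)) :=
          congrArg f (LinearMap.congr_fun (hw.pow a).commute_d y)
      _ = g (z ((w ^ a) y)) := (hg _ hwy).symm
      _ = g ((w ^ a) (z y)) := congrArg g (LinearMap.congr_fun (hzw.pow_right a) y)
      _ = u (D (z y)) := hu _ hzy
      _ = u (z (D y)) := congrArg u (LinearMap.congr_fun hz.commute_d y).symm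
  obtain ⟨b, v, hv⟩ := hnil _ _ hcocycle
  refine ⟨a + b, v, fun y hy => ?_⟩
  rw [add_mul, Nat.cast_add, ← add_assoc] at hy
  have hzy : z ((w ^ b) y) = 0 := by
    rw [← Module.End.mul_apply, (hzw.pow_right b).eq, Module.End.mul_apply, hy.2, map_zero]
  rw [← hv y hy.1, LinearMap.comp_apply, LinearMap.comp_apply, LinearMap.sub_apply,
    LinearMap.comp_apply u, hzy, map_zero, sub_zero, pow_add]
  rfl

end Complexes

section Coregular

variable {k G Y N : Type*} [Field k] [Group G] [Fintype G] [AddCommGroup Y] [Module k Y]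
  [Module (MonoidAlgebra k G) Y] [IsScalarTower k (MonoidAlgebra k G) Y] [AddCommGroup N]
  [Module k N] [Module (MonoidAlgebra k G) N] [IsScalarTower k (MonoidAlgebra k G) N]
  {φ : Y →ₗ[k] Y} {D : Module.End (MonoidAlgebra k G) Y}

/-- Each operator of the list, paired with the degree by which it lowers degrees, is surjective on
the common kernel of the preceding ones in the graded module `W`. -/
def IsCoregular (W : ℤ → Submodule (MonoidAlgebra k G) Y) :
    List (ℕ × Module.End (MonoidAlgebra k G) Y) → Prop
  | [] => True
  | (d, z) :: zs => (∀ n, ∀ y ∈ W n, ∃ x ∈ W (n + d), z x = y) ∧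
      IsCoregular (fun n => W n ⊓ LinearMap.ker z) zs

/-- Each operator of degree `d` shifts the degree in which the vanishing of the common kernel takes
effect by `d - 1`. -/
theorem isCoboundary_of_isCohomologicallyNilpotent
    {zs : List (ℕ × Module.End (MonoidAlgebra k G) Y)}
    (hzs : zs.Pairwise fun z w => Commute z.2 w.2) {W : ℤ → Submodule (MonoidAlgebra k G) Y}
    (h : IsHigmanComplex φ D W) (hz : ∀ z ∈ zs, IsChainOperator φ D W z.1 z.2)
    (hW : IsCoregular W zs) (hnil : ∀ z ∈ zs, IsCohomologicallyNilpotent N D W z.1 z.2)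
    {c : ℤ} (hc : ∀ n > c, ∀ y ∈ W n, (∀ z ∈ zs, z.2 y = 0) → y = 0)
    {n : ℤ} (hn : c < n + (zs.map fun z => (z.1 - 1 : ℤ)).sum)
    {f : Y →ₗ[MonoidAlgebra k G] N} (hf : IsCocycle D W n f) : IsCoboundary D W n f := by
  induction zs generalizing W n f with
  | nil =>
    refine ⟨0, fun y hy => ?_⟩
    rw [hc n (by simpa using hn) y hy (by simp), map_zero, LinearMap.zero_apply]
  | cons z zs ih =>
    obtain ⟨d, z⟩ := z
    rw [List.pairwise_cons] at hzs
    rw [List.forall_mem_cons] at hz hnil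
    obtain ⟨hsurj, hW⟩ := hW
    rw [List.map_cons, List.sum_cons] at hn
    have hker {m : ℤ} (hm : n ≤ m) {g : Y →ₗ[MonoidAlgebra k G] N} :
        IsCocycle D (fun n => W n ⊓ LinearMap.ker z) (m + d - 1) g →
        IsCoboundary D (fun n => W n ⊓ LinearMap.ker z) (m + d - 1) g :=
      ih hzs.2 (h.inf_ker hz.1) (fun w hw => (hz.2 w hw).inf_ker (hzs.1 w hw)) hW
        (fun w hw => (hnil.2 w hw).inf_ker h hz.1 hsurj (hz.2 w hw) (hzs.1 w hw))
        (fun m hm y hy hzy => hc m hm y hy.1 (List.forall_mem_cons.2 ⟨hy.2, hzy⟩))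
        (by dsimp only at hn; linarith)
    obtain ⟨a, ha⟩ := hnil.1 n f hf
    induction a with
    | zero =>
      rwa [zero_mul, Nat.cast_zero, add_zero, pow_zero, Module.End.one_eq_id,
        LinearMap.comp_id] at ha
    | succ a iha =>
      refine iha (.of_comp h hz.1 hsurj (fun g => hker (by simp [mul_nonneg])) ?_)
      rw [LinearMap.comp_assoc, ← Module.End.mul_eq_comp, ← pow_succ]
      convert ha using 1
      push_cast
      ring

end Coregular

section MonomialActions

universe u

variable {G : Type u} [Group G] {p : ℕ}

variable (G) in
/-- `G` acts on the functions `Ω → ZMod p` through monomial matrices, written additively: every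
`g` permutes the coordinates and translates. -/
def IsMonomialAction (Ω : Type*) (p : ℕ) [MulAction G Ω] [MulAction G (Ω → ZMod p)] : Prop :=
  ∀ g : G, ∃ β : Ω → ZMod p, ∀ (s : Ω → ZMod p) ω, (g • s) (g • ω) = s ω + β ω

/-- The monomial action whose translation parts are given by a cocycle `β`. -/
@[reducible] def mulActionOfCocycle {Ω : Type*} [MulAction G Ω] (β : G → Ω → ZMod p)
    (hβ : ∀ g h ω, β (g * h) ω = β g (h • ω) + β h ω) : MulAction G (Ω → ZMod p) where
  smul g s ω := s (g⁻¹ • ω) + β g (g⁻¹ • ω)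
  one_smul s := funext fun ω => by
    have : β 1 ω = 0 := by simpa using hβ 1 1 ω
    change s _ + β _ _ = s ω
    rw [inv_one, one_smul, this, add_zero]
  mul_smul g h s := funext fun ω => by
    change s _ + β _ _ = s _ + β _ _ + β _ _
    rw [hβ, mul_inv_rev, mul_smul, smul_inv_smul]
    ring

/-- The translation parts of the monomial action induced from a character of a subgroup. -/
noncomputable def inducedCocycle {H : Subgroup G} (χ : H →* Multiplicative (ZMod p)) (g : G)
    (ω : G ⧸ H) : ZMod p :=
  (χ ⟨(g • ω).out⁻¹ * (g * ω.out), QuotientGroup.eq.1 <| by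
    rw [QuotientGroup.out_eq', ← smul_eq_mul, ← MulAction.Quotient.smul_mk,
      QuotientGroup.out_eq']⟩).toAdd

theorem inducedCocycle_mul {H : Subgroup G} (χ : H →* Multiplicative (ZMod p)) (g h : G)
    (ω : G ⧸ H) :
    inducedCocycle χ (g * h) ω = inducedCocycle χ g (h • ω) + inducedCocycle χ h ω := by
  simp only [inducedCocycle]
  rw [← toAdd_mul, ← map_mul]
  congr 2
  ext
  simp [mul_smul, mul_assoc]

theorem inducedCocycle_one {H : Subgroup G} (χ : H →* Multiplicative (ZMod p)) (h : H) :
    inducedCocycle χ (h : G) ((1 : G) : G ⧸ H) = (χ h).toAdd := by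
  have hsmul : (h : G) • ((1 : G) : G ⧸ H) = (1 : G) := by
    rw [MulAction.Quotient.smul_coe, QuotientGroup.eq]
    simp
  obtain ⟨u, hu⟩ := QuotientGroup.mk_out_eq_mul H 1
  have hconj : ∀ x : H, (x : G) = (u : G)⁻¹ * (h * u) → χ x = χ h := fun x hx => by
    rw [show x = u⁻¹ * (h * u) from Subtype.ext hx, map_mul, map_mul, map_inv,
      mul_comm (χ h), inv_mul_cancel_left]
  refine congrArg Multiplicative.toAdd (hconj _ ?_)
  simp only [hsmul, hu, one_mul]

theorem exists_isMonomialAction (G : Type u) [Group G] [Finite G] (hp : p.Prime) :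
    ∃ (Ω : Type u) (_ : Finite Ω) (_ : MulAction G Ω) (_ : MulAction G (Ω → ZMod p)),
      IsMonomialAction G Ω p ∧ ∀ (s : Ω → ZMod p) (g : G), orderOf g = p → g • s ≠ s := by
  have := Fact.mk hp
  have hχ (c : {c : G // orderOf c = p}) :
      ∃ χ : Subgroup.zpowers c.1 →* Multiplicative (ZMod p), Function.Injective χ :=
    ⟨(mulEquivOfPrimeCardEq (G' := Multiplicative (ZMod p)) (p := p) (by rw [Nat.card_zpowers, c.2])
      (Nat.card_zmod p)).toMonoidHom, MulEquiv.injective _⟩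
  choose χ hχ using hχ
  let Ω := Σ c : {c : G // orderOf c = p}, G ⧸ Subgroup.zpowers c.1
  let β (g : G) (ω : Ω) : ZMod p := inducedCocycle (χ ω.1) g ω.2
  let _ := mulActionOfCocycle β fun g h ω => inducedCocycle_mul (χ ω.1) g h ω.2
  have hβ (g : G) (s : Ω → ZMod p) (ω : Ω) : (g • s) (g • ω) = s ω + β g ω := by
    change s (g⁻¹ • g • ω) + β g (g⁻¹ • g • ω) = _
    rw [inv_smul_smul]
  refine ⟨Ω, inferInstance, inferInstance, _, fun g => ⟨β g, hβ g⟩, fun s c hc hs => ?_⟩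
  let ω : Ω := ⟨⟨c, hc⟩, (1 : G)⟩
  have hω : c • ω = ω := Sigma.ext rfl <| heq_of_eq <| (MulAction.Quotient.smul_coe _ c 1).trans <|
    QuotientGroup.eq.2 (by simp)
  have hχc : (χ ⟨c, hc⟩ ⟨c, Subgroup.mem_zpowers c⟩).toAdd = 0 := by
    rw [← inducedCocycle_one]
    simpa only [hs, hω, left_eq_add] using hβ c s ω
  have hc₁ : c = 1 := congrArg Subtype.val ((map_eq_one_iff _ (hχ _)).1 hχc)
  rw [hc₁, orderOf_one] at hc
  exact hp.one_lt.ne hc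

theorem not_dvd_card_stabilizer {X : Type*} [MulAction G X] [Finite G] (hp : p.Prime)
    (hX : ∀ (x : X) (g : G), orderOf g = p → g • x ≠ x) (x : X) :
    ¬ p ∣ Nat.card (MulAction.stabilizer G x) := fun h => by
  have := Fact.mk hp
  obtain ⟨g, hg⟩ := exists_prime_orderOf_dvd_card' p h
  exact hX x g (by rwa [Subgroup.orderOf_coe]) g.2

theorem exists_sum_smul_eq_one {k X : Type*} [Field k] [Fintype G] [MulAction G X]
    (hX : ∀ x : X, (Nat.card (MulAction.stabilizer G x) : k) ≠ 0) :
    ∃ w : X → k, ∀ x, ∑ g : G, w (g • x) = 1 := by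
  classical
  let rep : X → X := fun x => (Quotient.mk (MulAction.orbitRel G X) x).out
  have rep_mem : ∀ x, ∃ g : G, g • rep x = x := fun x =>
    MulAction.orbitRel_apply.1 ((MulAction.orbitRel G X).symm
      (Quotient.mk_out (s := MulAction.orbitRel G X) x))
  have rep_smul : ∀ (g : G) x, rep (g • x) = rep x := fun g x =>
    congrArg Quotient.out (Quotient.sound (s := MulAction.orbitRel G X) ⟨g, rfl⟩)
  refine ⟨fun x => if x = rep x then (Nat.card (MulAction.stabilizer G x) : k)⁻¹ else 0,
    fun x => ?_⟩
  obtain ⟨h, hx⟩ := rep_mem x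
  set y := rep x
  calc _ = ∑ g : G, if g • y = y then (Nat.card (MulAction.stabilizer G y) : k)⁻¹ else 0 := by
        refine Fintype.sum_equiv (Equiv.mulRight h) _ _ fun g => ?_
        dsimp only [Equiv.coe_mulRight]
        rw [rep_smul, show g • x = (g * h) • y by rw [mul_smul, hx]]
        exact ite_congr rfl (fun hg => by rw [hg]) fun _ => rfl
    _ = 1 := by
        rw [← Finset.sum_filter, Finset.sum_const, nsmul_eq_mul]
        convert mul_inv_cancel₀ (hX y)
        exact (Nat.card_eq_fintype_card.trans (Fintype.card_subtype _)).symm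

end MonomialActions

section Matrices

variable (k : Type*) [CommRing k] (p : ℕ) [NeZero p]

variable {p} in
theorem eq_neg_one_iff_val (a : ZMod p) : a = -1 ↔ a.val + 1 = p := by
  obtain ⟨n, rfl⟩ := Nat.exists_eq_succ_of_ne_zero (NeZero.ne p)
  rw [← (ZMod.val_injective _).eq_iff, ZMod.val_neg_one, Nat.succ_inj]

variable {p} in
theorem val_add_one_eq_ite (a : ZMod p) : (a + 1).val = if a = -1 then 0 else a.val + 1 := by
  split_ifs with h
  · rw [h, neg_add_cancel, ZMod.val_zero]
  · rw [eq_neg_one_iff_val] at h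
    rw [ZMod.val_add, ZMod.val_one_eq_one_mod, Nat.add_mod_mod,
      Nat.mod_eq_of_lt (by have := a.val_lt; omega)]

/-- The permutation matrix of the generator of `ZMod p`, minus the identity. -/
def shiftSubOne : Matrix (ZMod p) (ZMod p) k := .of (fun a c => if c = a + 1 then 1 else 0) - 1

/-- The norm element of the group ring of `ZMod p`. -/
def normMatrix : Matrix (ZMod p) (ZMod p) k := .of fun _ _ => 1

/-- With `supportMatrix`, a contracting homotopy of the periodic complex given by `shiftSubOne` and
`normMatrix`. -/
def partialSumMatrix : Matrix (ZMod p) (ZMod p) k := .of fun a c => if c.val < a.val then 1 else 0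

/-- With `partialSumMatrix`, a contracting homotopy of the periodic complex given by `shiftSubOne`
and `normMatrix`. -/
def supportMatrix : Matrix (ZMod p) (ZMod p) k := .single (-1) 0 1

theorem shiftSubOne_mul_normMatrix : shiftSubOne k p * normMatrix k p = 0 := by
  ext a c
  simp [shiftSubOne, normMatrix, Matrix.mul_apply, Matrix.one_apply]

theorem normMatrix_mul_shiftSubOne : normMatrix k p * shiftSubOne k p = 0 := by
  ext a c
  simp [shiftSubOne, normMatrix, Matrix.mul_apply, Matrix.one_apply, ← sub_eq_iff_eq_add]

theorem shiftSubOne_mul_partialSumMatrix :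
    shiftSubOne k p * partialSumMatrix k p = 1 - supportMatrix k p * normMatrix k p := by
  ext a c
  calc _ = ((if c.val < (a + 1).val then 1 else 0) - if c.val < a.val then 1 else 0 : k) := by
        rw [shiftSubOne, sub_mul, one_mul, Matrix.sub_apply]
        simp [-mul_ite, partialSumMatrix, Matrix.mul_apply]
    _ = (if a = c then 1 else 0) - if a = -1 then 1 else 0 := by
        have hac := (ZMod.val_injective p).eq_iff (a := a) (b := c)
        have ha := eq_neg_one_iff_val a
        have := c.val_lt
        rw [val_add_one_eq_ite]
        grind
    _ = _ := by simp [supportMatrix, normMatrix, Matrix.mul_apply, Matrix.one_apply,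
      Matrix.single_apply, ite_and, eq_comm]

theorem partialSumMatrix_mul_shiftSubOne :
    partialSumMatrix k p * shiftSubOne k p = 1 - normMatrix k p * supportMatrix k p := by
  ext a c
  obtain ⟨b, rfl⟩ : ∃ b, c = b + 1 := ⟨c - 1, by simp⟩
  calc _ = ((if b.val < a.val then 1 else 0) - if (b + 1).val < a.val then 1 else 0 : k) := by
        rw [shiftSubOne, mul_sub, mul_one, Matrix.sub_apply]
        simp [partialSumMatrix, Matrix.mul_apply]
    _ = (if a = b + 1 then 1 else 0) - if b + 1 = 0 then 1 else 0 := by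
        have hab := (ZMod.val_injective p).eq_iff (a := a) (b := b + 1)
        have hb := eq_neg_one_iff_val b
        have := a.val_lt
        rw [val_add_one_eq_ite] at hab ⊢
        simp only [← eq_neg_iff_add_eq_zero]
        grind
    _ = _ := by simp [supportMatrix, normMatrix, Matrix.mul_apply, Matrix.one_apply,
      Matrix.single_apply, ite_and, eq_comm]

end Matrices

section TensorOperators

open scoped TensorProduct

variable {k U V P : Type*} [CommRing k] [AddCommGroup U] [AddCommGroup V] [AddCommGroup P]
  [Module k U] [Module k V] [Module k P]

/-- The endomorphism of a space of bilinear maps that precomposes the two arguments with `a` and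
`b` and postcomposes the value with `c`. -/
def tensorOperator (a : Module.End k U) (b : Module.End k V) (c : Module.End k P) :
    Module.End k (U ⊗[k] V →ₗ[k] P) where
  toFun f := c ∘ₗ f ∘ₗ TensorProduct.map a b
  map_add' _ _ := by ext; simp
  map_smul' _ _ := by ext; simp

variable (a a' : Module.End k U) (b b' : Module.End k V) (c c' : Module.End k P)

@[simp]
theorem tensorOperator_apply (f : U ⊗[k] V →ₗ[k] P) (u : U) (v : V) :
    tensorOperator a b c f (u ⊗ₜ v) = c (f (a u ⊗ₜ b v)) := rfl

theorem tensorOperator_mul : tensorOperator a b c * tensorOperator a' b' c' =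
    tensorOperator (a' * a) (b' * b) (c * c') := by
  ext
  rfl

theorem tensorOperator_neg : tensorOperator a (-b) c = -tensorOperator a b c := by
  ext
  simp [TensorProduct.tmul_neg]

theorem tensorOperator_zero_middle : tensorOperator a (0 : Module.End k V) c = 0 := by
  ext
  simp

theorem tensorOperator_zero_right : tensorOperator a b (0 : Module.End k P) = 0 := rfl

variable {a a' b b' c c'}

theorem tensorOperator_mul_eq_neg (ha : Commute a a') (hb : b * b' = -(b' * b))
    (hc : Commute c c') : tensorOperator a b c * tensorOperator a' b' c' =
      -(tensorOperator a' b' c' * tensorOperator a b c) := by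
  rw [tensorOperator_mul, tensorOperator_mul, ha.eq, hb, hc.eq, tensorOperator_neg, neg_neg]

theorem commute_tensorOperator (ha : Commute a a') (hb : Commute b b') (hc : Commute c c') :
    Commute (tensorOperator a b c) (tensorOperator a' b' c') := by
  rw [commute_iff_eq, tensorOperator_mul, tensorOperator_mul, ha.eq, hb.eq, hc.eq]

end TensorOperators

section Operators

variable {k : Type*} [CommRing k]

section

variable {Ω M : Type*} [DecidableEq Ω] [AddCommGroup M] [Module k M] {C : Type*} [Fintype C]
  [DecidableEq C]

/-- A matrix acting on the coordinate `ω` of functions of the state `s : Ω → C`. -/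
def coordinateOperator (ω : Ω) : Matrix C C k →ₐ[k] Module.End k ((Ω → C) → M) :=
  AlgHom.ofLinearMap
    { toFun A :=
        { toFun f s := ∑ c, A (s ω) c • f (Function.update s ω c)
          map_add' _ _ := by ext; simp [Finset.sum_add_distrib]
          map_smul' r _ := by ext; simp [Finset.smul_sum, smul_comm r] }
      map_add' _ _ := by ext; simp [add_smul, Finset.sum_add_distrib]
      map_smul' _ _ := by ext; simp [mul_smul, Finset.smul_sum] }
    (by ext; simp [Matrix.one_apply])
    (fun A B => by
      ext f s
      simp only [LinearMap.coe_mk, AddHom.coe_mk, Matrix.mul_apply, Finset.sum_smul,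
        Module.End.mul_apply, Finset.smul_sum, Function.update_self, Function.update_idem, mul_smul]
      exact Finset.sum_comm)

theorem coordinateOperator_apply (ω : Ω) (A : Matrix C C k) (f : (Ω → C) → M) (s : Ω → C) :
    coordinateOperator ω A f s = ∑ c, A (s ω) c • f (Function.update s ω c) := rfl

theorem commute_coordinateOperator {ω ω' : Ω} (h : ω ≠ ω') (A B : Matrix C C k) :
    Commute (coordinateOperator (M := M) ω A) (coordinateOperator ω' B) := by
  ext f s
  simp only [Module.End.mul_apply, coordinateOperator_apply, Finset.smul_sum,
    Function.update_of_ne h, Function.update_of_ne h.symm]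
  rw [Finset.sum_comm]
  refine Finset.sum_congr rfl fun c _ => Finset.sum_congr rfl fun c' _ => ?_
  rw [smul_comm, Function.update_comm h]

end

section

variable {Ω : Type*}

variable (k) in
/-- Contraction against the coordinate `ω`. -/
noncomputable abbrev extContract (ω : Ω) : Module.End k (ExteriorAlgebra k (Ω → k)) :=
  CliffordAlgebra.contractLeft (LinearMap.proj ω)

variable (k) in
/-- Exterior multiplication by the basis vector at `ω`. -/
noncomputable abbrev extMul [DecidableEq Ω] (ω : Ω) : Module.End k (ExteriorAlgebra k (Ω → k)) :=
  LinearMap.mulLeft k (ExteriorAlgebra.ι k (Pi.single ω 1))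

variable (k) in
/-- Division of polynomials by `X ω`, discarding the remainder. -/
noncomputable def divX (ω : Ω) : Module.End k (MvPolynomial Ω k) where
  toFun q := q.divMonomial (Finsupp.single ω 1)
  map_add' _ _ := MvPolynomial.add_divMonomial _ _ _
  map_smul' _ _ := MvPolynomial.ext _ _ fun _ => by simp [MvPolynomial.coeff_divMonomial]

variable (k) in
/-- Multiplication of polynomials by `X ω`. -/
noncomputable abbrev mulX (ω : Ω) : Module.End k (MvPolynomial Ω k) :=
  LinearMap.mulLeft k (MvPolynomial.X ω)

theorem extMul_mul_extMul [DecidableEq Ω] (ω ω' : Ω) :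
    extMul k ω * extMul k ω' = -(extMul k ω' * extMul k ω) := LinearMap.ext fun x => by
  simp only [Module.End.mul_apply, LinearMap.neg_apply, LinearMap.mulLeft_apply, ← mul_assoc]
  rw [← neg_mul, eq_neg_of_add_eq_zero_left (ExteriorAlgebra.ι_add_mul_swap _ _)]

theorem extContract_mul_extContract (ω ω' : Ω) :
    extContract k ω * extContract k ω' = -(extContract k ω' * extContract k ω) :=
  LinearMap.ext fun x => CliffordAlgebra.contractLeft_comm _ _ x

theorem extContract_mul_extMul [DecidableEq Ω] {ω ω' : Ω} (h : ω ≠ ω') :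
    extContract k ω * extMul k ω' = -(extMul k ω' * extContract k ω) := LinearMap.ext fun x =>
  (CliffordAlgebra.contractLeft_ι_mul _ _ _).trans (by simp [h])

theorem extContract_mul_extMul_self [DecidableEq Ω] (ω : Ω) :
    extContract k ω * extMul k ω = 1 - extMul k ω * extContract k ω := LinearMap.ext fun x =>
  (CliffordAlgebra.contractLeft_ι_mul _ _ _).trans (by simp)

theorem divX_mul_mulX (ω : Ω) : divX k ω * mulX k ω = 1 :=
  LinearMap.ext fun q => MvPolynomial.X_mul_divMonomial ω q

theorem commute_divX_mulX {ω ω' : Ω} (h : ω ≠ ω') : Commute (divX k ω) (mulX k ω') := by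
  classical
  refine LinearMap.ext fun q => MvPolynomial.ext _ _ fun m => ?_
  have hsub : Finsupp.single ω 1 + m - Finsupp.single ω' 1 =
      Finsupp.single ω 1 + (m - Finsupp.single ω' 1) := by
    ext i
    have := Finsupp.single_apply (a := ω) (a' := i) (b := 1)
    have := Finsupp.single_apply (a := ω') (a' := i) (b := 1)
    simp only [Finsupp.coe_add, Finsupp.coe_tsub, Pi.add_apply, Pi.sub_apply]
    grind
  simp [divX, MvPolynomial.coeff_divMonomial, MvPolynomial.coeff_X_mul', hsub, h]

end

end Operators

section AnticommutingElements

variable {R ι : Type*} [Ring R]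

theorem add_mul_add_eq_neg {a b c d : R} (hac : a * c = -(c * a)) (had : a * d = -(d * a))
    (hbc : b * c = -(c * b)) (hbd : b * d = -(d * b)) :
    (a + b) * (c + d) = -((c + d) * (a + b)) := by
  simp only [add_mul, mul_add, hac, had, hbc, hbd]
  abel

theorem commute_mul_of_mul_eq_neg {a b c : R} (hb : a * b = -(b * a)) (hc : a * c = -(c * a)) :
    Commute a (b * c) := by
  rw [commute_iff_eq, ← mul_assoc, hb, neg_mul, mul_assoc, hc, mul_neg, neg_neg, mul_assoc]

theorem sum_mul_sum_self_eq_zero {s : Finset ι} {d : ι → R} (hd : ∀ i, d i * d i = 0)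
    (hd' : ∀ i j, i ≠ j → d i * d j = -(d j * d i)) : (∑ i ∈ s, d i) * ∑ i ∈ s, d i = 0 := by
  classical
  induction s using Finset.induction_on with
  | empty => simp
  | insert i s hi ih =>
    have h : d i * ∑ j ∈ s, d j = -((∑ j ∈ s, d j) * d i) := by
      rw [Finset.mul_sum, Finset.sum_mul, ← Finset.sum_neg_distrib]
      exact Finset.sum_congr rfl fun j hj => hd' i j (ne_of_mem_of_not_mem hj hi).symm
    rw [Finset.sum_insert hi, add_mul, mul_add, mul_add, hd, ih, h]
    abel

end AnticommutingElements

section Koszul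

open scoped TensorProduct

variable (k Ω P : Type*) [CommRing k] [AddCommGroup P] [Module k P] {p : ℕ} [NeZero p]

/-- The space underlying the tensor product over `Ω` of two-periodic resolutions for the group
`ZMod p`, with coefficients in `P`. The generators of the factor at `ω` are dual to the products of
the powers of `X ω` with `1` and with the basis vector of the exterior algebra at `ω`; thus
multiplication by polynomials lowers degrees. -/
abbrev KoszulModule : Type _ :=
  MvPolynomial Ω k ⊗[k] ExteriorAlgebra k (Ω → k) →ₗ[k] P

variable {k Ω} in
theorem extContract_mul_self (ω : Ω) : extContract k ω * extContract k ω = 0 :=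
  LinearMap.ext fun x => CliffordAlgebra.contractLeft_contractLeft _ x

variable {k Ω P} [DecidableEq Ω] (τ : Ω → Matrix (ZMod p) (ZMod p) k →ₐ[k] Module.End k P)

/-- The differential of the factor at `ω` of `KoszulModule`. -/
noncomputable def factorDifferential (ω : Ω) : Module.End k (KoszulModule k Ω P) :=
  tensorOperator 1 (extMul k ω) (τ ω (shiftSubOne k p)) +
    tensorOperator (mulX k ω) (extContract k ω) (τ ω (normMatrix k p))

/-- A homotopy between the identity and `factorProjection` on the factor at `ω`. -/
noncomputable def factorHomotopy (ω : Ω) : Module.End k (KoszulModule k Ω P) :=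
  tensorOperator 1 (extContract k ω) (τ ω (partialSumMatrix k p)) +
    tensorOperator (divX k ω) (extMul k ω) (τ ω (supportMatrix k p))

/-- The projection of the factor at `ω` to a copy of its homology. -/
noncomputable def factorProjection (ω : Ω) : Module.End k (KoszulModule k Ω P) :=
  tensorOperator (1 - mulX k ω * divX k ω) (extContract k ω * extMul k ω)
    (τ ω (supportMatrix k p * normMatrix k p))

theorem extMul_mul_self (ω : Ω) : extMul k ω * extMul k ω = 0 := LinearMap.ext fun x => by
  simp [← mul_assoc]

theorem factorDifferential_mul_self (ω : Ω) :
    factorDifferential τ ω * factorDifferential τ ω = (0 : Module.End k (KoszulModule k Ω P)) := by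
  simp only [factorDifferential, add_mul, mul_add, tensorOperator_mul, ← map_mul,
    extMul_mul_self, extContract_mul_self, shiftSubOne_mul_normMatrix, normMatrix_mul_shiftSubOne,
    map_zero, tensorOperator_zero_middle, tensorOperator_zero_right, add_zero]

theorem factorDifferential_mul_factorHomotopy_add (ω : Ω) :
    factorDifferential τ ω * factorHomotopy τ ω + factorHomotopy τ ω * factorDifferential τ ω =
      (1 - factorProjection τ ω : Module.End k (KoszulModule k Ω P)) := by
  simp only [factorDifferential, factorHomotopy, factorProjection, add_mul, mul_add,
    tensorOperator_mul, ← map_mul, extMul_mul_self, extContract_mul_self, divX_mul_mulX,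
    tensorOperator_zero_middle, add_zero, zero_add, shiftSubOne_mul_partialSumMatrix,
    partialSumMatrix_mul_shiftSubOne, mul_one, one_mul, extContract_mul_extMul_self]
  refine LinearMap.ext fun f => TensorProduct.ext' fun q x => ?_
  simp only [LinearMap.add_apply, LinearMap.sub_apply, tensorOperator_apply, map_sub, map_one,
    Module.End.one_apply, Module.End.mul_apply, TensorProduct.tmul_sub, TensorProduct.sub_tmul]
  abel

theorem factorDifferential_mul_factorDifferential
    (hτ : Pairwise fun ω ω' => ∀ A B, Commute (τ ω A) (τ ω' B)) {ω ω' : Ω} (h : ω ≠ ω') :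
    factorDifferential τ ω * factorDifferential τ ω' =
      (-(factorDifferential τ ω' * factorDifferential τ ω) :
        Module.End k (KoszulModule k Ω P)) :=
  have hX : Commute (mulX k ω) (mulX k ω') := LinearMap.ext fun q => mul_left_comm _ _ q
  add_mul_add_eq_neg
    (tensorOperator_mul_eq_neg (.one_left _) (extMul_mul_extMul ω ω') (hτ h _ _))
    (tensorOperator_mul_eq_neg (.one_left _) (by rw [extContract_mul_extMul h.symm, neg_neg])
      (hτ h _ _))
    (tensorOperator_mul_eq_neg (.one_right _) (extContract_mul_extMul h) (hτ h _ _))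
    (tensorOperator_mul_eq_neg hX (extContract_mul_extContract ω ω') (hτ h _ _))

theorem factorDifferential_mul_factorHomotopy
    (hτ : Pairwise fun ω ω' => ∀ A B, Commute (τ ω A) (τ ω' B)) {ω ω' : Ω} (h : ω ≠ ω') :
    factorDifferential τ ω * factorHomotopy τ ω' =
      (-(factorHomotopy τ ω' * factorDifferential τ ω) : Module.End k (KoszulModule k Ω P)) :=
  add_mul_add_eq_neg
    (tensorOperator_mul_eq_neg (.one_left _) (by rw [extContract_mul_extMul h.symm, neg_neg])
      (hτ h _ _))
    (tensorOperator_mul_eq_neg (.one_left _) (extMul_mul_extMul ω ω') (hτ h _ _))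
    (tensorOperator_mul_eq_neg (.one_right _) (extContract_mul_extContract ω ω') (hτ h _ _))
    (tensorOperator_mul_eq_neg (commute_divX_mulX h.symm).symm (extContract_mul_extMul h)
      (hτ h _ _))

variable [Fintype Ω]

/-- The differential of the tensor product of the periodic resolutions. -/
noncomputable def koszulDifferential : Module.End k (KoszulModule k Ω P) :=
  ∑ ω, factorDifferential τ ω

theorem koszulDifferential_mul_self
    (hτ : Pairwise fun ω ω' => ∀ A B, Commute (τ ω A) (τ ω' B)) :
    koszulDifferential τ * koszulDifferential τ = 0 :=
  sum_mul_sum_self_eq_zero (factorDifferential_mul_self τ)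
    fun _ _ => factorDifferential_mul_factorDifferential τ hτ

theorem koszulDifferential_mul_factorHomotopy_add
    (hτ : Pairwise fun ω ω' => ∀ A B, Commute (τ ω A) (τ ω' B)) (ω : Ω) :
    koszulDifferential τ * factorHomotopy τ ω + factorHomotopy τ ω * koszulDifferential τ =
      1 - factorProjection τ ω := by
  rw [← factorDifferential_mul_factorHomotopy_add, koszulDifferential, Finset.sum_mul,
    Finset.mul_sum, ← Finset.sum_add_distrib]
  refine Finset.sum_eq_single_of_mem ω (Finset.mem_univ ω) fun ω' _ h => ?_
  rw [factorDifferential_mul_factorHomotopy τ hτ h, neg_add_cancel]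

end Koszul

section Degree

open scoped TensorProduct

variable {k : Type*} [CommRing k]

section

variable {V : Type*} [AddCommGroup V] [Module k V]

/-- The operator `a` maps `F i` to `F (i + r)`, which stands for zero when `i + r` is negative. -/
def ShiftsDegree (F : ℕ → Submodule k V) (r : ℤ) (a : Module.End k V) : Prop :=
  ∀ i, ∀ x ∈ F i, a x = 0 ∨ ∃ j : ℕ, (j : ℤ) = i + r ∧ a x ∈ F j

theorem shiftsDegree_one (F : ℕ → Submodule k V) : ShiftsDegree F 0 1 :=
  fun i _ hx => .inr ⟨i, by simp, hx⟩

end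

variable {Ω P : Type*} [AddCommGroup P] [Module k P]

theorem shiftsDegree_mulLeft {r : ℕ} {z : MvPolynomial Ω k} (hz : z.IsHomogeneous r) :
    ShiftsDegree (MvPolynomial.homogeneousSubmodule Ω k) r (LinearMap.mulLeft k z) :=
  fun i _ hx => .inr ⟨i + r, by simp, by
    rw [add_comm]
    exact hz.mul hx⟩

theorem shiftsDegree_divX (ω : Ω) :
    ShiftsDegree (MvPolynomial.homogeneousSubmodule Ω k) (-1) (divX k ω) := by
  intro i q hq
  rw [MvPolynomial.mem_homogeneousSubmodule] at hq
  have hdeg : ∀ m, MvPolynomial.coeff m (divX k ω q) ≠ 0 → 1 + Finsupp.weight 1 m = i :=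
    fun m hm => by simpa [Finsupp.weight_single] using hq hm
  cases i with
  | zero =>
    refine .inl (MvPolynomial.ext _ _ fun m => by_contra fun hm => ?_)
    have := hdeg m hm
    omega
  | succ i => exact .inr ⟨i, by simp, fun m hm => by have := hdeg m hm; omega⟩

theorem exteriorPower_succ (V : Type*) [AddCommGroup V] [Module k V] (j : ℕ) :
    ⋀[k]^(j + 1) V = LinearMap.range (ExteriorAlgebra.ι k) * ⋀[k]^j V :=
  pow_succ' _ _

theorem shiftsDegree_extMul [DecidableEq Ω] (ω : Ω) :
    ShiftsDegree (fun j => ⋀[k]^j (Ω → k)) 1 (extMul k ω) := fun j x hx =>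
  .inr ⟨j + 1, by simp, (exteriorPower_succ (Ω → k) j).ge <|
    Submodule.mul_mem_mul (LinearMap.mem_range_self _ _) hx⟩

theorem extContract_ι_mul (ω : Ω) (v : Ω → k) (x : ExteriorAlgebra k (Ω → k)) :
    extContract k ω (ExteriorAlgebra.ι k v * x) =
      v ω • x - ExteriorAlgebra.ι k v * extContract k ω x :=
  CliffordAlgebra.contractLeft_ι_mul _ _ _

theorem extContract_mem_exteriorPower (ω : Ω) {j : ℕ} {x : ExteriorAlgebra k (Ω → k)}
    (hx : x ∈ ⋀[k]^(j + 1) (Ω → k)) : extContract k ω x ∈ ⋀[k]^j (Ω → k) := by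
  induction j generalizing x with
  | zero =>
    obtain ⟨v, rfl⟩ := (pow_one (LinearMap.range (ExteriorAlgebra.ι k))).le hx
    exact Submodule.mem_one.2 ⟨v ω, Eq.symm (by exact CliffordAlgebra.contractLeft_ι _ _ v)⟩
  | succ j ih =>
    rw [exteriorPower_succ] at hx
    induction hx using Submodule.mul_induction_on' with
    | mem_mul_mem v hv x hx =>
      obtain ⟨v, rfl⟩ := hv
      rw [extContract_ι_mul]
      refine sub_mem (Submodule.smul_mem _ _ hx) ?_
      rw [exteriorPower_succ]
      exact Submodule.mul_mem_mul (LinearMap.mem_range_self _ _) (ih hx)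
    | add x _ y _ hx hy => simpa only [map_add] using add_mem hx hy

theorem shiftsDegree_extContract (ω : Ω) :
    ShiftsDegree (fun j => ⋀[k]^j (Ω → k)) (-1) (extContract k ω) := by
  rintro (_ | j) x hx
  · obtain ⟨r, rfl⟩ := Submodule.mem_one.1 hx
    exact .inl (CliffordAlgebra.contractLeft_algebraMap _ _ r)
  · exact .inr ⟨j, by simp, extContract_mem_exteriorPower ω hx⟩

variable (k Ω P) in
/-- The component of degree `n`, where the variables of the polynomial ring have degree two. -/
def koszulDegree (n : ℤ) : Submodule k (KoszulModule k Ω P) where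
  carrier := {f | ∀ (i j : ℕ), ∀ q ∈ MvPolynomial.homogeneousSubmodule Ω k i, ∀ x ∈ ⋀[k]^j (Ω → k),
    (2 * i + j : ℤ) ≠ n → f (q ⊗ₜ x) = 0}
  zero_mem' _ _ _ _ _ _ _ := rfl
  add_mem' hf hg i j q hq x hx h := by simp [hf i j q hq x hx h, hg i j q hq x hx h]
  smul_mem' r f hf i j q hq x hx h := by simp [hf i j q hq x hx h]

theorem eq_zero_of_forall_homogeneous {f : KoszulModule k Ω P}
    (hf : ∀ (i j : ℕ), ∀ q ∈ MvPolynomial.homogeneousSubmodule Ω k i, ∀ x ∈ ⋀[k]^j (Ω → k),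
      f (q ⊗ₜ x) = 0) : f = 0 := by
  refine TensorProduct.ext' fun q x => ?_
  rw [LinearMap.zero_apply]
  induction x using DirectSum.Decomposition.inductionOn fun j => ⋀[k]^j (Ω → k) with
  | zero => rw [TensorProduct.tmul_zero, map_zero]
  | add x y hx hy => rw [TensorProduct.tmul_add, map_add, hx, hy, add_zero]
  | @homogeneous j x =>
  rw [← MvPolynomial.sum_homogeneousComponent q, TensorProduct.sum_tmul, map_sum]
  exact Finset.sum_eq_zero fun i _ =>
    hf i j _ (MvPolynomial.homogeneousComponent_isHomogeneous i q) _ x.2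

theorem eq_zero_of_mem_koszulDegree_of_neg {n : ℤ} (hn : n < 0) {f : KoszulModule k Ω P}
    (hf : f ∈ koszulDegree k Ω P n) : f = 0 :=
  eq_zero_of_forall_homogeneous fun i j q hq x hx => hf i j q hq x hx (by omega)

theorem tensorOperator_mem_koszulDegree {a : Module.End k (MvPolynomial Ω k)}
    {b : Module.End k (ExteriorAlgebra k (Ω → k))} {r t n : ℤ}
    (ha : ShiftsDegree (MvPolynomial.homogeneousSubmodule Ω k) r a)
    (hb : ShiftsDegree (fun j => ⋀[k]^j (Ω → k)) t b) (c : Module.End k P)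
    {f : KoszulModule k Ω P} (hf : f ∈ koszulDegree k Ω P (n + 2 * r + t)) :
    tensorOperator a b c f ∈ koszulDegree k Ω P n := by
  intro i j q hq x hx hn
  rw [tensorOperator_apply]
  obtain hq | ⟨i', hi, hq⟩ := ha i q hq
  · simp [hq]
  obtain hx | ⟨j', hj, hx⟩ := hb j x hx
  · simp [hx]
  rw [hf i' j' _ hq _ hx (by omega), map_zero]

end Degree

section Exactness

open scoped TensorProduct

variable {k Ω P : Type*} [CommRing k] [DecidableEq Ω] [AddCommGroup P] [Module k P] {p : ℕ}
  [NeZero p] (τ : Ω → Matrix (ZMod p) (ZMod p) k →ₐ[k] Module.End k P)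

theorem factorDifferential_mem_koszulDegree (ω : Ω) {n : ℤ} {f : KoszulModule k Ω P}
    (hf : f ∈ koszulDegree k Ω P (n + 1)) : factorDifferential τ ω f ∈ koszulDegree k Ω P n :=
  add_mem
    (tensorOperator_mem_koszulDegree (shiftsDegree_one _) (shiftsDegree_extMul ω) _
      (by simpa using hf))
    (tensorOperator_mem_koszulDegree (shiftsDegree_mulLeft (MvPolynomial.isHomogeneous_X k ω))
      (shiftsDegree_extContract ω) _ (by convert hf using 2; push_cast; ring))

theorem factorHomotopy_mem_koszulDegree (ω : Ω) {n : ℤ} {f : KoszulModule k Ω P}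
    (hf : f ∈ koszulDegree k Ω P n) : factorHomotopy τ ω f ∈ koszulDegree k Ω P (n + 1) :=
  add_mem
    (tensorOperator_mem_koszulDegree (shiftsDegree_one _) (shiftsDegree_extContract ω) _
      (by simpa using hf))
    (tensorOperator_mem_koszulDegree (shiftsDegree_divX ω) (shiftsDegree_extMul ω) _
      (by convert hf using 2; ring))

/-- The submodule which `factorProjection τ ω` projects to. -/
noncomputable def factorHomology (ω : Ω) : Submodule k (KoszulModule k Ω P) :=
  LinearMap.ker (tensorOperator (mulX k ω) 1 1) ⊓ LinearMap.ker (tensorOperator 1 (extMul k ω) 1) ⊓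
    LinearMap.ker (tensorOperator 1 1 (τ ω (1 - Matrix.single (-1) (-1) 1)))

theorem factorProjection_mem_factorHomology (ω : Ω) (f : KoszulModule k Ω P) :
    factorProjection τ ω f ∈ factorHomology τ ω := by
  have hX : (1 - mulX k ω * divX k ω) * mulX k ω = 0 := by
    rw [sub_mul, one_mul, mul_assoc, divX_mul_mulX, mul_one, sub_self]
  have hL : extContract k ω * extMul k ω * extMul k ω = 0 := by
    rw [mul_assoc, extMul_mul_self, mul_zero]
  have hτ : (1 - Matrix.single (-1) (-1) 1) * (supportMatrix k p * normMatrix k p) = 0 := by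
    simp [sub_mul, supportMatrix, ← mul_assoc]
  refine ⟨⟨?_, ?_⟩, ?_⟩ <;>
    simp only [SetLike.mem_coe, LinearMap.mem_ker, factorProjection, ← Module.End.mul_apply,
      tensorOperator_mul, hX, hL, ← map_mul, hτ, map_zero, tensorOperator_zero_middle,
      tensorOperator_zero_right, LinearMap.zero_apply]
  ext; simp

theorem factorProjection_mem_factorHomology_of_ne
    (hτ : Pairwise fun ω ω' => ∀ A B, Commute (τ ω A) (τ ω' B)) {ω ω' : Ω} (h : ω ≠ ω')
    {f : KoszulModule k Ω P} (hf : f ∈ factorHomology τ ω) :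
    factorProjection τ ω' f ∈ factorHomology τ ω := by
  have hX : Commute (mulX k ω) (1 - mulX k ω' * divX k ω') :=
    .sub_right (.one_right _) (.mul_right (LinearMap.ext fun q => mul_left_comm _ _ q)
      (commute_divX_mulX h.symm).symm)
  have hL : Commute (extMul k ω) (extContract k ω' * extMul k ω') :=
    commute_mul_of_mul_eq_neg (by rw [extContract_mul_extMul h.symm, neg_neg])
      (extMul_mul_extMul ω ω')
  have hker : ∀ T : Module.End k (KoszulModule k Ω P), Commute T (factorProjection τ ω') →
      f ∈ LinearMap.ker T → factorProjection τ ω' f ∈ LinearMap.ker T := fun T hT hf => by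
    rw [LinearMap.mem_ker, ← Module.End.mul_apply, hT.eq, Module.End.mul_apply,
      LinearMap.mem_ker.1 hf, map_zero]
  exact ⟨⟨hker _ (commute_tensorOperator hX (.one_left _) (.one_left _)) hf.1.1,
    hker _ (commute_tensorOperator (.one_left _) hL (.one_left _)) hf.1.2⟩,
    hker _ (commute_tensorOperator (.one_left _) (.one_left _) (hτ h _ _)) hf.2⟩

theorem eq_zero_of_mem_factorHomology [Finite Ω] {f : KoszulModule k Ω P}
    (hf : ∀ ω, f ∈ factorHomology τ ω) (hf1 : f (1 ⊗ₜ 1) = 0) : f = 0 := by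
  have hX : ∀ q ω x, f ((q * MvPolynomial.X ω) ⊗ₜ x) = 0 := fun q ω x => by
    rw [mul_comm]
    exact LinearMap.congr_fun (hf ω).1.1 (q ⊗ₜ x)
  have hL : ∀ v x, f (1 ⊗ₜ (ExteriorAlgebra.ι k v * x)) = 0 := fun v x => by
    suffices f ∘ₗ TensorProduct.mk k _ _ 1 ∘ₗ LinearMap.mulRight k x ∘ₗ ExteriorAlgebra.ι k = 0 from
      LinearMap.congr_fun this v
    refine LinearMap.pi_ext' fun ω => LinearMap.ext_ring ?_
    exact LinearMap.congr_fun (LinearMap.mem_ker.1 (hf ω).1.2) (1 ⊗ₜ x)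
  refine TensorProduct.ext' fun q x => ?_
  induction q using MvPolynomial.induction_on with
  | C r =>
    rw [MvPolynomial.C_eq_smul_one, TensorProduct.smul_tmul]
    induction r • x using CliffordAlgebra.left_induction with
    | algebraMap r => rw [Algebra.algebraMap_eq_smul_one, TensorProduct.tmul_smul, map_smul, hf1,
        smul_zero, LinearMap.zero_apply]
    | add x y hx hy => rw [TensorProduct.tmul_add, map_add, map_add, hx, hy]
    | ι_mul x v _ => exact hL v x
  | add q q' hq hq' => rw [TensorProduct.add_tmul, map_add, map_add, hq, hq']
  | mul_X q ω _ => exact hX q ω x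

variable [Fintype Ω]

theorem koszulDifferential_mem_koszulDegree {n : ℤ} {f : KoszulModule k Ω P}
    (hf : f ∈ koszulDegree k Ω P (n + 1)) : koszulDifferential τ f ∈ koszulDegree k Ω P n := by
  rw [koszulDifferential, LinearMap.sum_apply]
  exact sum_mem fun ω _ => factorDifferential_mem_koszulDegree τ ω hf

theorem exists_sub_koszulDifferential_mem_factorHomology
    (hτ : Pairwise fun ω ω' => ∀ A B, Commute (τ ω A) (τ ω' B)) (s : Finset Ω) {n : ℤ}
    {f : KoszulModule k Ω P} (hf : f ∈ koszulDegree k Ω P n) (hd : koszulDifferential τ f = 0) :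
    ∃ u ∈ koszulDegree k Ω P (n + 1), ∀ ω ∈ s, f - koszulDifferential τ u ∈ factorHomology τ ω := by
  induction s using Finset.induction_on with
  | empty => exact ⟨0, zero_mem _, by simp⟩
  | insert ω s hω ih =>
    obtain ⟨u, hu, hus⟩ := ih
    set g := f - koszulDifferential τ u
    have hdg : koszulDifferential τ g = 0 := by
      rw [map_sub, hd, ← Module.End.mul_apply, koszulDifferential_mul_self τ hτ,
        LinearMap.zero_apply, sub_zero]
    have hproj : f - koszulDifferential τ (u + factorHomotopy τ ω g) = factorProjection τ ω g := by
      have := LinearMap.congr_fun (koszulDifferential_mul_factorHomotopy_add τ hτ ω) g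
      simp only [LinearMap.add_apply, LinearMap.sub_apply, Module.End.mul_apply, hdg, map_zero,
        Module.End.one_apply, add_zero] at this
      rw [map_add, ← sub_sub, this, sub_sub_cancel]
    refine ⟨u + factorHomotopy τ ω g, add_mem hu (factorHomotopy_mem_koszulDegree τ ω
      (sub_mem hf (koszulDifferential_mem_koszulDegree τ hu))), fun ω' hω' => ?_⟩
    rw [hproj]
    obtain rfl | hω' := Finset.mem_insert.1 hω'
    · exact factorProjection_mem_factorHomology τ _ g
    · exact factorProjection_mem_factorHomology_of_ne τ hτ (ne_of_mem_of_not_mem hω' hω)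
        (hus ω' hω')

end Exactness

section Equivariance

open scoped TensorProduct

variable {k G : Type*} [CommRing k] [Group G]

theorem semiconjBy_map_inv {R : Type*} [Monoid R] (f : G →* R) {g : G} {a b : R}
    (h : SemiconjBy (f g) a b) : SemiconjBy (f g⁻¹) b a :=
  SemiconjBy.units_inv_symm_left (a := f.toHomUnits g) h

section

variable {U V P : Type*} [AddCommGroup U] [AddCommGroup V] [AddCommGroup P] [Module k U]
  [Module k V] [Module k P] (ρ : Representation k G U) (σ : Representation k G V)
  (π : Representation k G P)

theorem semiconjBy_linHom_tensorOperator {a a' : Module.End k U} {b b' : Module.End k V}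
    {c c' : Module.End k P} {g : G} (ha : SemiconjBy (ρ g) a a') (hb : SemiconjBy (σ g) b b')
    (hc : SemiconjBy (π g) c c') :
    SemiconjBy ((ρ.tprod σ).linHom π g) (tensorOperator a b c) (tensorOperator a' b' c') := by
  change tensorOperator (ρ g⁻¹) (σ g⁻¹) (π g) * _ = _ * tensorOperator (ρ g⁻¹) (σ g⁻¹) (π g)
  rw [tensorOperator_mul, tensorOperator_mul, hc.eq,
    (semiconjBy_map_inv ρ ha).eq, (semiconjBy_map_inv σ hb).eq]

end

variable {Ω : Type*} [MulAction G Ω]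

variable (k G Ω) in
/-- The permutation action on the variables of a polynomial ring. -/
noncomputable def polynomialRep : Representation k G (MvPolynomial Ω k) where
  toFun g := (MvPolynomial.rename (g • ·)).toLinearMap
  map_one' := LinearMap.ext fun q => by
    simp only [one_smul]
    exact MvPolynomial.rename_id_apply q
  map_mul' g h := LinearMap.ext fun q => by
    simp [MvPolynomial.rename_rename, Function.comp_def, mul_smul]

variable (k G Ω) in
/-- The permutation action on the exterior algebra. -/
noncomputable def exteriorRep : Representation k G (ExteriorAlgebra k (Ω → k)) where
  toFun g := (ExteriorAlgebra.map (LinearMap.funLeft k k fun ω => g⁻¹ • ω)).toLinearMap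
  map_one' := by
    have h : LinearMap.funLeft k k (fun ω : Ω => (1 : G)⁻¹ • ω) = .id := by ext; simp
    rw [h, ExteriorAlgebra.map_id]
    rfl
  map_mul' g h := by
    have hgh : LinearMap.funLeft k k (fun ω : Ω => (g * h)⁻¹ • ω) =
        LinearMap.funLeft k k (fun ω => g⁻¹ • ω) ∘ₗ LinearMap.funLeft k k fun ω => h⁻¹ • ω :=
      LinearMap.ext fun v => funext fun ω => by simp [mul_smul]
    rw [hgh, ← ExteriorAlgebra.map_comp_map]
    rfl

theorem semiconjBy_polynomialRep_mulX (g : G) (ω : Ω) :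
    SemiconjBy (polynomialRep k G Ω g) (mulX k ω) (mulX k (g • ω)) :=
  LinearMap.ext fun q => by simp [polynomialRep]

theorem exteriorRep_ι_mul (g : G) (v : Ω → k) (x : ExteriorAlgebra k (Ω → k)) :
    exteriorRep k G Ω g (ExteriorAlgebra.ι k v * x) =
      ExteriorAlgebra.ι k (fun ω => v (g⁻¹ • ω)) * exteriorRep k G Ω g x :=
  (map_mul (ExteriorAlgebra.map _) _ _).trans
    (congrArg (· * _) (ExteriorAlgebra.map_apply_ι _ v))

theorem semiconjBy_exteriorRep_extMul [DecidableEq Ω] (g : G) (ω : Ω) :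
    SemiconjBy (exteriorRep k G Ω g) (extMul k ω) (extMul k (g • ω)) := by
  have hsingle : (fun ω' => (Pi.single ω 1 : Ω → k) (g⁻¹ • ω')) = Pi.single (g • ω) 1 :=
    funext fun ω' => by simp [Pi.single_apply, inv_smul_eq_iff]
  refine LinearMap.ext fun x => (exteriorRep_ι_mul g _ x).trans ?_
  rw [hsingle]
  rfl

theorem semiconjBy_exteriorRep_extContract (g : G) (ω : Ω) :
    SemiconjBy (exteriorRep k G Ω g) (extContract k ω) (extContract k (g • ω)) := by
  have hmul : ∀ (v : Ω → k) (x : ExteriorAlgebra k (Ω → k)),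
      exteriorRep k G Ω g (extContract k ω x) = extContract k (g • ω) (exteriorRep k G Ω g x) →
      exteriorRep k G Ω g (extContract k ω (ExteriorAlgebra.ι k v * x)) =
        extContract k (g • ω) (exteriorRep k G Ω g (ExteriorAlgebra.ι k v * x)) := fun v x hx => by
    rw [extContract_ι_mul, map_sub, map_smul, exteriorRep_ι_mul, hx, exteriorRep_ι_mul,
      extContract_ι_mul, inv_smul_smul]
  have halgebraMap (r : k) : exteriorRep k G Ω g (algebraMap k _ r) = algebraMap k _ r :=
    AlgHom.commutes (ExteriorAlgebra.map _) r
  refine LinearMap.ext fun x => ?_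
  change exteriorRep k G Ω g (extContract k ω x) = extContract k (g • ω) (exteriorRep k G Ω g x)
  induction x using CliffordAlgebra.left_induction with
  | algebraMap r =>
    refine (congrArg _ (CliffordAlgebra.contractLeft_algebraMap _ _ r)).trans ?_
    exact (map_zero _).trans
      ((congrArg _ (halgebraMap r)).trans (CliffordAlgebra.contractLeft_algebraMap _ _ r)).symm
  | add x y hx hy => simp only [map_add, hx, hy]
  | ι_mul x v hx => exact hmul v x hx

theorem shiftsDegree_polynomialRep (g : G) :
    ShiftsDegree (MvPolynomial.homogeneousSubmodule Ω k) 0 (polynomialRep k G Ω g) :=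
  fun i _ hx => .inr ⟨i, by simp, hx.rename_isHomogeneous⟩

theorem exteriorRep_mem_exteriorPower (g : G) {j : ℕ} {x : ExteriorAlgebra k (Ω → k)}
    (hx : x ∈ ⋀[k]^j (Ω → k)) : exteriorRep k G Ω g x ∈ ⋀[k]^j (Ω → k) := by
  induction j generalizing x with
  | zero =>
    obtain ⟨r, rfl⟩ := Submodule.mem_one.1 hx
    exact Submodule.mem_one.2 ⟨r, ((ExteriorAlgebra.map _).commutes r).symm⟩
  | succ j ih =>
    rw [exteriorPower_succ] at hx
    induction hx using Submodule.mul_induction_on' with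
    | mem_mul_mem v hv x hx =>
      obtain ⟨v, rfl⟩ := hv
      rw [exteriorRep_ι_mul, exteriorPower_succ]
      exact Submodule.mul_mem_mul (LinearMap.mem_range_self _ _) (ih hx)
    | add x _ y _ hx hy => simpa only [map_add] using add_mem hx hy

theorem shiftsDegree_exteriorRep (g : G) :
    ShiftsDegree (fun j => ⋀[k]^j (Ω → k)) 0 (exteriorRep k G Ω g) :=
  fun j _ hx => .inr ⟨j, by simp, exteriorRep_mem_exteriorPower g hx⟩

end Equivariance

section Augmentation

open scoped TensorProduct

variable {k Ω P Q : Type*} [CommRing k] [AddCommGroup P] [Module k P] [AddCommGroup Q]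
  [Module k Q]

variable (Ω) in
/-- The augmentation of `KoszulModule` in degree zero. -/
noncomputable def koszulAugmentation (ε : P →ₗ[k] Q) : KoszulModule k Ω P →ₗ[k] Q :=
  ε ∘ₗ LinearMap.applyₗ (1 ⊗ₜ 1)

theorem koszulAugmentation_apply (ε : P →ₗ[k] Q) (f : KoszulModule k Ω P) :
    koszulAugmentation Ω ε f = ε (f (1 ⊗ₜ 1)) := rfl

theorem koszulAugmentation_eq_zero (ε : P →ₗ[k] Q) {n : ℤ} (hn : n ≠ 0) {f : KoszulModule k Ω P}
    (hf : f ∈ koszulDegree k Ω P n) : koszulAugmentation Ω ε f = 0 := by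
  rw [koszulAugmentation_apply, hf 0 0 1 (MvPolynomial.isHomogeneous_one Ω k) 1
    (Submodule.mem_one.2 ⟨1, map_one _⟩) (by simpa using hn.symm), map_zero]

theorem algebraMapInv_eq_zero {j : ℕ} (hj : j ≠ 0) {x : ExteriorAlgebra k (Ω → k)}
    (hx : x ∈ ⋀[k]^j (Ω → k)) : ExteriorAlgebra.algebraMapInv x = 0 := by
  obtain ⟨j, rfl⟩ := Nat.exists_eq_succ_of_ne_zero hj
  rw [Nat.succ_eq_add_one, exteriorPower_succ] at hx
  induction hx using Submodule.mul_induction_on' with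
  | mem_mul_mem v hv x _ =>
    obtain ⟨v, rfl⟩ := hv
    rw [map_mul, ExteriorAlgebra.algebraMapInv, ExteriorAlgebra.lift_ι_apply, LinearMap.zero_apply,
      zero_mul]
  | add x _ y _ hx hy => rw [map_add, hx, hy, add_zero]

theorem exists_koszulAugmentation_eq {ε : P →ₗ[k] Q} (hε : Function.Surjective ε) (m : Q) :
    ∃ f ∈ koszulDegree k Ω P 0, koszulAugmentation Ω ε f = m := by
  obtain ⟨x, rfl⟩ := hε m
  refine ⟨LinearMap.toSpanSingleton k P x ∘ₗ (TensorProduct.lid k k).toLinearMap ∘ₗ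
    TensorProduct.map (MvPolynomial.lcoeff k 0) ExteriorAlgebra.algebraMapInv.toLinearMap,
    fun i j q hq y hy h => ?_, ?_⟩
  · suffices MvPolynomial.coeff 0 q * ExteriorAlgebra.algebraMapInv y = 0 by simp [this]
    obtain rfl | hj := eq_or_ne j 0
    · rw [MvPolynomial.IsHomogeneous.coeff_eq_zero hq (by rintro rfl; simp at h),
        zero_mul]
    · rw [algebraMapInv_eq_zero hj hy, mul_zero]
  · simp [koszulAugmentation_apply]

variable [Fintype Ω] [DecidableEq Ω] {p : ℕ} [NeZero p]
  {τ : Ω → Matrix (ZMod p) (ZMod p) k →ₐ[k] Module.End k P} {ε : P →ₗ[k] Q}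

theorem koszulAugmentation_koszulDifferential (hε : ∀ ω, ε ∘ₗ τ ω (shiftSubOne k p) = 0)
    (f : KoszulModule k Ω P) : koszulAugmentation Ω ε (koszulDifferential τ f) = 0 := by
  rw [koszulDifferential, LinearMap.sum_apply, map_sum]
  refine Finset.sum_eq_zero fun ω _ => ?_
  have hone : extContract k ω 1 = 0 :=
    CliffordAlgebra.contractLeft_one (Q := (0 : QuadraticForm k (Ω → k))) _
  rw [koszulAugmentation_apply, factorDifferential, LinearMap.add_apply, LinearMap.add_apply,
    tensorOperator_apply, tensorOperator_apply, hone, TensorProduct.tmul_zero, map_zero, map_zero,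
    add_zero]
  exact LinearMap.congr_fun (hε ω) _

theorem exists_koszulDifferential_eq
    (hτ : Pairwise fun ω ω' => ∀ A B, Commute (τ ω A) (τ ω' B))
    (hε : ∀ ω, ε ∘ₗ τ ω (shiftSubOne k p) = 0)
    (hε_inj : ∀ v, (∀ ω, τ ω (1 - Matrix.single (-1) (-1) 1) v = 0) → ε v = 0 → v = 0) {n : ℤ}
    {f : KoszulModule k Ω P} (hf : f ∈ koszulDegree k Ω P n) (hd : koszulDifferential τ f = 0)
    (hf0 : koszulAugmentation Ω ε f = 0) :
    ∃ u ∈ koszulDegree k Ω P (n + 1), koszulDifferential τ u = f := by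
  obtain ⟨u, hu, hg⟩ := exists_sub_koszulDifferential_mem_factorHomology τ hτ Finset.univ hf hd
  refine ⟨u, hu, (sub_eq_zero.1 <| eq_zero_of_mem_factorHomology τ
    (fun ω => hg ω (Finset.mem_univ ω)) (hε_inj _ (fun ω => ?_) ?_)).symm⟩
  · exact LinearMap.congr_fun (hg ω (Finset.mem_univ ω)).2 (1 ⊗ₜ 1)
  · rw [← koszulAugmentation_apply, map_sub, hf0, koszulAugmentation_koszulDifferential hε,
      sub_zero]

end Augmentation

section CoordinateOperators

variable {k Ω M : Type*} [CommRing k] [Fintype Ω] [DecidableEq Ω] [AddCommGroup M] [Module k M]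
  {p : ℕ} [NeZero p]

variable (k Ω M p) in
/-- The augmentation of `(Ω → ZMod p) → M`. -/
def sumOverStates : ((Ω → ZMod p) → M) →ₗ[k] M := ∑ s, LinearMap.proj s

theorem sumOverStates_apply (f : (Ω → ZMod p) → M) : sumOverStates k Ω M p f = ∑ s, f s := by
  simp [sumOverStates]

theorem sumOverStates_surjective : Function.Surjective (sumOverStates k Ω M p) :=
  fun m => ⟨Pi.single 0 m, by simp [sumOverStates_apply]⟩

theorem sumOverStates_comp_shiftSubOne (ω : Ω) :
    sumOverStates k Ω M p ∘ₗ coordinateOperator ω (shiftSubOne k p) = 0 := by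
  refine LinearMap.ext fun f => ?_
  rw [LinearMap.comp_apply, sumOverStates_apply, LinearMap.zero_apply,
    ← sub_eq_zero.2 (Equiv.sum_comp (Equiv.addRight (Pi.single ω (1 : ZMod p))) f),
    ← Finset.sum_sub_distrib]
  refine Finset.sum_congr rfl fun s _ => ?_
  have hs : Function.update s ω (s ω + 1) = s + Pi.single ω 1 := by
    ext ω'
    obtain rfl | h := eq_or_ne ω' ω <;> simp [*]
  simp [coordinateOperator_apply, shiftSubOne, hs]

theorem eq_zero_of_sumOverStates_eq_zero {v : (Ω → ZMod p) → M}
    (hv : ∀ ω, coordinateOperator ω (1 - Matrix.single (-1) (-1) 1 : Matrix _ _ k) v = 0)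
    (hv0 : sumOverStates k Ω M p v = 0) : v = 0 := by
  have hne : ∀ s, s ≠ (fun _ => -1) → v s = 0 := fun s hs => by
    obtain ⟨ω, hω⟩ := Function.ne_iff.1 hs
    simpa [coordinateOperator_apply, Matrix.one_apply, Matrix.single_apply, hω.symm, sub_smul]
      using congrFun (hv ω) s
  rw [sumOverStates_apply,
    Finset.sum_eq_single_of_mem _ (Finset.mem_univ _) fun s _ => hne s] at hv0
  funext s
  obtain rfl | hs := eq_or_ne s fun _ => -1
  exacts [hv0, hne s hs]

end CoordinateOperators

section FunctionRep

variable {k G M : Type*} [CommRing k] [Group G] [AddCommGroup M] [Module k M]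
  (ρ : Representation k G M)

/-- The representation on the functions from a `G`-set to a representation. -/
def functionRep (S : Type*) [MulAction G S] : Representation k G (S → M) where
  toFun g := (ρ g).compLeft S ∘ₗ LinearMap.funLeft k M (g⁻¹ • ·)
  map_one' := by ext; simp
  map_mul' g h := LinearMap.ext fun f => funext fun s => by simp [mul_smul]

theorem functionRep_apply {S : Type*} [MulAction G S] (g : G) (f : S → M) (s : S) :
    functionRep ρ S g f s = ρ g (f (g⁻¹ • s)) := rfl

theorem sumOverStates_functionRep {Ω : Type*} [Fintype Ω] [DecidableEq Ω] {p : ℕ} [NeZero p]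
    [MulAction G (Ω → ZMod p)] (g : G) (f : (Ω → ZMod p) → M) :
    sumOverStates k Ω M p (functionRep ρ _ g f) = ρ g (sumOverStates k Ω M p f) := by
  simp only [sumOverStates_apply, functionRep_apply, map_sum]
  exact Equiv.sum_comp (MulAction.toPerm g⁻¹) fun s => ρ g (f s)

theorem semiconjBy_functionRep_coordinateOperator {Ω : Type*} [DecidableEq Ω] {p : ℕ} [NeZero p]
    [MulAction G Ω] [MulAction G (Ω → ZMod p)] (hG : IsMonomialAction G Ω p)
    {A : Matrix (ZMod p) (ZMod p) k} (hA : ∀ a b c, A (a + c) (b + c) = A a b) (g : G) (ω : Ω) :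
    SemiconjBy (functionRep ρ (Ω → ZMod p) g) (coordinateOperator ω A)
      (coordinateOperator (g • ω) A) := by
  obtain ⟨β, hβ⟩ := hG g
  refine LinearMap.ext fun f => funext fun s => ?_
  obtain ⟨s, rfl⟩ := MulAction.surjective g s
  have hupdate (c : ZMod p) :
      Function.update (g • s) (g • ω) (c + β ω) = g • Function.update s ω c := by
    ext ω'
    obtain ⟨ω', rfl⟩ := MulAction.surjective g ω'
    obtain rfl | h := eq_or_ne ω' ω <;> simp [*]
  simp only [Module.End.mul_apply, coordinateOperator_apply, functionRep_apply, inv_smul_smul,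
    map_sum, map_smul]
  rw [← Equiv.sum_comp (Equiv.addRight (β ω)) fun c =>
    A ((g • s) (g • ω)) c • ρ g (f (g⁻¹ • Function.update (g • s) (g • ω) c))]
  simp [hβ, hA, hupdate]

theorem shiftSubOne_add_add (p : ℕ) [NeZero p] (a b c : ZMod p) :
    shiftSubOne k p (a + c) (b + c) = shiftSubOne k p a b := by
  simp [shiftSubOne, Matrix.one_apply, add_right_comm a c 1]

theorem sum_functionRep_conj {S : Type*} [MulAction G S] [Fintype G] {w : S → k}
    (hw : ∀ x, ∑ g : G, w (g • x) = 1) :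
    ∑ g : G, functionRep ρ S g⁻¹ * (LinearMap.pi fun s => w s • LinearMap.proj s) *
      functionRep ρ S g = 1 := by
  refine LinearMap.ext fun f => funext fun s => ?_
  simp only [LinearMap.sum_apply, Finset.sum_apply, Module.End.mul_apply, functionRep_apply,
    inv_inv, LinearMap.pi_apply, LinearMap.smul_apply, LinearMap.proj_apply, map_smul,
    inv_smul_smul, Representation.inv_self_apply, ← Finset.sum_smul, hw, one_smul,
    Module.End.one_apply]

end FunctionRep

section KoszulRep

open scoped TensorProduct

variable {k G Ω P : Type*} [CommRing k] [Group G] [MulAction G Ω] [AddCommGroup P] [Module k P]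
  (π : Representation k G P)

variable (Ω) in
/-- The action on `KoszulModule` induced by the permutation of the variables and an action on the
coefficients. -/
noncomputable def koszulRep : Representation k G (KoszulModule k Ω P) :=
  ((polynomialRep k G Ω).tprod (exteriorRep k G Ω)).linHom π

theorem koszulRep_eq_tensorOperator (g : G) : koszulRep Ω π g =
    tensorOperator (polynomialRep k G Ω g⁻¹) (exteriorRep k G Ω g⁻¹) (π g) := rfl

theorem koszulRep_mem_koszulDegree (g : G) {n : ℤ} {f : KoszulModule k Ω P}
    (hf : f ∈ koszulDegree k Ω P n) : koszulRep Ω π g f ∈ koszulDegree k Ω P n :=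
  tensorOperator_mem_koszulDegree (shiftsDegree_polynomialRep g⁻¹) (shiftsDegree_exteriorRep g⁻¹) _
    (by simpa using hf)

theorem koszulAugmentation_koszulRep {Q : Type*} [AddCommGroup Q] [Module k Q]
    {ρ : Representation k G Q} {ε : P →ₗ[k] Q} {g : G} (hε : ∀ v, ε (π g v) = ρ g (ε v))
    (f : KoszulModule k Ω P) :
    koszulAugmentation Ω ε (koszulRep Ω π g f) = ρ g (koszulAugmentation Ω ε f) := by
  have hpoly : polynomialRep k G Ω g⁻¹ 1 = 1 := map_one (MvPolynomial.rename _)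
  have hext : exteriorRep k G Ω g⁻¹ 1 = 1 := map_one (ExteriorAlgebra.map _)
  rw [koszulAugmentation_apply, koszulRep_eq_tensorOperator, tensorOperator_apply, hpoly, hext, hε,
    koszulAugmentation_apply]

theorem semiconjBy_koszulRep_factorDifferential [DecidableEq Ω] {p : ℕ} [NeZero p]
    {τ : Ω → Matrix (ZMod p) (ZMod p) k →ₐ[k] Module.End k P} {g : G} {ω : Ω}
    (hshift : SemiconjBy (π g) (τ ω (shiftSubOne k p)) (τ (g • ω) (shiftSubOne k p)))
    (hnorm : SemiconjBy (π g) (τ ω (normMatrix k p)) (τ (g • ω) (normMatrix k p))) :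
    SemiconjBy (koszulRep Ω π g) (factorDifferential τ ω) (factorDifferential τ (g • ω)) :=
  .add_right
    (semiconjBy_linHom_tensorOperator _ _ π (.one_right _) (semiconjBy_exteriorRep_extMul g ω)
      hshift)
    (semiconjBy_linHom_tensorOperator _ _ π (semiconjBy_polynomialRep_mulX g ω)
      (semiconjBy_exteriorRep_extContract g ω) hnorm)

theorem commute_koszulRep_koszulDifferential [Fintype Ω] [DecidableEq Ω] {p : ℕ} [NeZero p]
    {τ : Ω → Matrix (ZMod p) (ZMod p) k →ₐ[k] Module.End k P} {g : G}
    (hshift : ∀ ω, SemiconjBy (π g) (τ ω (shiftSubOne k p)) (τ (g • ω) (shiftSubOne k p)))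
    (hnorm : ∀ ω, SemiconjBy (π g) (τ ω (normMatrix k p)) (τ (g • ω) (normMatrix k p))) :
    Commute (koszulRep Ω π g) (koszulDifferential τ) := by
  rw [commute_iff_eq, koszulDifferential, Finset.mul_sum, Finset.sum_mul,
    ← Equiv.sum_comp (MulAction.toPerm g) fun ω => factorDifferential τ ω * koszulRep Ω π g]
  exact Finset.sum_congr rfl fun ω _ =>
    (semiconjBy_koszulRep_factorDifferential π (hshift ω) (hnorm ω)).eq

variable (k Ω P) in
/-- The action of polynomials on `KoszulModule`. -/
noncomputable def polynomialOperator (z : MvPolynomial Ω k) : Module.End k (KoszulModule k Ω P) :=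
  tensorOperator (LinearMap.mulLeft k z) 1 1

theorem commute_polynomialOperator (z w : MvPolynomial Ω k) :
    Commute (polynomialOperator k Ω P z) (polynomialOperator k Ω P w) :=
  commute_tensorOperator (LinearMap.ext fun q => mul_left_comm z w q) (.one_left _) (.one_left _)

theorem polynomialOperator_mem_koszulDegree {z : MvPolynomial Ω k} {d : ℕ} (hz : z.IsHomogeneous d)
    {n : ℤ} {f : KoszulModule k Ω P} (hf : f ∈ koszulDegree k Ω P (n + (2 * d : ℕ))) :
    polynomialOperator k Ω P z f ∈ koszulDegree k Ω P n :=
  tensorOperator_mem_koszulDegree (shiftsDegree_mulLeft hz) (shiftsDegree_one _) _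
    (by simpa using hf)

theorem commute_polynomialOperator_koszulDifferential [Fintype Ω] [DecidableEq Ω] {p : ℕ} [NeZero p]
    (τ : Ω → Matrix (ZMod p) (ZMod p) k →ₐ[k] Module.End k P) (z : MvPolynomial Ω k) :
    Commute (polynomialOperator k Ω P z) (koszulDifferential τ) :=
  .sum_right _ _ _ fun _ _ => .add_right
    (commute_tensorOperator (.one_right _) (.one_left _) (.one_left _))
    (commute_tensorOperator (LinearMap.ext fun q => mul_left_comm z _ q) (.one_left _)
      (.one_left _))

theorem commute_koszulRep_polynomialOperator {z : MvPolynomial Ω k} (hz : z.IsSymmetric) (g : G) :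
    Commute (koszulRep Ω π g) (polynomialOperator k Ω P z) :=
  semiconjBy_linHom_tensorOperator _ _ π
    (LinearMap.ext fun q => (map_mul (MvPolynomial.rename (g • ·)) z q).trans
      (congrArg (· * _) (hz (MulAction.toPerm g))))
    (.one_right _) (.one_right _)

theorem sum_koszulRep_conj [Fintype G] {θ : Module.End k P}
    (hθ : ∑ g : G, π g⁻¹ * θ * π g = 1) :
    ∑ g : G, koszulRep Ω π g⁻¹ * tensorOperator 1 1 θ * koszulRep Ω π g = 1 := by
  refine LinearMap.ext fun f => TensorProduct.ext' fun q x => ?_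
  have hg (g : G) : koszulRep Ω π g⁻¹ * tensorOperator 1 1 θ * koszulRep Ω π g =
      tensorOperator 1 1 (π g⁻¹ * θ * π g) := by
    simp only [koszulRep_eq_tensorOperator, tensorOperator_mul, one_mul, ← map_mul, inv_inv,
      inv_mul_cancel, map_one]
  simp only [hg, LinearMap.sum_apply, tensorOperator_apply, Module.End.one_apply]
  rw [← LinearMap.sum_apply, hθ, Module.End.one_apply]

end KoszulRep

section AsModule

variable {k G V : Type*} [CommRing k] [Group G] [AddCommGroup V] [Module k V]
  (ρ : Representation k G V)

/-- A linear endomorphism commuting with `G`, as an endomorphism of modules over the group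
algebra. -/
noncomputable def asModuleEnd (T : Module.End k V) (hT : ∀ g, Commute (ρ g) T) :
    Module.End (MonoidAlgebra k G) ρ.asModule :=
  Representation.IntertwiningMap.equivLinearMapAsModule ρ ρ ⟨T, fun g => (hT g).eq.symm⟩

variable {ρ}

theorem commute_asModuleEnd {T U : Module.End k V} (hT : ∀ g, Commute (ρ g) T)
    (hU : ∀ g, Commute (ρ g) U) (h : Commute T U) :
    Commute (asModuleEnd ρ T hT) (asModuleEnd ρ U hU) :=
  LinearMap.ext fun v => LinearMap.congr_fun h v

theorem mem_mapSubmodule {W : Submodule k V} (hW : W ∈ ρ.invtSubmodule) {v : V} :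
    v ∈ ρ.mapSubmodule ⟨W, hW⟩ ↔ v ∈ W :=
  ⟨fun ⟨_, hw, h⟩ => h ▸ hw, fun hv => ⟨v, hv, rfl⟩⟩

end AsModule

section HigmanAsModule

variable {k G V : Type*} [Field k] [Group G] [Fintype G] [AddCommGroup V] [Module k V]
  {ρ : Representation k G V}

theorem isHigman_asModule {θ : Module.End k V} (hθ : ∑ g : G, ρ g⁻¹ * θ * ρ g = 1) :
    IsHigman G (ρ.asModuleEquiv.symm.conj θ) := by
  refine LinearMap.ext fun v => ?_
  simp only [LinearMap.sumOfConjugates_apply, LinearMap.conjugate_apply,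
    Representation.single_smul, one_smul]
  exact (LinearMap.sum_apply ..).symm.trans (LinearMap.congr_fun hθ (ρ.asModuleEquiv v))

end HigmanAsModule

section KoszulComplex

variable {k G Ω M : Type*} [Field k] [Group G] [MulAction G Ω] {p : ℕ}
  [MulAction G (Ω → ZMod p)] [AddCommGroup M] [Module k M] (ρ : Representation k G M)

variable (Ω p) in
/-- The representation underlying the Koszul complex of the monomial action of `G` with
coefficients in `ρ`. -/
noncomputable abbrev koszulComplexRep :
    Representation k G (KoszulModule k Ω ((Ω → ZMod p) → M)) :=
  koszulRep Ω (functionRep ρ (Ω → ZMod p))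

variable (Ω p) in
/-- The part of the Koszul complex of degree `n`. -/
noncomputable def koszulComplexDegree (n : ℤ) :
    Submodule (MonoidAlgebra k G) (koszulComplexRep Ω p ρ).asModule :=
  (koszulComplexRep Ω p ρ).mapSubmodule ⟨koszulDegree k Ω ((Ω → ZMod p) → M) n,
    (Representation.mem_invtSubmodule _).2 fun g _ hf => koszulRep_mem_koszulDegree _ g hf⟩

theorem mem_koszulComplexDegree {n : ℤ} {f : KoszulModule k Ω ((Ω → ZMod p) → M)} :
    f ∈ koszulComplexDegree Ω p ρ n ↔ f ∈ koszulDegree k Ω ((Ω → ZMod p) → M) n :=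
  mem_mapSubmodule _

variable (Ω p) in
/-- The action of symmetric polynomials on the Koszul complex. -/
noncomputable def symmetricOperator (z : MvPolynomial.symmetricSubalgebra Ω k) :
    Module.End (MonoidAlgebra k G) (koszulComplexRep Ω p ρ).asModule :=
  asModuleEnd _ (polynomialOperator k Ω _ z) (commute_koszulRep_polynomialOperator _ z.2)

theorem commute_symmetricOperator (z w : MvPolynomial.symmetricSubalgebra Ω k) :
    Commute (symmetricOperator Ω p ρ z) (symmetricOperator Ω p ρ w) :=
  commute_asModuleEnd _ _ (commute_polynomialOperator _ _)

variable [Fintype Ω] [DecidableEq Ω] [NeZero p]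

/-- The differential of the Koszul complex. -/
noncomputable def koszulComplexD (hG : IsMonomialAction G Ω p) :
    Module.End (MonoidAlgebra k G) (koszulComplexRep Ω p ρ).asModule :=
  asModuleEnd _ (koszulDifferential coordinateOperator) fun g =>
    commute_koszulRep_koszulDifferential _
      (semiconjBy_functionRep_coordinateOperator ρ hG (shiftSubOne_add_add p) g)
      (semiconjBy_functionRep_coordinateOperator ρ hG (A := normMatrix k p) (fun _ _ _ => rfl) g)

variable (Ω p) in
/-- The Higman operator on the Koszul complex given by a weight `w` on the points of
`Ω → ZMod p`. -/
noncomputable def koszulComplexHigman (w : (Ω → ZMod p) → k) :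
    Module.End k (koszulComplexRep Ω p ρ).asModule :=
  (koszulComplexRep Ω p ρ).asModuleEquiv.symm.conj
    (tensorOperator 1 1 (LinearMap.pi fun s => w s • LinearMap.proj s))

theorem koszulComplexD_koszulComplexD (hG : IsMonomialAction G Ω p)
    (y : (koszulComplexRep Ω p ρ).asModule) :
    koszulComplexD ρ hG (koszulComplexD ρ hG y) = 0 := by
  have hD : koszulDifferential (coordinateOperator (k := k) (Ω := Ω) (C := ZMod p) (M := M)) *
      koszulDifferential coordinateOperator = 0 :=
    koszulDifferential_mul_self _ fun _ _ h => commute_coordinateOperator h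
  exact LinearMap.congr_fun hD y

theorem isHigmanComplex_koszulComplex [Fintype G] (hG : IsMonomialAction G Ω p)
    {w : (Ω → ZMod p) → k} (hw : ∀ s, ∑ g : G, w (g • s) = 1) :
    IsHigmanComplex (Y := (koszulComplexRep Ω p ρ).asModule) (koszulComplexHigman Ω p ρ w)
      (koszulComplexD ρ hG) (koszulComplexDegree Ω p ρ) where
  isHigman := isHigman_asModule (sum_koszulRep_conj _ (sum_functionRep_conj ρ hw))
  higman_mem _ _ hy := (mem_koszulComplexDegree ρ).2 <|
    tensorOperator_mem_koszulDegree (shiftsDegree_one _) (shiftsDegree_one _) _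
      (by simpa using (mem_koszulComplexDegree ρ).1 hy)
  d_d := koszulComplexD_koszulComplexD ρ hG
  d_mem _ _ hy := (mem_koszulComplexDegree ρ).2 <|
    koszulDifferential_mem_koszulDegree _ ((mem_koszulComplexDegree ρ).1 hy)

theorem isChainOperator_symmetricOperator (hG : IsMonomialAction G Ω p) (w : (Ω → ZMod p) → k)
    {z : MvPolynomial.symmetricSubalgebra Ω k} {d : ℕ} (hz : z.1.IsHomogeneous d) :
    IsChainOperator (Y := (koszulComplexRep Ω p ρ).asModule) (koszulComplexHigman Ω p ρ w)
      (koszulComplexD ρ hG) (koszulComplexDegree Ω p ρ) (2 * d) (symmetricOperator Ω p ρ z) where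
  mem _ _ hy := (mem_koszulComplexDegree ρ).2 <|
    polynomialOperator_mem_koszulDegree hz ((mem_koszulComplexDegree ρ).1 hy)
  commute_d := commute_asModuleEnd _ _ (commute_polynomialOperator_koszulDifferential _ _)
  comm_higman := LinearMap.congr_fun (commute_tensorOperator (a := LinearMap.mulLeft k z.1)
    (.one_right _) (.one_left _) (.one_left _))

end KoszulComplex

section Annihilator

open scoped TensorProduct

variable {k Ω P : Type*} [Field k] [AddCommGroup P] [Module k P]

/-- The polynomials acting as zero on `f`. -/
noncomputable def koszulAnnihilator (f : KoszulModule k Ω P) : Ideal (MvPolynomial Ω k) where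
  carrier := {z | polynomialOperator k Ω P z f = 0}
  zero_mem' := LinearMap.ext fun x => by simp [polynomialOperator, tensorOperator]
  add_mem' {z w} hz hw := TensorProduct.ext' fun q x => by
    simpa [polynomialOperator, tensorOperator_apply, add_mul, TensorProduct.add_tmul] using
      congrArg₂ (· + ·) (LinearMap.congr_fun hz (q ⊗ₜ x)) (LinearMap.congr_fun hw (q ⊗ₜ x))
  smul_mem' a z hz := TensorProduct.ext' fun q x => by
    simpa [polynomialOperator, tensorOperator_apply, mul_left_comm, mul_assoc] using
      LinearMap.congr_fun hz ((a * q) ⊗ₜ x)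

theorem le_koszulAnnihilator_iff {f : KoszulModule k Ω P} {I : Ideal (MvPolynomial Ω k)} :
    I ≤ koszulAnnihilator f ↔ ∀ q ∈ I, ∀ x, f (q ⊗ₜ x) = 0 := by
  refine ⟨fun h q hq x => ?_, fun h z hz => TensorProduct.ext' fun q x => ?_⟩
  · simpa [polynomialOperator, tensorOperator_apply] using LinearMap.congr_fun (h hq) (1 ⊗ₜ x)
  · exact h _ (I.mul_mem_right q hz) x

attribute [local instance] MvPolynomial.gradedAlgebra in
theorem exists_polynomialOperator_eq {I : Ideal (MvPolynomial Ω k)}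
    (hI : I.IsHomogeneous (MvPolynomial.homogeneousSubmodule Ω k)) {z : MvPolynomial Ω k} {d : ℕ}
    (hz : z.IsHomogeneous d) (hzI : ∀ q, z * q ∈ I → q ∈ I) {n : ℤ} {y : KoszulModule k Ω P}
    (hy : y ∈ koszulDegree k Ω P n) (hyI : I ≤ koszulAnnihilator y) :
    ∃ x ∈ koszulDegree k Ω P (n + (2 * d : ℕ)), I ≤ koszulAnnihilator x ∧
      polynomialOperator k Ω P z x = y := by
  obtain ⟨r, hr_lt, hr_add, hrI, hrz⟩ := exists_graded_leftInverse hI hz hzI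
  rw [le_koszulAnnihilator_iff] at hyI
  have hr : ShiftsDegree (MvPolynomial.homogeneousSubmodule Ω k) (-d) r := fun i q hq => by
    obtain hi | hi := lt_or_ge i d
    · exact .inl (hr_lt i q hq hi)
    · obtain ⟨i, rfl⟩ := Nat.exists_eq_add_of_le' hi
      exact .inr ⟨i, by simp, hr_add i q hq⟩
  refine ⟨tensorOperator r 1 1 y, tensorOperator_mem_koszulDegree hr (shiftsDegree_one _) _
    (by simpa using hy), le_koszulAnnihilator_iff.2 fun q hq x => hyI _ (hrI q hq) x,
    TensorProduct.ext' fun q x => ?_⟩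
  have := hyI _ (hrz q) x
  rw [TensorProduct.sub_tmul, map_sub, sub_eq_zero] at this
  exact this

variable [Fintype Ω]

theorem eq_zero_of_mem_exteriorPower_of_card_lt {j : ℕ} (hj : Fintype.card Ω < j)
    {x : ExteriorAlgebra k (Ω → k)} (hx : x ∈ ⋀[k]^j (Ω → k)) : x = 0 := by
  have hfinrank : Module.finrank k (⋀[k]^j (Ω → k)) = 0 := by
    rw [exteriorPower.finrank_eq, Module.finrank_fintype_fun_eq_card, Nat.choose_eq_zero_of_lt hj]
  have := Module.finrank_zero_iff.1 hfinrank
  exact congrArg Subtype.val (Subsingleton.elim (⟨x, hx⟩ : ⋀[k]^j (Ω → k)) 0)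

theorem eq_zero_of_esymm_mem_koszulAnnihilator {n : ℤ} (hn : (Fintype.card Ω ^ 2 : ℕ) < n)
    {f : KoszulModule k Ω P} (hf : f ∈ koszulDegree k Ω P n)
    (hf0 : ∀ j < Fintype.card Ω, MvPolynomial.esymm Ω k (j + 1) ∈ koszulAnnihilator f) : f = 0 := by
  refine eq_zero_of_forall_homogeneous fun i j q hq x hx => ?_
  by_cases hij : (2 * i + j : ℤ) = n
  · obtain hj | hj := lt_or_ge (Fintype.card Ω) j
    · rw [eq_zero_of_mem_exteriorPower_of_card_lt hj hx, TensorProduct.tmul_zero, map_zero]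
    · refine le_koszulAnnihilator_iff.1 le_rfl _ (mem_of_isHomogeneous_of_choose_lt hf0 hq ?_) x
      rw [Nat.choose_two_right, Nat.mul_sub_one, ← sq]
      have := Nat.le_self_pow two_ne_zero (Fintype.card Ω)
      omega
  · exact hf i j q hq x hx hij

end Annihilator

section KoszulCoregular

variable {k G Ω M : Type*} [Field k] [Group G] [MulAction G Ω] {p : ℕ}
  [MulAction G (Ω → ZMod p)] [AddCommGroup M] [Module k M] (ρ : Representation k G M)

attribute [local instance] MvPolynomial.gradedAlgebra in
/-- The common kernel of symmetric operators consists of the elements annihilated by the ideal they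
generate, so regularity modulo that ideal is surjectivity on the kernel. -/
theorem isCoregular_symmetricOperator
    {zs : List (ℕ × MvPolynomial.symmetricSubalgebra Ω k)}
    (hzs : ∀ z ∈ zs, z.2.1.IsHomogeneous z.1) {I : Ideal (MvPolynomial Ω k)}
    (hI : I.IsHomogeneous (MvPolynomial.homogeneousSubmodule Ω k))
    (hreg : IsRegularModulo I (zs.map fun z => z.2.1))
    {W : ℤ → Submodule (MonoidAlgebra k G) (koszulComplexRep Ω p ρ).asModule}
    (hW : ∀ n f, f ∈ W n ↔ f ∈ koszulComplexDegree Ω p ρ n ∧ I ≤ koszulAnnihilator f) :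
    IsCoregular (Y := (koszulComplexRep Ω p ρ).asModule) W
      (zs.map fun z => (2 * z.1, symmetricOperator Ω p ρ z.2)) := by
  induction zs generalizing I W with
  | nil => trivial
  | cons z zs ih =>
    rw [List.forall_mem_cons] at hzs
    obtain ⟨hzI, hreg⟩ := hreg
    refine ⟨fun n y hy => ?_, ih hzs.2 (hI.sup (Ideal.homogeneous_span _ _ ?_)) hreg
      fun n f => ?_⟩
    · obtain ⟨hy, hyI⟩ := (hW n y).1 hy
      obtain ⟨x, hx, hxI, hzx⟩ := exists_polynomialOperator_eq hI hzs.1 hzI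
        ((mem_koszulComplexDegree ρ).1 hy) hyI
      exact ⟨x, (hW _ x).2 ⟨(mem_koszulComplexDegree ρ).2 hx, hxI⟩, hzx⟩
    · exact fun w hw => ⟨z.1, (Set.mem_singleton_iff.1 hw) ▸ hzs.1⟩
    · rw [sup_le_iff, Ideal.span_singleton_le_iff_mem, ← and_assoc, ← hW]
      rfl

variable [Fintype Ω]

variable (k Ω) in
/-- The elementary symmetric polynomials of positive degree, by decreasing degree. -/
noncomputable def esymmList : List (ℕ × MvPolynomial.symmetricSubalgebra Ω k) :=
  (List.range (Fintype.card Ω)).reverse.map fun j =>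
    (j + 1, ⟨MvPolynomial.esymm Ω k (j + 1), MvPolynomial.esymm_isSymmetric Ω k (j + 1)⟩)

theorem map_esymmList :
    ((esymmList k Ω).map fun z => z.2.1) =
      (List.range (Fintype.card Ω)).reverse.map fun j => MvPolynomial.esymm Ω k (j + 1) := by
  rw [esymmList, List.map_map]
  rfl

theorem isHomogeneous_of_mem_esymmList {z : ℕ × MvPolynomial.symmetricSubalgebra Ω k}
    (hz : z ∈ esymmList k Ω) : z.2.1.IsHomogeneous z.1 := by
  obtain ⟨j, -, rfl⟩ := List.mem_map.1 hz
  exact isHomogeneous_esymm _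

theorem pos_of_mem_esymmList {z : ℕ × MvPolynomial.symmetricSubalgebra Ω k}
    (hz : z ∈ esymmList k Ω) : 0 < z.1 := by
  obtain ⟨j, -, rfl⟩ := List.mem_map.1 hz
  exact j.succ_pos

theorem sum_esymmList :
    ((esymmList k Ω).map fun z => (2 * z.1 - 1 : ℤ)).sum = Fintype.card Ω ^ 2 := by
  rw [esymmList, List.map_map, List.map_reverse, List.sum_reverse]
  induction Fintype.card Ω with
  | zero => rfl
  | succ m ih =>
    rw [List.range_succ, List.map_append, List.sum_append, ih, List.map_singleton,
      List.sum_singleton, Function.comp_apply]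
    push_cast
    ring

attribute [local instance] MvPolynomial.gradedAlgebra in
theorem isCoregular_esymm :
    IsCoregular (Y := (koszulComplexRep Ω p ρ).asModule) (koszulComplexDegree Ω p ρ)
      ((esymmList k Ω).map fun z => (2 * z.1, symmetricOperator Ω p ρ z.2)) := by
  have hreg : IsRegularModulo ⊥ ((esymmList k Ω).map fun z => z.2.1) :=
    map_esymmList (k := k) (Ω := Ω) ▸ isRegularModulo_bot_esymm
  exact isCoregular_symmetricOperator ρ (fun z => isHomogeneous_of_mem_esymmList)
    (Ideal.IsHomogeneous.bot _) hreg fun n f => (and_iff_left bot_le).symm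

theorem eq_zero_of_forall_symmetricOperator_eq_zero {n : ℤ} (hn : (Fintype.card Ω ^ 2 : ℕ) < n)
    {y : (koszulComplexRep Ω p ρ).asModule} (hy : y ∈ koszulComplexDegree Ω p ρ n)
    (hy0 : ∀ z ∈ esymmList k Ω, symmetricOperator Ω p ρ z.2 y = 0) : y = 0 := by
  have hy0 (j : ℕ) (hj : j < Fintype.card Ω) :
      polynomialOperator k Ω ((Ω → ZMod p) → M) (MvPolynomial.esymm Ω k (j + 1)) y = 0 :=
    hy0 (j + 1, ⟨MvPolynomial.esymm Ω k (j + 1), MvPolynomial.esymm_isSymmetric Ω k (j + 1)⟩)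
      (List.mem_map_of_mem (List.mem_reverse.2 (List.mem_range.2 hj)))
  exact eq_zero_of_esymm_mem_koszulAnnihilator hn ((mem_koszulComplexDegree ρ).1 hy) hy0

variable [DecidableEq Ω] [NeZero p]

theorem isCoboundary_of_esymm [Fintype G] (hG : IsMonomialAction G Ω p)
    {w : (Ω → ZMod p) → k} (hw : ∀ s, ∑ g : G, w (g • s) = 1) {N : Type*} [AddCommGroup N]
    [Module k N] [Module (MonoidAlgebra k G) N] [IsScalarTower k (MonoidAlgebra k G) N]
    (hnil : ∀ z ∈ esymmList k Ω, IsCohomologicallyNilpotent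
      (Y := (koszulComplexRep Ω p ρ).asModule) N (koszulComplexD ρ hG)
      (koszulComplexDegree Ω p ρ) (2 * z.1) (symmetricOperator Ω p ρ z.2))
    {n : ℤ} (hn : 0 < n) {f : (koszulComplexRep Ω p ρ).asModule →ₗ[MonoidAlgebra k G] N}
    (hf : IsCocycle (Y := (koszulComplexRep Ω p ρ).asModule) (koszulComplexD ρ hG)
      (koszulComplexDegree Ω p ρ) n f) :
    IsCoboundary (Y := (koszulComplexRep Ω p ρ).asModule) (koszulComplexD ρ hG)
      (koszulComplexDegree Ω p ρ) n f := by
  set zs := (esymmList k Ω).map fun z => (2 * z.1, symmetricOperator Ω p ρ z.2) with hzs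
  have hcomm : zs.Pairwise fun z w => Commute z.2 w.2 := by
    rw [hzs, List.pairwise_map]
    exact List.pairwise_of_forall fun z w => commute_symmetricOperator ρ z.2 w.2
  have hchain : ∀ z ∈ zs, IsChainOperator (koszulComplexHigman Ω p ρ w) (koszulComplexD ρ hG)
      (koszulComplexDegree Ω p ρ) z.1 z.2 := by
    rw [hzs, List.forall_mem_map]
    exact fun z hz => isChainOperator_symmetricOperator ρ hG w (isHomogeneous_of_mem_esymmList hz)
  have hnil : ∀ z ∈ zs, IsCohomologicallyNilpotent N (koszulComplexD ρ hG)
      (koszulComplexDegree Ω p ρ) z.1 z.2 := by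
    rw [hzs, List.forall_mem_map]
    exact hnil
  refine isCoboundary_of_isCohomologicallyNilpotent hcomm (isHigmanComplex_koszulComplex ρ hG hw)
    hchain (isCoregular_esymm ρ) hnil (c := (Fintype.card Ω ^ 2 : ℕ))
    (fun m hm y hy hy0 => ?_) ?_ hf
  · exact eq_zero_of_forall_symmetricOperator_eq_zero ρ hm hy (List.forall_mem_map.1 hy0)
  · have := sum_esymmList (k := k) (Ω := Ω)
    rw [hzs, List.map_map]
    simp only [Function.comp_def]
    push_cast
    linarith

end KoszulCoregular

section ExactComplexes

universe u

variable {R : Type u} [Ring R] {P : ℕ → Type u} [∀ n, AddCommGroup (P n)] [∀ n, Module R (P n)]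
  {M N : Type u} [AddCommGroup M] [Module R M] [AddCommGroup N] [Module R N]
  (d : ∀ n, P (n + 1) →ₗ[R] P n) (hd : ∀ n, Function.Exact (d (n + 1)) (d n))

/-- An exact complex of modules as a chain complex in the category of modules. -/
noncomputable def exactChainComplex : ChainComplex (ModuleCat.{u} R) ℕ :=
  ChainComplex.of (fun n => ModuleCat.of R (P n)) (fun n => ModuleCat.ofHom (d n))
    fun n => ModuleCat.hom_ext (hd n).linearMap_comp_eq_zero

theorem exactChainComplex_d (n : ℕ) :
    (exactChainComplex d hd).d (n + 1) n = ModuleCat.ofHom (d n) :=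
  ChainComplex.of_d (fun n => ModuleCat.of R (P n)) (fun n => ModuleCat.ofHom (d n)) n

variable (ε : P 0 →ₗ[R] M) (hε : Function.Surjective ε) (hd_zero : Function.Exact (d 0) ε)

/-- The augmentation of an exact complex of modules as a map to a complex concentrated in degree
zero. -/
noncomputable def exactAugmentation :
    exactChainComplex d hd ⟶ (ChainComplex.single₀ _).obj (ModuleCat.of R M) :=
  (ChainComplex.toSingle₀Equiv _ _).symm ⟨ModuleCat.ofHom ε, by
    rw [exactChainComplex_d]
    exact ModuleCat.hom_ext hd_zero.linearMap_comp_eq_zero⟩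

theorem exactAugmentation_f_zero :
    (exactAugmentation d hd ε hd_zero).f 0 = ModuleCat.ofHom ε :=
  ChainComplex.toSingle₀Equiv_symm_apply_f_zero _ _

include hε in
theorem quasiIso_exactAugmentation : QuasiIso (exactAugmentation d hd ε hd_zero) where
  quasiIsoAt n := by
    cases n with
    | zero =>
      rw [ChainComplex.quasiIsoAt₀_iff, ShortComplex.quasiIso_iff_of_zeros' _ rfl rfl rfl,
        ShortComplex.moduleCat_exact_iff, ModuleCat.epi_iff_surjective]
      change (∀ x, (exactAugmentation d hd ε hd_zero).f 0 x = 0 →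
        ∃ y, (exactChainComplex d hd).d 1 0 y = x) ∧
        Function.Surjective ((exactAugmentation d hd ε hd_zero).f 0)
      rw [exactAugmentation_f_zero, exactChainComplex_d]
      exact ⟨fun x => (hd_zero x).1, hε⟩
    | succ n =>
      rw [quasiIsoAt_iff_exactAt' (hL := ChainComplex.exactAt_succ_single_obj ..),
        HomologicalComplex.exactAt_iff' _ (n + 2) (n + 1) n (by simp) (by simp),
        ShortComplex.moduleCat_exact_iff]
      change ∀ x, (exactChainComplex d hd).d (n + 1) n x = 0 →
        ∃ y, (exactChainComplex d hd).d (n + 2) (n + 1) y = x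
      rw [exactChainComplex_d, exactChainComplex_d]
      exact fun x => (hd n x).1

variable [∀ n, Module.Projective R (P n)]

/-- The projective resolution of `M` given by an exact augmented complex of projective modules. -/
noncomputable def projectiveResolutionOfExact : ProjectiveResolution (ModuleCat.of R M) where
  complex := exactChainComplex d hd
  projective n := ModuleCat.projective_of_categoryTheory_projective (ModuleCat.of R (P n))
  π := exactAugmentation d hd ε hd_zero
  quasiIso := quasiIso_exactAugmentation d hd ε hε hd_zero

include d hd ε hε hd_zero in
theorem subsingleton_ext_succ_iff_of_exact (k : Type u) [Field k] [Algebra k R] (n : ℕ) :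
    Subsingleton (((_root_.Ext k (ModuleCat R) (n + 1)).obj
        (Opposite.op (ModuleCat.of R M))).obj (ModuleCat.of R N)) ↔
      ∀ f : P (n + 1) →ₗ[R] N, f ∘ₗ d (n + 1) = 0 → ∃ g : P n →ₗ[R] N, g ∘ₗ d n = f := by
  let e := (projectiveResolutionOfExact d hd ε hε hd_zero).isoExt (R := k) (n + 1)
    (ModuleCat.of R N)
  rw [← ModuleCat.isZero_iff_subsingleton, e.isZero_iff,
    ← HomologicalComplex.exactAt_iff_isZero_homology,
    HomologicalComplex.exactAt_iff' _ n (n + 1) (n + 2) (by simp) (by simp),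
    ShortComplex.moduleCat_exact_iff]
  change (∀ f : ModuleCat.of R (P (n + 1)) ⟶ ModuleCat.of R N,
    (exactChainComplex d hd).d (n + 2) (n + 1) ≫ f = 0 →
    ∃ g : ModuleCat.of R (P n) ⟶ ModuleCat.of R N,
      (exactChainComplex d hd).d (n + 1) n ≫ g = f) ↔ _
  rw [exactChainComplex_d, exactChainComplex_d]
  refine ⟨fun h f hf => ?_, fun h f hf => ?_⟩
  · obtain ⟨g, hg⟩ := h (ModuleCat.ofHom f) (ModuleCat.hom_ext hf)
    exact ⟨g.hom, congrArg ModuleCat.Hom.hom hg⟩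
  · obtain ⟨g, hg⟩ := h f.hom (congrArg ModuleCat.Hom.hom hf)
    exact ⟨ModuleCat.ofHom g, ModuleCat.hom_ext hg⟩

end ExactComplexes

section HigmanResolutions

universe u

variable {k G Y N M : Type u} [Field k] [Group G] [Fintype G] [AddCommGroup Y] [Module k Y]
  [Module (MonoidAlgebra k G) Y] [IsScalarTower k (MonoidAlgebra k G) Y] [AddCommGroup M]
  [Module (MonoidAlgebra k G) M] {φ : Y →ₗ[k] Y} {D : Module.End (MonoidAlgebra k G) Y}
  {W : ℤ → Submodule (MonoidAlgebra k G) Y} {ε : Y →ₗ[MonoidAlgebra k G] M}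

/-- The augmentation `ε` makes the complex `(W, D)` in nonnegative degrees a resolution of `M`. -/
structure IsHigmanResolution (φ : Y →ₗ[k] Y) (D : Module.End (MonoidAlgebra k G) Y)
    (W : ℤ → Submodule (MonoidAlgebra k G) Y) (ε : Y →ₗ[MonoidAlgebra k G] M) : Prop extends
    IsHigmanComplex φ D W where
  surjOn : ∀ m, ∃ y ∈ W 0, ε y = m
  augmentation_d : ∀ y ∈ W 1, ε (D y) = 0
  exact_zero : ∀ y ∈ W 0, ε y = 0 → ∃ x ∈ W 1, D x = y
  exact_succ : ∀ n : ℕ, ∀ y ∈ W (n + 1), D y = 0 → ∃ x ∈ W (n + 1 + 1), D x = y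

theorem IsHigmanComplex.projective (h : IsHigmanComplex φ D W) (n : ℤ) :
    Module.Projective (MonoidAlgebra k G) (W n) := by
  obtain ⟨φW, hφW, -⟩ := h.isHigman.exists_restrict (W n) (h.higman_mem n)
  exact hφW.projective

variable [AddCommGroup N] [Module k N] [Module (MonoidAlgebra k G) N]
  [IsScalarTower k (MonoidAlgebra k G) N]

theorem IsHigmanComplex.exists_extend (h : IsHigmanComplex φ D W) (n : ℤ)
    (f : W n →ₗ[MonoidAlgebra k G] N) :
    ∃ v : Y →ₗ[MonoidAlgebra k G] N, v ∘ₗ (W n).subtype = f := by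
  obtain ⟨φW, hφW, hι⟩ := h.isHigman.exists_restrict (W n) (h.higman_mem n)
  exact hφW.exists_comp_eq _ hι f (by simp)

theorem IsHigmanResolution.subsingleton_ext_succ_iff (h : IsHigmanResolution φ D W ε) (n : ℕ) :
    Subsingleton (((_root_.Ext k (ModuleCat (MonoidAlgebra k G)) (n + 1)).obj
        (Opposite.op (ModuleCat.of (MonoidAlgebra k G) M))).obj
        (ModuleCat.of (MonoidAlgebra k G) N)) ↔
      ∀ f : Y →ₗ[MonoidAlgebra k G] N, IsCocycle D W (n + 1 : ℕ) f →
        IsCoboundary D W (n + 1 : ℕ) f := by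
  have (n : ℤ) := h.projective n
  let d (n : ℕ) : W (n + 1 : ℕ) →ₗ[MonoidAlgebra k G] W n := D.restrict (h.d_mem n)
  have hd (n : ℕ) : Function.Exact (d (n + 1)) (d n) := fun x => by
    refine ⟨fun hx => ?_, ?_⟩
    · obtain ⟨y, hy, hyx⟩ := h.exact_succ n x x.2 (congrArg Subtype.val hx)
      exact ⟨⟨y, hy⟩, Subtype.ext hyx⟩
    · rintro ⟨y, rfl⟩
      exact Subtype.ext (h.d_d y)
  have hd_zero : Function.Exact (d 0) (ε ∘ₗ (W (0 : ℕ)).subtype) := fun x => by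
    refine ⟨fun hx => ?_, ?_⟩
    · obtain ⟨y, hy, hyx⟩ := h.exact_zero x x.2 hx
      exact ⟨⟨y, hy⟩, Subtype.ext hyx⟩
    · rintro ⟨y, rfl⟩
      exact h.augmentation_d y y.2
  have hε : Function.Surjective (ε ∘ₗ (W (0 : ℕ)).subtype) := fun m => by
    obtain ⟨y, hy, hym⟩ := h.surjOn m
    exact ⟨⟨y, hy⟩, hym⟩
  rw [subsingleton_ext_succ_iff_of_exact (P := fun n : ℕ => W n) d hd _ hε hd_zero]
  refine ⟨fun h' f hf => ?_, fun h' f hf => ?_⟩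
  · obtain ⟨g, hg⟩ := h' (f ∘ₗ (W (n + 1 : ℕ)).subtype) (LinearMap.ext fun y => hf y y.2)
    obtain ⟨v, hv⟩ := h.exists_extend n g
    refine ⟨v, fun y hy => ?_⟩
    exact (LinearMap.congr_fun hg ⟨y, hy⟩).symm.trans
      (LinearMap.congr_fun hv (d n ⟨y, hy⟩)).symm
  · obtain ⟨v, rfl⟩ := h.exists_extend (n + 1 : ℕ) f
    obtain ⟨g, hg⟩ := h' v fun y hy => LinearMap.congr_fun hf ⟨y, hy⟩
    exact ⟨g ∘ₗ (W n).subtype, LinearMap.ext fun y => (hg y y.2).symm⟩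

end HigmanResolutions

section KoszulResolution

universe u

open Representation

variable {k G Ω M : Type u} [Field k] [Group G] [MulAction G Ω] [Fintype Ω] [DecidableEq Ω] {p : ℕ}
  [NeZero p] [MulAction G (Ω → ZMod p)] [AddCommGroup M] [Module k M] [Module (MonoidAlgebra k G) M]
  [IsScalarTower k (MonoidAlgebra k G) M]

variable (k G Ω M p) in
/-- The augmentation of the Koszul complex with coefficients in `M`. -/
noncomputable def koszulComplexAugmentation :
    (koszulComplexRep Ω p (ofModule' (k := k) (G := G) M)).asModule →ₗ[MonoidAlgebra k G] M :=
  MonoidAlgebra.equivariantOfLinearOfComm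
    (koszulAugmentation Ω (sumOverStates k Ω M p) ∘ₗ (asModuleEquiv _).toLinearMap)
    fun g f => by
      rw [single_smul, one_smul]
      exact koszulAugmentation_koszulRep _ (sumOverStates_functionRep _ g) f

theorem exists_koszulComplexD_eq (hG : IsMonomialAction G Ω p) {n : ℤ}
    {y : (koszulComplexRep Ω p (ofModule' (k := k) (G := G) M)).asModule}
    (hy : y ∈ koszulComplexDegree Ω p (ofModule' (k := k) (G := G) M) n)
    (hd : koszulComplexD (ofModule' (k := k) (G := G) M) hG y = 0)
    (hy0 : koszulComplexAugmentation k G Ω M p y = 0) :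
    ∃ x ∈ koszulComplexDegree Ω p (ofModule' (k := k) (G := G) M) (n + 1),
      koszulComplexD (ofModule' (k := k) (G := G) M) hG x = y := by
  obtain ⟨u, hu, hdu⟩ := exists_koszulDifferential_eq (k := k) (Ω := Ω)
    (τ := coordinateOperator (M := M))
    (fun _ _ h => commute_coordinateOperator h) sumOverStates_comp_shiftSubOne
    (fun _ => eq_zero_of_sumOverStates_eq_zero) ((mem_koszulComplexDegree _).1 hy) hd hy0
  exact ⟨u, (mem_koszulComplexDegree _).2 hu, hdu⟩

theorem isHigmanResolution_koszulComplex [Fintype G] (hG : IsMonomialAction G Ω p)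
    {w : (Ω → ZMod p) → k} (hw : ∀ s, ∑ g : G, w (g • s) = 1) :
    IsHigmanResolution (Y := (koszulComplexRep Ω p (ofModule' (k := k) (G := G) M)).asModule)
      (koszulComplexHigman Ω p _ w) (koszulComplexD _ hG) (koszulComplexDegree Ω p _)
      (koszulComplexAugmentation k G Ω M p) where
  __ := isHigmanComplex_koszulComplex _ hG hw
  surjOn m := by
    obtain ⟨f, hf, hfm⟩ := exists_koszulAugmentation_eq (Ω := Ω)
      (sumOverStates_surjective (k := k) (Ω := Ω) (p := p)) m
    exact ⟨f, (mem_koszulComplexDegree _).2 hf, hfm⟩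
  augmentation_d y _ := koszulAugmentation_koszulDifferential sumOverStates_comp_shiftSubOne y
  exact_zero y hy hy0 :=
    have hDy : koszulComplexD _ hG y ∈ koszulComplexDegree Ω p _ (-1) :=
      (isHigmanComplex_koszulComplex _ hG hw).d_mem (-1) y (by simpa using hy)
    exists_koszulComplexD_eq hG hy
      (eq_zero_of_mem_koszulDegree_of_neg (by simp) ((mem_koszulComplexDegree _).1 hDy)) hy0
  exact_succ n y hy hd := exists_koszulComplexD_eq hG hy hd <|
    koszulAugmentation_eq_zero _ (by omega) ((mem_koszulComplexDegree _).1 hy)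

end KoszulResolution

section Dichotomy

universe u

variable {k G Y N M : Type u} [Field k] [Group G] [Fintype G] [AddCommGroup Y] [Module k Y]
  [Module (MonoidAlgebra k G) Y] [IsScalarTower k (MonoidAlgebra k G) Y] [AddCommGroup M]
  [Module (MonoidAlgebra k G) M] [AddCommGroup N] [Module k N] [Module (MonoidAlgebra k G) N]
  [IsScalarTower k (MonoidAlgebra k G) N] {φ : Y →ₗ[k] Y} {D z : Module.End (MonoidAlgebra k G) Y}
  {W : ℤ → Submodule (MonoidAlgebra k G) Y} {ε : Y →ₗ[MonoidAlgebra k G] M} {d : ℕ}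

theorem IsHigmanResolution.exists_forall_nontrivial_ext (h : IsHigmanResolution φ D W ε)
    (hz : IsChainOperator φ D W d z) (hd : 0 < d) (hnil : ¬ IsCohomologicallyNilpotent N D W d z) :
    ∃ j < d, ∃ m₀ : ℕ, ∀ n ≥ m₀, n % d = j → Nontrivial
      (((_root_.Ext k (ModuleCat (MonoidAlgebra k G)) n).obj
        (Opposite.op (ModuleCat.of (MonoidAlgebra k G) M))).obj
        (ModuleCat.of (MonoidAlgebra k G) N)) := by
  unfold IsCohomologicallyNilpotent at hnil
  push Not at hnil
  obtain ⟨m, f, hf, hcob⟩ := hnil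
  have hmod : 0 ≤ m % d := Int.emod_nonneg m (by omega)
  have hlt : m % d < d := Int.emod_lt_of_pos m (by omega)
  refine ⟨(m % d).toNat, by omega, m.natAbs + 1, fun n hn hnj => ?_⟩
  have hmodEq : m ≡ n [ZMOD d] := by
    rw [Int.ModEq, ← Int.toNat_of_nonneg hmod, ← hnj, Int.natCast_mod]
  obtain ⟨a, ha⟩ := hmodEq.dvd
  obtain ⟨a, rfl⟩ := Int.eq_ofNat_of_zero_le
    (nonneg_of_mul_nonneg_right (by omega : 0 ≤ d * a) (by omega))
  obtain ⟨n, rfl⟩ := Nat.exists_eq_succ_of_ne_zero (by omega : n ≠ 0)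
  have hnm : ((n + 1 : ℕ) : ℤ) = m + (a * d : ℕ) := by
    push_cast at ha ⊢
    linarith
  rw [← not_subsingleton_iff_nontrivial, h.subsingleton_ext_succ_iff, hnm]
  exact fun hall => hcob a (hall _ (hf.comp (hz.pow a)))

theorem exists_prime_forall_natCast_ne_zero (k : Type*) [Field k] :
    ∃ p : ℕ, p.Prime ∧ ∀ n : ℕ, ¬ p ∣ n → (n : k) ≠ 0 := by
  obtain ⟨p, hp⟩ := CharP.exists k
  obtain hprime | rfl := CharP.char_is_prime_or_zero k p
  · exact ⟨p, hprime, fun n hn h => hn ((CharP.cast_eq_zero_iff k p n).1 h)⟩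
  · refine ⟨2, Nat.prime_two, fun n hn h => hn ?_⟩
    rw [zero_dvd_iff.1 ((CharP.cast_eq_zero_iff k 0 n).1 h)]
    exact dvd_zero 2

end Dichotomy

universe u

theorem stmt_13_general (k G M N : Type u) [Field k] [Group G] [Finite G] [AddCommGroup M]
    [Module (MonoidAlgebra k G) M] [AddCommGroup N] [Module (MonoidAlgebra k G) N] :
    (∀ n : ℕ, 0 < n → Subsingleton
      (((_root_.Ext k (ModuleCat (MonoidAlgebra k G)) n).obj
        (Opposite.op (ModuleCat.of (MonoidAlgebra k G) M))).obj
        (ModuleCat.of (MonoidAlgebra k G) N))) ∨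
    ∃ d : ℕ, 0 < d ∧ ∃ j < d, ∃ m₀ : ℕ, ∀ n ≥ m₀, n % d = j → Nontrivial
      (((_root_.Ext k (ModuleCat (MonoidAlgebra k G)) n).obj
        (Opposite.op (ModuleCat.of (MonoidAlgebra k G) M))).obj
        (ModuleCat.of (MonoidAlgebra k G) N)) := by
  classical
  have := Fintype.ofFinite G
  let _ : Module k M := Module.compHom M (algebraMap k (MonoidAlgebra k G))
  let _ : Module k N := Module.compHom N (algebraMap k (MonoidAlgebra k G))
  have : IsScalarTower k (MonoidAlgebra k G) M := .of_algebraMap_smul fun _ _ => rfl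
  have : IsScalarTower k (MonoidAlgebra k G) N := .of_algebraMap_smul fun _ _ => rfl
  obtain ⟨p, hp, hpk⟩ := exists_prime_forall_natCast_ne_zero k
  have : NeZero p := ⟨hp.ne_zero⟩
  obtain ⟨Ω, _, _, _, hG, hfree⟩ := exists_isMonomialAction G hp
  have := Fintype.ofFinite Ω
  obtain ⟨w, hw⟩ := exists_sum_smul_eq_one fun s => hpk _ (not_dvd_card_stabilizer hp hfree s)
  have hres := isHigmanResolution_koszulComplex (M := M) hG hw
  by_cases hnil : ∀ z ∈ esymmList k Ω, IsCohomologicallyNilpotent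
      (Y := (koszulComplexRep Ω p (Representation.ofModule' (k := k) (G := G) M)).asModule) N
      (koszulComplexD _ hG) (koszulComplexDegree Ω p _) (2 * z.1) (symmetricOperator Ω p _ z.2)
  · refine .inl fun n hn => ?_
    obtain ⟨n, rfl⟩ := Nat.exists_eq_succ_of_ne_zero hn.ne'
    exact (hres.subsingleton_ext_succ_iff n).2 fun f =>
      isCoboundary_of_esymm _ hG hw hnil (by omega)
  · push Not at hnil
    obtain ⟨z, hz, hnil⟩ := hnil
    have hpos : 0 < 2 * z.1 := Nat.mul_pos two_pos (pos_of_mem_esymmList hz)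
    have hchain := isChainOperator_symmetricOperator (Representation.ofModule' M) hG w
      (isHomogeneous_of_mem_esymmList hz)
    exact .inr ⟨2 * z.1, hpos, hres.exists_forall_nontrivial_ext hchain hpos hnil⟩

/-- Let `k` be a field of prime characteristic `p` and `G` a finite
group with `p ∣ |G|`.  Let `M, N` be finitely generated left modules over the group
algebra `kG`.  Then either `Ext_{kG}^n(M,N) = 0` for all `n > 0`, or there are integers
`d > 0`, `m₀` and `j` with `0 ≤ j < d` such that `Ext_{kG}^n(M,N) ≠ 0` for every
`n ≥ m₀` with `n ≡ j (mod d)`. -/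
theorem stmt_13 (k : Type) [Field k] (p : ℕ) (hp : p.Prime) [CharP k p]
    (G : Type) [Group G] [Fintype G] (hdvd : p ∣ Fintype.card G)
    (M N : Type) [AddCommGroup M] [Module (MonoidAlgebra k G) M]
    [Module.Finite (MonoidAlgebra k G) M]
    [AddCommGroup N] [Module (MonoidAlgebra k G) N]
    [Module.Finite (MonoidAlgebra k G) N] :
    (∀ n : ℕ, 0 < n → Subsingleton
      (((_root_.Ext k (ModuleCat (MonoidAlgebra k G)) n).obj
        (Opposite.op (ModuleCat.of (MonoidAlgebra k G) M))).obj
        (ModuleCat.of (MonoidAlgebra k G) N))) ∨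
    ∃ d : ℕ, 0 < d ∧ ∃ j < d, ∃ m₀ : ℕ, ∀ n ≥ m₀, n % d = j → Nontrivial
      (((_root_.Ext k (ModuleCat (MonoidAlgebra k G)) n).obj
        (Opposite.op (ModuleCat.of (MonoidAlgebra k G) M))).obj
        (ModuleCat.of (MonoidAlgebra k G) N)) :=
  stmt_13_general k G M N
end

section
/- Let k be the field with two elements and G = S_4 the symmetric group on four letters. Let M and N be finitely generated left kG-modules. If Ext_{kG}^m(M, N) ≠ 0 for some m > 0, then there exists an integer t with 0 ≤ t ≤ 5 and an integer m_0 such that Ext_{kG}^m(M, N) ≠ 0 for every m ≥ m_0 with m ≡ t (mod 6). -/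
open CategoryTheory

/-!
Let `k` be a field of characteristic two. There are exact sequences of `kS₄`-modules with one, two
and three middle terms that begin and end with the trivial module:
`0 ⟶ k ⟶ k[ℤˣ] ⟶ k ⟶ 0`, where `S₄` acts on `ℤˣ` through the sign;
`0 ⟶ k ⟶ k ⊗ 𝔽₄² ⟶ k[Fin 4] ⟶ k ⟶ 0`, where `S₄` is viewed as the group of semiaffine maps of `𝔽₄`;
and the augmented chain complex `0 ⟶ k ⟶ k[Fin 4] ⟶ k[Pair] ⟶ k[Fin 4] ⟶ k ⟶ 0` of the boundary of
a tetrahedron. Tensoring such a sequence with a module `X` makes `Ext(X, N)` periodic in positive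
degrees, with period `1`, `2` or `3`, as soon as the middle terms have no positive Ext groups into
`N`. If `X` is periodic and `Ext(X, N)` vanishes somewhere in each residue class modulo `6`, then it
vanishes in all positive degrees.

Suppose that `Ext(M, N)` vanishes in arbitrarily large degrees of every residue class modulo `6`.
Then so does `Ext(S, N)` for `S = k[ℤˣ] ⊗ M`, and `k[Fin 4] ⊗ S` is projective by Higman's
criterion. Hence `Q = k[Pair] ⊗ S` is an extension of two modules whose Ext groups into `N` vanish
in arbitrarily large degrees of every residue class too. The degree two class of the second sequence
acts nilpotently on the Ext groups of these two modules for degree reasons, hence also on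
`Ext(Q, N)`; but it acts injectively there, because the middle terms of that sequence become
projective after tensoring with `Q`. So `Ext(Q, N)` vanishes in positive degrees; then so does
`Ext(S, N)` by the tetrahedral sequence, and `Ext(M, N)` by the sign sequence.
-/

universe w u v

namespace ExtPeriodicity

open Limits Abelian MonoidalCategory

section Comparison

theorem subsingleton_ext_succ_iff {k : Type u} [Field k] {A : Type v} [Ring A] [Algebra k A]
    [Small.{w} A] (M N : ModuleCat.{w} A) (n : ℕ) :
    Subsingleton (((_root_.Ext k (ModuleCat.{w} A) (n + 1)).obj (Opposite.op M)).obj N) ↔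
      Subsingleton (Abelian.Ext.{w} M N (n + 1)) := by
  let P := projectiveResolution M
  rw [← ModuleCat.isZero_iff_subsingleton, (P.isoExt (R := k) (n + 1) N).isZero_iff,
    ← HomologicalComplex.exactAt_iff_isZero_homology,
    HomologicalComplex.exactAt_iff' _ n (n + 1) (n + 2) (by simp) (by simp),
    ShortComplex.moduleCat_exact_iff]
  refine ⟨fun h => subsingleton_of_forall_eq 0 fun x => ?_, fun h f hf => ?_⟩
  · obtain ⟨f, hf, rfl⟩ := P.extMk_surjective x (n + 2) rfl
    exact (P.extMk_eq_zero_iff f (n + 2) rfl hf n rfl).2 (h f hf)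
  · exact (P.extMk_eq_zero_iff f (n + 2) rfl hf n rfl).1 (Subsingleton.elim _ _)

theorem subsingleton_ext_map_iff {C D : Type*} [Category* C] [Category* D] [Abelian C] [Abelian D]
    [EnoughProjectives C] [HasExt.{v} C] [HasExt.{w} D] (F : C ⥤ D) [F.IsEquivalence] [F.Additive]
    (X Y : C) (n : ℕ) :
    Subsingleton (Abelian.Ext.{w} (F.obj X) (F.obj Y) n) ↔ Subsingleton (Abelian.Ext.{v} X Y n) :=
  (Equiv.ofBijective _
    (F.mapExt_bijective_of_preservesProjectiveObjects X Y n)).subsingleton_congr.symm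

variable {k : Type u} [Field k] {G : Type} [Group G]

instance enoughProjectives_rep : EnoughProjectives (Rep.{u} k G) :=
  Rep.equivalenceModuleMonoidAlgebra.enoughProjectives_iff.2 ModuleCat.enoughProjectives.{u}

instance hasExt_rep : HasExt.{u} (Rep.{u} k G) := hasExt_of_enoughProjectives _

instance : (Rep.ofModuleMonoidAlgebra (k := k) (G := G)).Additive where
  map_add := rfl

end Comparison

section Vanishing

variable {C : Type u} [Category.{v} C] [Abelian C] [HasExt.{w} C] {N X Y P : C}

/-- `X` is acyclic for `Ext(-, N)`: all Ext groups into `N` of positive degree vanish. -/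
def IsExtAcyclic (N X : C) : Prop := ∀ d ≥ 1, Subsingleton (Ext.{w} X N d)

/-- Every residue class mod 6 contains arbitrarily large degrees in which `Ext(X, N)` vanishes. -/
def IsExtSparse (N X : C) : Prop := ∀ d ≥ 1, ∃ j : ℕ, Subsingleton (Ext.{w} X N (d + 6 * j))

theorem isExtAcyclic_of_projective [Projective X] : IsExtAcyclic.{w} N X
  | d + 1, _ => Ext.subsingleton_of_projective X N d

theorem subsingleton_ext_of_iso (e : X ≅ Y) {d : ℕ} (h : Subsingleton (Ext.{w} X N d)) :
    Subsingleton (Ext.{w} Y N d) :=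
  subsingleton_of_forall_eq 0 fun y => by
    have hy : (Ext.mk₀ e.hom).comp y (zero_add d) = 0 := Subsingleton.elim _ _
    rw [← Ext.mk₀_id_comp y, ← e.inv_hom_id, ← Ext.mk₀_comp_mk₀_assoc, hy, Ext.comp_zero]

theorem IsExtAcyclic.of_iso (e : X ≅ Y) (h : IsExtAcyclic.{w} N X) : IsExtAcyclic.{w} N Y :=
  fun d hd => subsingleton_ext_of_iso e (h d hd)

theorem IsExtSparse.of_iso (e : X ≅ Y) (h : IsExtSparse.{w} N X) : IsExtSparse.{w} N Y :=
  fun d hd => (h d hd).imp fun _ => subsingleton_ext_of_iso e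

theorem IsExtSparse.isExtAcyclic_of_descent (hX : IsExtSparse.{w} N X) {p q : ℕ} (hpq : p * q = 6)
    (descent : ∀ d ≥ 1, Subsingleton (Ext.{w} X N (d + p)) → Subsingleton (Ext.{w} X N d)) :
    IsExtAcyclic.{w} N X := by
  have iterate (i d : ℕ) (hd : d ≥ 1) (h : Subsingleton (Ext.{w} X N (d + p * i))) :
      Subsingleton (Ext.{w} X N d) := by
    induction i with
    | zero => exact h
    | succ i ih => exact ih (descent _ (by omega) (by rwa [add_assoc, ← mul_add_one]))
  intro d hd
  obtain ⟨j, hj⟩ := hX d hd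
  exact iterate (q * j) d hd (by rwa [← mul_assoc, hpq])

/-- A short exact sequence `0 ⟶ X ⟶ P ⟶ Y ⟶ 0` with prescribed objects. -/
structure ShortExactSeq (X P Y : C) where
  f : X ⟶ P
  g : P ⟶ Y
  zero : f ≫ g = 0
  shortExact : (ShortComplex.mk f g zero).ShortExact

namespace ShortExactSeq

/-- The short exact sequence `0 ⟶ kernel g ⟶ P ⟶ Y ⟶ 0`. -/
noncomputable def ofEpi (g : P ⟶ Y) [Epi g] : ShortExactSeq (kernel g) P Y where
  f := kernel.ι g
  g := g
  zero := kernel.condition g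
  shortExact := { exact := ShortComplex.exact_kernel g }

/-- The left half `0 ⟶ X ⟶ P ⟶ kernel h ⟶ 0` of an exact sequence `0 ⟶ X ⟶ P ⟶ Y ⟶ Z`. -/
noncomputable def ofExact {Z : C} (f : X ⟶ P) (g : P ⟶ Y) (h : Y ⟶ Z) [Mono f] (fg : f ≫ g = 0)
    (gh : g ≫ h = 0) (exact_fg : (ShortComplex.mk f g fg).Exact)
    (exact_gh : (ShortComplex.mk g h gh).Exact) : ShortExactSeq X P (kernel h) where
  f := f
  g := kernel.lift h g gh
  zero := by rw [← cancel_mono (kernel.ι h)]; simpa using fg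
  shortExact :=
    { exact := by
        let φ : ShortComplex.mk f (kernel.lift h g gh)
            (by rw [← cancel_mono (kernel.ι h)]; simpa using fg) ⟶ ShortComplex.mk f g fg :=
          { τ₁ := 𝟙 _, τ₂ := 𝟙 _, τ₃ := kernel.ι h }
        exact (ShortComplex.exact_iff_of_epi_of_isIso_of_mono φ).2 exact_fg
      epi_g := (ShortComplex.exact_iff_epi_kernel_lift _).1 exact_gh }

/-- The class of a short exact sequence as a Yoneda extension. -/
noncomputable def extClass (E : ShortExactSeq X P Y) : Ext.{w} Y X 1 := E.shortExact.extClass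

theorem eq_zero_of_extClass_comp_eq_zero (E : ShortExactSeq X P Y) {d : ℕ}
    (hP : Subsingleton (Ext.{w} P N d))
    {x : Ext.{w} X N d} {d' : ℕ} {hd : 1 + d = d'} (hx : E.extClass.comp x hd = 0) : x = 0 := by
  obtain ⟨y, rfl⟩ := Ext.contravariant_sequence_exact₁ E.shortExact N x hd hx
  rw [Subsingleton.elim y 0, Ext.comp_zero]

theorem subsingleton_ext_left (E : ShortExactSeq X P Y) {d : ℕ}
    (hP : Subsingleton (Ext.{w} P N d))
    (hY : Subsingleton (Ext.{w} Y N (d + 1))) : Subsingleton (Ext.{w} X N d) :=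
  subsingleton_of_forall_eq 0 fun _ =>
    E.eq_zero_of_extClass_comp_eq_zero hP (hd := add_comm 1 d) (hY.elim _ _)

theorem subsingleton_ext_right (E : ShortExactSeq X P Y) {d : ℕ}
    (hP : Subsingleton (Ext.{w} P N (d + 1)))
    (hX : Subsingleton (Ext.{w} X N d)) : Subsingleton (Ext.{w} Y N (d + 1)) :=
  subsingleton_of_forall_eq 0 fun y => by
    obtain ⟨x, rfl⟩ :=
      Ext.contravariant_sequence_exact₃ E.shortExact N y (Subsingleton.elim _ _) (add_comm 1 d)
    rw [Subsingleton.elim x 0, Ext.comp_zero]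

theorem subsingleton_ext_middle (E : ShortExactSeq X P Y) {d : ℕ}
    (hX : Subsingleton (Ext.{w} X N d))
    (hY : Subsingleton (Ext.{w} Y N d)) : Subsingleton (Ext.{w} P N d) :=
  subsingleton_of_forall_eq 0 fun x => by
    obtain ⟨y, rfl⟩ :=
      Ext.contravariant_sequence_exact₂ E.shortExact N x (Subsingleton.elim _ _)
    rw [Subsingleton.elim y 0, Ext.comp_zero]

theorem isExtSparse_left (E : ShortExactSeq X P Y) (hP : IsExtAcyclic.{w} N P)
    (hY : IsExtSparse.{w} N Y) :
    IsExtSparse.{w} N X := fun d hd => by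
  obtain ⟨j, hj⟩ := hY (d + 1) (by omega)
  exact ⟨j, E.subsingleton_ext_left (hP _ (by omega)) (by rwa [add_right_comm])⟩

theorem isExtSparse_right (E : ShortExactSeq X P Y) (hP : IsExtAcyclic.{w} N P)
    (hX : IsExtSparse.{w} N X) :
    IsExtSparse.{w} N Y := fun d hd => by
  obtain ⟨j, hj⟩ := hX (d + 5) (by omega)
  refine ⟨j + 1, ?_⟩
  rw [show d + 6 * (j + 1) = d + 5 + 6 * j + 1 by ring]
  exact E.subsingleton_ext_right (hP _ (by omega)) hj

end ShortExactSeq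

theorem IsExtSparse.of_self_extension (D : ShortExactSeq X P X)
    (h : IsExtSparse.{w} N X) : IsExtSparse.{w} N P :=
  fun d hd => (h d hd).imp fun _ hj => D.subsingleton_ext_middle hj hj

theorem IsExtSparse.isExtAcyclic_of_self_extension (D : ShortExactSeq X P X)
    (hP : IsExtAcyclic.{w} N P) (h : IsExtSparse.{w} N X) : IsExtAcyclic.{w} N X :=
  h.isExtAcyclic_of_descent (one_mul 6) fun d hd => D.subsingleton_ext_left (hP d hd)

theorem IsExtSparse.isExtAcyclic_of_threefold_extension {K₁ K₂ P₀ P₁ P₂ : C}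
    (E₂ : ShortExactSeq X P₂ K₂) (E₁ : ShortExactSeq K₂ P₁ K₁) (E₀ : ShortExactSeq K₁ P₀ X)
    (hP₂ : IsExtAcyclic.{w} N P₂) (hP₁ : IsExtAcyclic.{w} N P₁) (hP₀ : IsExtAcyclic.{w} N P₀)
    (h : IsExtSparse.{w} N X) : IsExtAcyclic.{w} N X :=
  h.isExtAcyclic_of_descent (p := 3) (q := 2) rfl fun d hd hX =>
    E₂.subsingleton_ext_left (hP₂ d hd) <| E₁.subsingleton_ext_left (hP₁ _ (by omega)) <|
      E₀.subsingleton_ext_left (hP₀ _ (by omega)) hX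

end Vanishing

section Nilpotence

variable {C : Type u} [Category.{v} C] [Abelian C] [HasExt.{w} C] {N X Y P : C} {r d : ℕ}

/-- `IsKilledByPow z x` says that some power of the class `z`, acting by Yoneda product,
annihilates `x`. It is defined inductively to avoid casts between degrees. -/
inductive IsKilledByPow (z : Ext.{w} X X r) : ∀ {d : ℕ}, Ext.{w} X N d → Prop
  | zero (d : ℕ) : IsKilledByPow z (0 : Ext.{w} X N d)
  | step {d : ℕ} (x : Ext.{w} X N d) : IsKilledByPow z (z.comp x rfl) → IsKilledByPow z x

theorem isKilledByPow_of_subsingleton (z : Ext.{w} X X r) (n : ℕ)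
    (h : Subsingleton (Ext.{w} X N (d + r * n))) (x : Ext.{w} X N d) : IsKilledByPow z x := by
  induction n generalizing d with
  | zero =>
    have : Subsingleton (Ext.{w} X N d) := h
    exact Subsingleton.elim 0 x ▸ .zero d
  | succ n ih => exact .step x (ih (by rwa [show r + d + r * n = d + r * (n + 1) by ring]) _)

theorem IsExtSparse.isKilledByPow (h : IsExtSparse.{w} N X) (z : Ext.{w} X X 2) (hd : d ≥ 1)
    (x : Ext.{w} X N d) : IsKilledByPow z x := by
  obtain ⟨j, hj⟩ := h d hd
  exact isKilledByPow_of_subsingleton z (3 * j) (by rwa [← mul_assoc]) x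

/-- The degree-`r` endoclasses `zX` and `zY` are compatible along `f`. -/
def CommutesWith (zX : Ext.{w} X X r) (zY : Ext.{w} Y Y r) (f : X ⟶ Y) : Prop :=
  zX.comp (Ext.mk₀ f) (add_zero r) = (Ext.mk₀ f).comp zY (zero_add r)

theorem CommutesWith.comp_mk₀_comp {zX : Ext.{w} X X r} {zY : Ext.{w} Y Y r} {f : X ⟶ Y}
    (hf : CommutesWith zX zY f) (y : Ext.{w} Y N d) :
    zX.comp ((Ext.mk₀ f).comp y (zero_add d)) rfl =
      (Ext.mk₀ f).comp (zY.comp y rfl) (zero_add (r + d)) := by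
  rw [← Ext.comp_assoc_of_second_deg_zero, hf, Ext.comp_assoc _ _ _ (zero_add r) rfl (by omega)]

theorem IsKilledByPow.mk₀_comp {zX : Ext.{w} X X r} {zY : Ext.{w} Y Y r} {f : X ⟶ Y}
    (hf : CommutesWith zX zY f) {y : Ext.{w} Y N d} (hy : IsKilledByPow zY y) :
    IsKilledByPow zX ((Ext.mk₀ f).comp y (zero_add d)) := by
  induction hy with
  | zero d => rw [Ext.comp_zero]; exact .zero d
  | step y _ ih => exact .step _ (hf.comp_mk₀_comp y ▸ ih)

theorem IsKilledByPow.eq_zero {z : Ext.{w} X X r}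
    (hz : ∀ d ≥ 1, ∀ x : Ext.{w} X N d, z.comp x rfl = 0 → x = 0) (hd : d ≥ 1)
    {x : Ext.{w} X N d} (hx : IsKilledByPow z x) : x = 0 := by
  induction hx with
  | zero d => rfl
  | step x _ ih => exact hz _ hd x (ih (by omega))

theorem ShortExactSeq.isKilledByPow_middle (E : ShortExactSeq X P Y) {zX : Ext.{w} X X r}
    {zP : Ext.{w} P P r} {zY : Ext.{w} Y Y r} (hf : CommutesWith zX zP E.f)
    (hg : CommutesWith zP zY E.g) (hX : ∀ d ≥ 1, ∀ x : Ext.{w} X N d, IsKilledByPow zX x)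
    (hY : ∀ d ≥ 1, ∀ y : Ext.{w} Y N d, IsKilledByPow zY y) (hd : d ≥ 1) (p : Ext.{w} P N d) :
    IsKilledByPow zP p := by
  generalize hp : (Ext.mk₀ E.f).comp p (zero_add d) = x
  have hx : IsKilledByPow zX x := hX d hd x
  induction hx with
  | zero d =>
    obtain ⟨y, rfl⟩ := Ext.contravariant_sequence_exact₂ E.shortExact N p hp
    exact .mk₀_comp hg (hY d hd y)
  | step x _ ih =>
    subst hp
    exact .step p (ih (by omega) _ (hf.comp_mk₀_comp p).symm)

end Nilpotence

section Periodicity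

variable {C : Type u} [Category.{v} C] [Abelian C] [MonoidalCategory C] [MonoidalPreadditive C]
  {N X Y P I A B K : C}

/-- Tensoring with an object isomorphic to the unit does not change anything. -/
def tensorIsoOfUnit (e : I ≅ 𝟙_ C) (X : C) : I ⊗ X ≅ X := whiskerRightIso e X ≪≫ λ_ X

namespace ShortExactSeq

/-- Tensoring a short exact sequence on the left with an object isomorphic to the unit. -/
def tensorLeft (E : ShortExactSeq X P Y) (e : I ≅ 𝟙_ C) :
    ShortExactSeq (I ⊗ X) (I ⊗ P) (I ⊗ Y) where
  f := I ◁ E.f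
  g := I ◁ E.g
  zero := by rw [← whiskerLeft_comp, E.zero, MonoidalPreadditive.whiskerLeft_zero]
  shortExact := ShortComplex.shortExact_of_iso
    (ShortComplex.isoMk (tensorIsoOfUnit e X) (tensorIsoOfUnit e P) (tensorIsoOfUnit e Y)
      (by simp [tensorIsoOfUnit, whisker_exchange_assoc])
      (by simp [tensorIsoOfUnit, whisker_exchange_assoc])).symm E.shortExact

variable [∀ Z : C, PreservesFiniteLimits (MonoidalCategory.tensorRight Z)]
  [∀ Z : C, PreservesFiniteColimits (MonoidalCategory.tensorRight Z)]

/-- Tensoring a short exact sequence on the right. -/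
def tensorRight (E : ShortExactSeq X P Y) (Z : C) : ShortExactSeq (X ⊗ Z) (P ⊗ Z) (Y ⊗ Z) where
  f := E.f ▷ Z
  g := E.g ▷ Z
  zero := ((ShortComplex.mk _ _ E.zero).map (MonoidalCategory.tensorRight Z)).zero
  shortExact := E.shortExact.map_of_exact (MonoidalCategory.tensorRight Z)

variable [HasExt.{w} C]

theorem extClass_tensorRight_naturality (E : ShortExactSeq X P Y) {Z W : C} (f : Z ⟶ W) :
    (E.tensorRight Z).extClass.comp (Ext.mk₀ (X ◁ f)) (add_zero 1) =
      (Ext.mk₀ (Y ◁ f)).comp (E.tensorRight W).extClass (zero_add 1) :=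
  (ShortComplex.ShortExact.extClass_naturality (E.tensorRight Z).shortExact
    (E.tensorRight W).shortExact
    { τ₁ := X ◁ f, τ₂ := P ◁ f, τ₃ := Y ◁ f
      comm₁₂ := whisker_exchange E.f f
      comm₂₃ := whisker_exchange E.g f })

end ShortExactSeq

variable [∀ Z : C, PreservesFiniteLimits (tensorRight Z)]
  [∀ Z : C, PreservesFiniteColimits (tensorRight Z)] [HasExt.{w} C]

/-- The endoclass of degree two of `I ⊗ Z` obtained by tensoring the Yoneda class of a two-fold
extension `0 ⟶ I ⟶ A ⟶ B ⟶ I ⟶ 0` with `Z`. -/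
noncomputable def tensorClass (E : ShortExactSeq I A K) (F : ShortExactSeq K B I) (Z : C) :
    Ext.{w} (I ⊗ Z) (I ⊗ Z) 2 :=
  (F.tensorRight Z).extClass.comp (E.tensorRight Z).extClass rfl

theorem commutesWith_tensorClass (E : ShortExactSeq I A K) (F : ShortExactSeq K B I) {Z W : C}
    (f : Z ⟶ W) : CommutesWith (tensorClass.{w} E F Z) (tensorClass E F W) (I ◁ f) := by
  unfold CommutesWith tensorClass
  rw [Ext.comp_assoc_of_third_deg_zero, E.extClass_tensorRight_naturality,
    ← Ext.comp_assoc_of_second_deg_zero, F.extClass_tensorRight_naturality,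
    Ext.comp_assoc _ _ _ (zero_add 1) rfl (by omega)]

theorem eq_zero_of_tensorClass_comp_eq_zero (E : ShortExactSeq I A K) (F : ShortExactSeq K B I)
    {Z : C} (hA : IsExtAcyclic.{w} N (A ⊗ Z)) (hB : IsExtAcyclic.{w} N (B ⊗ Z)) {d : ℕ}
    (hd : d ≥ 1) {x : Ext.{w} (I ⊗ Z) N d} (hx : (tensorClass E F Z).comp x rfl = 0) : x = 0 := by
  unfold tensorClass at hx
  rw [Ext.comp_assoc _ _ _ rfl (show 1 + d = d + 1 from add_comm 1 d) (by omega)] at hx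
  exact (E.tensorRight Z).eq_zero_of_extClass_comp_eq_zero (hA d hd)
    ((F.tensorRight Z).eq_zero_of_extClass_comp_eq_zero (hB _ (by omega)) hx)

theorem isExtAcyclic_of_isExtSparse_tensor_ends {L R : C} (e : I ≅ 𝟙_ C)
    (E : ShortExactSeq I A K) (F : ShortExactSeq K B I) (D : ShortExactSeq L P R)
    (hA : IsExtAcyclic.{w} N (A ⊗ P)) (hB : IsExtAcyclic.{w} N (B ⊗ P))
    (hL : IsExtSparse.{w} N L) (hR : IsExtSparse.{w} N R) : IsExtAcyclic.{w} N P := by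
  refine .of_iso (tensorIsoOfUnit e P) fun d hd => subsingleton_of_forall_eq 0 fun x => ?_
  have killed {Z : C} (hZ : IsExtSparse.{w} N Z) (d : ℕ) (hd : d ≥ 1) (y : Ext.{w} (I ⊗ Z) N d) :
      IsKilledByPow (tensorClass E F Z) y :=
    (hZ.of_iso (tensorIsoOfUnit e Z).symm).isKilledByPow _ hd y
  exact ((D.tensorLeft e).isKilledByPow_middle (commutesWith_tensorClass E F D.f)
    (commutesWith_tensorClass E F D.g) (killed hL) (killed hR) hd x).eq_zero
    (fun d hd _ => eq_zero_of_tensorClass_comp_eq_zero E F hA hB hd) hd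

theorem isExtAcyclic_of_isExtSparse {S K₁ K₂ P₀ P₁ P₂ M : C} (e : I ≅ 𝟙_ C)
    (D : ShortExactSeq I S I) (E : ShortExactSeq I A K) (F : ShortExactSeq K B I)
    (E₂ : ShortExactSeq I P₂ K₂) (E₁ : ShortExactSeq K₂ P₁ K₁) (E₀ : ShortExactSeq K₁ P₀ I)
    (hP₀ : IsExtAcyclic.{w} N (P₀ ⊗ S ⊗ M)) (hP₂ : IsExtAcyclic.{w} N (P₂ ⊗ S ⊗ M))
    (hA : IsExtAcyclic.{w} N (A ⊗ P₁ ⊗ S ⊗ M)) (hB : IsExtAcyclic.{w} N (B ⊗ P₁ ⊗ S ⊗ M))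
    (hM : IsExtSparse.{w} N M) : IsExtAcyclic.{w} N M := by
  have hIM : IsExtSparse.{w} N (I ⊗ M) := hM.of_iso (tensorIsoOfUnit e M).symm
  have hSM : IsExtSparse.{w} N (S ⊗ M) := hIM.of_self_extension (D.tensorRight M)
  have hISM : IsExtSparse.{w} N (I ⊗ S ⊗ M) := hSM.of_iso (tensorIsoOfUnit e _).symm
  have hP₁ : IsExtAcyclic.{w} N (P₁ ⊗ S ⊗ M) :=
    isExtAcyclic_of_isExtSparse_tensor_ends e E F (E₁.tensorRight _) hA hB
      ((E₂.tensorRight _).isExtSparse_right hP₂ hISM) ((E₀.tensorRight _).isExtSparse_left hP₀ hISM)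
  have hISM' : IsExtAcyclic.{w} N (I ⊗ S ⊗ M) := hISM.isExtAcyclic_of_threefold_extension
    (E₂.tensorRight _) (E₁.tensorRight _) (E₀.tensorRight _) hP₂ hP₁ hP₀
  exact .of_iso (tensorIsoOfUnit e M) <| hIM.isExtAcyclic_of_self_extension (D.tensorRight M)
    (hISM'.of_iso (tensorIsoOfUnit e _))

end Periodicity

section Representations

variable {k : Type u} {G : Type v} [Field k] [Group G]

theorem rep_exact_iff (S : ShortComplex (Rep.{u} k G)) :
    S.Exact ↔ Function.Exact S.f.hom S.g.hom :=
  (S.exact_map_iff_of_faithful (forget₂ (Rep.{u} k G) (ModuleCat.{u} k))).symm.trans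
    (ShortComplex.ShortExact.moduleCat_exact_iff_function_exact _)

theorem preservesFiniteLimitsAndColimits_tensorRight_rep (Z : Rep.{u} k G) :
    PreservesFiniteLimits (tensorRight Z) ∧ PreservesFiniteColimits (tensorRight Z) :=
  ((Functor.exact_tfae (tensorRight Z)).out 1 3).1 fun S hS =>
    (rep_exact_iff _).2 (Module.Flat.rTensor_exact Z.V ((rep_exact_iff S).1 hS))

instance (Z : Rep.{u} k G) : PreservesFiniteLimits (tensorRight Z) :=
  (preservesFiniteLimitsAndColimits_tensorRight_rep Z).1

instance (Z : Rep.{u} k G) : PreservesFiniteColimits (tensorRight Z) :=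
  (preservesFiniteLimitsAndColimits_tensorRight_rep Z).2

end Representations

section Higman

open Representation

variable {k : Type u} {G : Type v} [Field k] [Group G]

theorem toLinearMap_comp_norm_linHom [Fintype G] {V X Y : Type*} [AddCommGroup V] [Module k V]
    [AddCommGroup X] [Module k X] [AddCommGroup Y] [Module k Y] {τ : Representation k G V}
    {ρ : Representation k G X} {σ : Representation k G Y} (f : IntertwiningMap ρ σ)
    (φ : V →ₗ[k] X) :
    f.toLinearMap ∘ₗ (linHom τ ρ).norm φ = (linHom τ σ).norm (f.toLinearMap ∘ₗ φ) := by
  ext v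
  simp [Representation.norm, linHom_apply, IntertwiningMap.isIntertwining]

theorem projective_of_norm_eq_one [Fintype G] (V : Rep.{u} k G) (φ : Module.End k V.V)
    (hφ : (linHom V.ρ V.ρ).norm φ = 1) : Projective V where
  factors {X E} f e _ := by
    obtain ⟨s, hs⟩ := e.hom.toLinearMap.exists_rightInverse_of_surjective
      (LinearMap.range_eq_top.2 ((Rep.epi_iff_surjective e).1 inferInstance))
    let lift : V ⟶ X := linHom.invariantsEquivRepHom V X
      ⟨(linHom V.ρ X.ρ).norm (s ∘ₗ f.hom.toLinearMap ∘ₗ φ), fun g => self_norm_apply _ g _⟩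
    refine ⟨lift, Rep.hom_ext (IntertwiningMap.ext ?_)⟩
    calc e.hom.toLinearMap ∘ₗ (linHom V.ρ X.ρ).norm (s ∘ₗ f.hom.toLinearMap ∘ₗ φ)
      _ = f.hom.toLinearMap ∘ₗ (linHom V.ρ V.ρ).norm φ := by
        rw [toLinearMap_comp_norm_linHom, toLinearMap_comp_norm_linHom, ← LinearMap.comp_assoc, hs,
          LinearMap.id_comp]
      _ = f.hom.toLinearMap := by rw [hφ, Module.End.one_eq_id, LinearMap.comp_id]

theorem tensorProduct_map_sum_left {V W ι : Type*} [AddCommGroup V] [Module k V] [AddCommGroup W]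
    [Module k W] (s : Finset ι) (φ : ι → Module.End k V) (ψ : Module.End k W) :
    TensorProduct.map (∑ i ∈ s, φ i) ψ = ∑ i ∈ s, TensorProduct.map (φ i) ψ :=
  LinearMap.map_sum₂ (TensorProduct.mapBilinear (.id k) V W V W) s φ ψ

theorem tensorProduct_map_sum_right {V W ι : Type*} [AddCommGroup V] [Module k V] [AddCommGroup W]
    [Module k W] (s : Finset ι) (φ : Module.End k V) (ψ : ι → Module.End k W) :
    TensorProduct.map φ (∑ i ∈ s, ψ i) = ∑ i ∈ s, TensorProduct.map φ (ψ i) :=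
  map_sum (TensorProduct.mapBilinear (.id k) V W V W φ) ψ s

/-- A decomposition of the identity of `W` into endomorphisms permuted by `G` in the same way as
the points of `Ω`; for idempotents this is a decomposition of `W` as a direct sum whose summands
are permuted by `G`. -/
structure EquivariantPartition (Ω : Type*) [Fintype Ω] [MulAction G Ω] (W : Rep.{u} k G) where
  proj : Ω → Module.End k W.V
  sum_proj : ∑ ω, proj ω = 1
  conj_proj (g : G) (ω : Ω) : linHom W.ρ W.ρ g (proj ω) = proj (g • ω)

theorem linHom_tensor_map {V W : Rep.{u} k G} (φ : Module.End k V.V) (ψ : Module.End k W.V)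
    (g : G) : linHom (V ⊗ W).ρ (V ⊗ W).ρ g (TensorProduct.map φ ψ) =
      TensorProduct.map (linHom V.ρ V.ρ g φ) (linHom W.ρ W.ρ g ψ) := by
  simp only [linHom_apply, TensorProduct.map_comp]
  rfl

namespace EquivariantPartition

variable {Ω Ω' : Type*} [Fintype Ω] [Fintype Ω'] [MulAction G Ω] [MulAction G Ω']
  {V W : Rep.{u} k G}

/-- The partition of `W ⊗ V` induced by one of `W`. -/
noncomputable def tensorRight (P : EquivariantPartition Ω W) (V : Rep.{u} k G) :
    EquivariantPartition Ω (W ⊗ V) where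
  proj ω := TensorProduct.map (P.proj ω) 1
  sum_proj := by
    rw [← tensorProduct_map_sum_left, P.sum_proj, TensorProduct.map_one]
  conj_proj g ω := by
    rw [linHom_tensor_map, P.conj_proj, linHom_apply, Module.End.one_eq_id, LinearMap.id_comp,
      ← Module.End.mul_eq_comp, ← map_mul, mul_inv_cancel, map_one, Module.End.one_eq_id]

/-- The partition of `V ⊗ W` into tensor products of the summands of `V` and of `W`. -/
noncomputable def tensor (P : EquivariantPartition Ω V) (Q : EquivariantPartition Ω' W) :
    EquivariantPartition (Ω × Ω') (V ⊗ W) where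
  proj ω := TensorProduct.map (P.proj ω.1) (Q.proj ω.2)
  sum_proj := by
    calc ∑ ω : Ω × Ω', TensorProduct.map (P.proj ω.1) (Q.proj ω.2)
      _ = TensorProduct.map (∑ ω, P.proj ω) (∑ ω, Q.proj ω) := by
        rw [tensorProduct_map_sum_left, Fintype.sum_prod_type]
        simp only [tensorProduct_map_sum_right]
      _ = 1 := by rw [P.sum_proj, Q.sum_proj, TensorProduct.map_one]
  conj_proj g ω := by rw [linHom_tensor_map, P.conj_proj, Q.conj_proj]; rfl

theorem projective_tensor [Fintype G] [DecidableEq Ω] (P : EquivariantPartition Ω W)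
    (φ : Module.End k V.V) (ω₀ : Ω) (hφ : ∀ ω, ∑ g : G with g • ω₀ = ω, linHom V.ρ V.ρ g φ = 1) :
    Projective (V ⊗ W) := by
  refine projective_of_norm_eq_one _ (TensorProduct.map φ (P.proj ω₀)) ?_
  calc (linHom (V ⊗ W).ρ (V ⊗ W).ρ).norm (TensorProduct.map φ (P.proj ω₀))
    _ = ∑ g, TensorProduct.map (linHom V.ρ V.ρ g φ) (P.proj (g • ω₀)) := by
      simp only [Representation.norm, LinearMap.sum_apply, linHom_tensor_map, P.conj_proj]
    _ = ∑ ω, ∑ g with g • ω₀ = ω, TensorProduct.map (linHom V.ρ V.ρ g φ) (P.proj ω) := by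
      rw [← Finset.sum_fiberwise _ (· • ω₀)]
      refine Finset.sum_congr rfl fun ω _ => Finset.sum_congr rfl fun g hg => ?_
      rw [(Finset.mem_filter.1 hg).2]
    _ = ∑ ω, TensorProduct.map 1 (P.proj ω) := by
      simp only [← tensorProduct_map_sum_left, hφ]
    _ = 1 := by
      rw [← tensorProduct_map_sum_right, P.sum_proj, TensorProduct.map_one]

end EquivariantPartition

end Higman

section MatrixRepresentations

variable {R : Type*} (k : Type u) [CommRing R] [Field k] [Algebra R k]

section LinearMaps

variable {l m n : Type} [Fintype n]

/-- The `k`-linear map given by a matrix with entries in a ring of scalars `R`. -/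
def matLin (A : Matrix m n R) : (n → k) →ₗ[k] (m → k) :=
  (A.map (algebraMap R k)).mulVecLin

theorem matLin_mul [Fintype m] (B : Matrix l m R) (A : Matrix m n R) :
    matLin k (B * A) = matLin k B ∘ₗ matLin k A := by
  rw [matLin, Matrix.map_mul, Matrix.mulVecLin_mul]; rfl

theorem matLin_add (A B : Matrix m n R) : matLin k (A + B) = matLin k A + matLin k B := by
  rw [matLin, Matrix.map_add _ (map_add _), Matrix.mulVecLin_add]; rfl

theorem matLin_zero : matLin k (0 : Matrix m n R) = 0 := by
  rw [matLin, Matrix.map_zero _ (map_zero _), Matrix.mulVecLin_zero]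

theorem matLin_one [DecidableEq n] : matLin k (1 : Matrix n n R) = 1 := by
  rw [matLin, Matrix.map_one _ (map_zero _) (map_one _), Matrix.mulVecLin_one]; rfl

theorem matLin_sum {ι : Type*} (s : Finset ι) (A : ι → Matrix m n R) :
    matLin k (∑ i ∈ s, A i) = ∑ i ∈ s, matLin k (A i) :=
  map_sum (⟨⟨matLin k, matLin_zero k⟩, matLin_add k⟩ : Matrix m n R →+ _) A s

end LinearMaps

variable {l m n : Type} [Fintype l] [Fintype m] [Fintype n] [DecidableEq l] [DecidableEq m]
  [DecidableEq n] {G : Type v} [Group G]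

/-- The action on `n → k` through matrices with entries in a ring of scalars `R`. -/
def matAction (ρ : G →* Matrix n n R) : Representation k G (n → k) where
  toFun g := matLin k (ρ g)
  map_one' := by rw [map_one, matLin_one]
  map_mul' g h := by rw [map_mul, matLin_mul]; rfl

/-- The object of `Rep k G` given by matrices with entries in a ring of scalars `R`. -/
abbrev matRep (ρ : G →* Matrix n n R) : Rep.{u} k G := Rep.of (matAction k ρ)

variable {k} {ρ : G →* Matrix n n R} {σ : G →* Matrix m m R} {τ : G →* Matrix l l R}

/-- The morphism of representations given by a matrix intertwining the two actions. -/
def matRepHom (A : Matrix m n R) (hA : ∀ g, σ g * A = A * ρ g) : matRep k ρ ⟶ matRep k σ :=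
  Rep.ofHom ⟨matLin k A, fun g => by
    change matLin k A ∘ₗ matLin k (ρ g) = matLin k (σ g) ∘ₗ matLin k A
    rw [← matLin_mul, ← matLin_mul, hA]⟩

theorem linHom_matRep_matLin (φ : Matrix n n R) (g : G) :
    Representation.linHom (matAction k ρ) (matAction k ρ) g (matLin k φ) =
      matLin k (ρ g * φ * ρ g⁻¹) := by
  rw [Representation.linHom_apply, matLin_mul, matLin_mul]; rfl

section

variable {A : Matrix m n R} {hA : ∀ g, σ g * A = A * ρ g} {B : Matrix l m R}
  {hB : ∀ g, τ g * B = B * σ g}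

theorem matRepHom_comp_eq_zero (h : B * A = 0) :
    matRepHom (k := k) A hA ≫ matRepHom B hB = 0 := by
  ext1
  apply Representation.IntertwiningMap.ext
  change matLin k B ∘ₗ matLin k A = 0
  rw [← matLin_mul, h, matLin_zero]

theorem mono_matRepHom {S : Matrix n m R} (h : S * A = 1) : Mono (matRepHom (k := k) A hA) := by
  have : Function.LeftInverse (matLin k S) (matLin k A) := fun x => by
    rw [← LinearMap.comp_apply, ← matLin_mul, h, matLin_one, Module.End.one_apply]
  exact (Rep.mono_iff_injective _).2 this.injective

theorem epi_matRepHom {S : Matrix n m R} (h : A * S = 1) : Epi (matRepHom (k := k) A hA) := by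
  have : Function.RightInverse (matLin k S) (matLin k A) := fun x => by
    rw [← LinearMap.comp_apply, ← matLin_mul, h, matLin_one, Module.End.one_apply]
  exact (Rep.epi_iff_surjective _).2 this.surjective

theorem exact_matRepHom (w : B * A = 0) {S : Matrix n m R} {U : Matrix m l R}
    (h : A * S + U * B = 1) :
    (ShortComplex.mk (matRepHom (k := k) A hA) (matRepHom B hB)
      (matRepHom_comp_eq_zero w)).Exact := by
  refine (rep_exact_iff _).2 fun (y : m → k) => ⟨fun hy => ⟨matLin k S y, ?_⟩, ?_⟩
  · replace hy : matLin k B y = 0 := hy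
    calc matLin k A (matLin k S y)
      _ = matLin k A (matLin k S y) + matLin k U (matLin k B y) := by rw [hy, map_zero, add_zero]
      _ = matLin k (A * S + U * B) y := by rw [matLin_add, matLin_mul, matLin_mul]; rfl
      _ = y := by rw [h, matLin_one, Module.End.one_apply]
  · rintro ⟨x : n → k, rfl⟩
    change (matLin k B ∘ₗ matLin k A) x = 0
    rw [← matLin_mul, w, matLin_zero, LinearMap.zero_apply]

end

end MatrixRepresentations

section PermutationMatrices

variable (R : Type*) (k : Type u) (G : Type v) (Ω : Type) [CommRing R] [Field k] [Algebra R k]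
  [Group G] [Fintype Ω] [DecidableEq Ω] [MulAction G Ω]

/-- The permutation matrices of the action of `G` on `Ω`. -/
def permMatrixRep : G →* Matrix Ω Ω R :=
  Matrix.permMatrixHom.comp (MulAction.toPermHom G Ω)

/-- The permutation representation of `G` on `Ω`, in matrix form. -/
abbrev permRep : Rep.{u} k G := matRep k (permMatrixRep R G Ω)

variable {R G Ω}

theorem permMatrixRep_conj_single (g : G) (ω : Ω) :
    permMatrixRep R G Ω g * Matrix.single ω ω 1 * permMatrixRep R G Ω g⁻¹ =
      Matrix.single (g • ω) (g • ω) 1 := by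
  simp only [permMatrixRep, MonoidHom.comp_apply, Matrix.permMatrixHom_apply,
    PEquiv.toMatrix_toPEquiv_mul, PEquiv.mul_toMatrix_toPEquiv, Matrix.submatrix_submatrix,
    map_inv, inv_inv]
  exact Matrix.submatrix_single_equiv (MulAction.toPerm g).symm (MulAction.toPerm g).symm ω ω 1

variable (R G Ω) in
/-- The partition of a permutation representation into the lines spanned by the basis vectors. -/
def EquivariantPartition.ofPerm : EquivariantPartition Ω (permRep R k G Ω) where
  proj ω := matLin k (Matrix.single ω ω (1 : R))
  sum_proj := by rw [← matLin_sum, Matrix.sum_single_one, matLin_one]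
  conj_proj g ω := by
    rw [← permMatrixRep_conj_single, ← linHom_matRep_matLin]

variable {k}

theorem EquivariantPartition.projective_matRep_tensor {n : Type} [Fintype n] [DecidableEq n]
    [Fintype G] {W : Rep.{u} k G} (P : EquivariantPartition Ω W) {ρ : G →* Matrix n n R}
    (φ : Matrix n n R) (ω₀ : Ω) (hφ : ∀ ω, ∑ g : G with g • ω₀ = ω, ρ g * φ * ρ g⁻¹ = 1) :
    Projective (matRep k ρ ⊗ W) :=
  P.projective_tensor (matLin k φ) ω₀ fun ω => by
    calc ∑ g : G with g • ω₀ = ω, (matAction k ρ).linHom (matAction k ρ) g (matLin k φ)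
      _ = matLin k (∑ g : G with g • ω₀ = ω, ρ g * φ * ρ g⁻¹) := by
        simp only [linHom_matRep_matLin, matLin_sum]
      _ = 1 := by rw [hφ, matLin_one]

variable (R k G)

/-- The trivial representation `k` in matrix form; unlike `𝟙_ (Rep k G)` it can be the source and
target of morphisms given by matrices. -/
abbrev unitRep : Rep.{u} k G := matRep k (1 : G →* Matrix Unit Unit R)

/-- The isomorphism of `unitRep` with the monoidal unit given by the coordinate on `Unit → k`. -/
def unitRepIso : unitRep R k G ≅ 𝟙_ (Rep.{u} k G) :=
  Rep.mkIso (.mk (LinearEquiv.funUnique Unit k k) fun g => by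
    simp only [matAction, MonoidHom.one_apply, matLin_one]
    rfl)

variable (Ω)

/-- The column vector of ones, the matrix of the diagonal map `k ⟶ k[Ω]`. -/
def onesColumn : Matrix Ω Unit R := Matrix.of fun _ _ => 1

/-- The row vector of ones, the matrix of the augmentation `k[Ω] ⟶ k`. -/
def onesRow : Matrix Unit Ω R := Matrix.of fun _ _ => 1

/-- The diagonal embedding of the trivial representation into a permutation representation. -/
def permDiagonal : unitRep R k G ⟶ permRep R k G Ω :=
  matRepHom (onesColumn R Ω) fun g => by
    simp only [permMatrixRep, MonoidHom.comp_apply, Matrix.permMatrixHom_apply,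
      PEquiv.toMatrix_toPEquiv_mul, MonoidHom.one_apply, Matrix.mul_one]
    rfl

/-- The augmentation of a permutation representation. -/
def permAugmentation : permRep R k G Ω ⟶ unitRep R k G :=
  matRepHom (onesRow R Ω) fun g => by
    simp only [permMatrixRep, MonoidHom.comp_apply, Matrix.permMatrixHom_apply,
      PEquiv.mul_toMatrix_toPEquiv, MonoidHom.one_apply, Matrix.one_mul]
    rfl

variable {R Ω} in
theorem single_mul_onesColumn (ω : Ω) : Matrix.single () ω (1 : R) * onesColumn R Ω = 1 := by
  ext
  simp [onesColumn]

variable {R Ω} in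
theorem onesRow_mul_single (ω : Ω) : onesRow R Ω * Matrix.single ω () (1 : R) = 1 := by
  ext
  simp [onesRow]

variable [Nonempty Ω]

instance : Mono (permDiagonal R k G Ω) :=
  mono_matRepHom (single_mul_onesColumn (Classical.arbitrary Ω))

instance : Epi (permAugmentation R k G Ω) :=
  epi_matRepHom (onesRow_mul_single (Classical.arbitrary Ω))

end PermutationMatrices

section SymmetricGroupFour

local notation "S₄" => Equiv.Perm (Fin 4)
local notation "𝔽₂" => ZMod 2

/-- The two-element subsets of `Fin 4`, which label the edges of a tetrahedron. -/
abbrev Pair : Type := Set.powersetCard (Fin 4) 2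

-- Mathlib's instance does not reduce in the kernel.
local instance : Fintype Pair :=
  Fintype.subtype (Finset.powersetCard 2 Finset.univ) fun s => by simp [Set.powersetCard.mem_iff]

local instance : MulAction S₄ ℤˣ := MulAction.compHom ℤˣ Equiv.Perm.sign

/-- The points `0, 1, 2, 3` stand for the elements `0, 1, ω, ω²` of `𝔽₄`, so that `S₄` is the group
of semiaffine maps of `𝔽₄`. The entry `(i, j)` is `v(i, j) = (i + j, (i + j) * i ^ 2)` in `𝔽₄²`, in
coordinates with respect to the basis `v(0, 1), v(1, 0), v(0, 2), v(2, 1)` over `𝔽₂`. -/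
def affineVector : Fin 4 → Fin 4 → Fin 4 → 𝔽₂ :=
  ![![![0, 0, 0, 0], ![1, 0, 0, 0], ![0, 0, 1, 0], ![1, 0, 1, 0]],
    ![![0, 1, 0, 0], ![0, 0, 0, 0], ![1, 1, 0, 1], ![1, 0, 0, 1]],
    ![![1, 1, 1, 0], ![0, 0, 0, 1], ![0, 0, 0, 0], ![1, 1, 1, 1]],
    ![![0, 1, 1, 0], ![0, 1, 0, 1], ![0, 0, 1, 1], ![0, 0, 0, 0]]]

/-- The pairs `(i, j)` for which the vectors `v(i, j)` are the chosen basis of `𝔽₄²`. -/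
def basisPair : Fin 4 → Fin 4 × Fin 4 := ![(0, 1), (1, 0), (0, 2), (2, 1)]

/-- The matrix of the linear map with `v(i, j) ↦ v(g i, g j)`. -/
def affineMatrix (g : S₄) : Matrix (Fin 4) (Fin 4) 𝔽₂ :=
  Matrix.of fun i s => affineVector (g (basisPair s).1) (g (basisPair s).2) i

theorem affineMatrix_mulVec : ∀ (g : S₄) (i j : Fin 4), i ≠ j →
    (affineMatrix g).mulVec (affineVector i j) = affineVector (g i) (g j) := by
  decide +kernel

theorem basisPair_ne : ∀ s, (basisPair s).1 ≠ (basisPair s).2 := by decide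

/-- The four-dimensional representation of `S₄` on `𝔽₄²` that permutes the vectors `v(i, j)`. -/
def affineRep : S₄ →* Matrix (Fin 4) (Fin 4) 𝔽₂ where
  toFun := affineMatrix
  map_one' := by decide +kernel
  map_mul' g h := by
    ext i s
    exact (congrFun (affineMatrix_mulVec g _ _ (h.injective.ne (basisPair_ne s))) i).symm

/-- The invariant vector `v(i, j) + v(j, i)`, which is `(0, 1)` in `𝔽₄²`. -/
def affineInvariant : Matrix (Fin 4) Unit 𝔽₂ :=
  Matrix.of fun s _ => affineVector 0 1 s + affineVector 1 0 s

/-- The matrix of the map sending `v(i, j)` to the sum of the two points other than `i` and `j`. -/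
def affineToPoints : Matrix (Fin 4) (Fin 4) 𝔽₂ :=
  Matrix.of fun l s => if l = (basisPair s).1 ∨ l = (basisPair s).2 then 0 else 1

/-- The boundary of the 2-simplices of a tetrahedron, indexed by their opposite vertices. -/
def faceBoundary : Matrix Pair (Fin 4) 𝔽₂ := Matrix.of fun s l => if l ∈ s.1 then 0 else 1

/-- The boundary of the edges of a tetrahedron. -/
def edgeBoundary : Matrix (Fin 4) Pair 𝔽₂ := Matrix.of fun i s => if i ∈ s.1 then 1 else 0

/-- The cone with apex `0` on the vertices of a tetrahedron. -/
def vertexCone : Matrix Pair (Fin 4) 𝔽₂ :=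
  Matrix.of fun s i => if i ≠ 0 ∧ 0 ∈ s.1 ∧ i ∈ s.1 then 1 else 0

/-- The cone with apex `0` on the edges of a tetrahedron. -/
def edgeCone : Matrix (Fin 4) Pair 𝔽₂ :=
  Matrix.of fun l s => if 0 ∉ s.1 ∧ l ∉ s.1 ∧ l ≠ 0 then 1 else 0

theorem affineRep_mul_affineInvariant :
    ∀ g, affineRep g * affineInvariant = affineInvariant * (1 : S₄ →* Matrix Unit Unit 𝔽₂) g := by
  decide +kernel

theorem permMatrixRep_mul_affineToPoints :
    ∀ g, permMatrixRep 𝔽₂ S₄ (Fin 4) g * affineToPoints = affineToPoints * affineRep g := by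
  decide +kernel

theorem permMatrixRep_mul_faceBoundary : ∀ g, permMatrixRep 𝔽₂ S₄ Pair g * faceBoundary =
    faceBoundary * permMatrixRep 𝔽₂ S₄ (Fin 4) g := by
  decide +kernel

theorem permMatrixRep_mul_edgeBoundary : ∀ g, permMatrixRep 𝔽₂ S₄ (Fin 4) g * edgeBoundary =
    edgeBoundary * permMatrixRep 𝔽₂ S₄ Pair g := by
  decide +kernel

theorem affineToPoints_mul_affineInvariant : affineToPoints * affineInvariant = 0 := by
  decide +kernel

theorem onesRow_mul_affineToPoints : onesRow 𝔽₂ (Fin 4) * affineToPoints = 0 := by decide +kernel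

theorem faceBoundary_mul_onesColumn : faceBoundary * onesColumn 𝔽₂ (Fin 4) = 0 := by
  decide +kernel

theorem edgeBoundary_mul_faceBoundary : edgeBoundary * faceBoundary = 0 := by decide +kernel

theorem onesRow_mul_edgeBoundary : onesRow 𝔽₂ (Fin 4) * edgeBoundary = 0 := by decide +kernel

theorem onesColumn_mul_single_add_edgeCone_mul_faceBoundary :
    onesColumn 𝔽₂ (Fin 4) * Matrix.single () (0 : Fin 4) (1 : 𝔽₂) + edgeCone * faceBoundary =
      1 := by
  decide +kernel

theorem faceBoundary_mul_edgeCone_add_vertexCone_mul_edgeBoundary :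
    faceBoundary * edgeCone + vertexCone * edgeBoundary = 1 := by
  decide +kernel

theorem edgeBoundary_mul_vertexCone_add_single_mul_onesRow :
    edgeBoundary * vertexCone + Matrix.single (0 : Fin 4) () (1 : 𝔽₂) * onesRow 𝔽₂ (Fin 4) = 1 := by
  decide +kernel

variable (k : Type u) [Field k] [Algebra 𝔽₂ k]

/-- The extension of the trivial representation by itself given by the sign character. -/
def signExtension :
    ShortExactSeq (unitRep 𝔽₂ k S₄) (permRep 𝔽₂ k S₄ ℤˣ) (unitRep 𝔽₂ k S₄) where
  f := permDiagonal 𝔽₂ k S₄ ℤˣ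
  g := permAugmentation 𝔽₂ k S₄ ℤˣ
  zero := matRepHom_comp_eq_zero (by decide +kernel)
  shortExact :=
    { exact := exact_matRepHom (by decide +kernel) (S := Matrix.single () 1 1)
        (U := Matrix.single (-1) () 1) (by decide +kernel) }

/-- The inclusion of the invariant vector of `affineRep`. -/
def affineInvariantHom : unitRep 𝔽₂ k S₄ ⟶ matRep k affineRep :=
  matRepHom affineInvariant affineRep_mul_affineInvariant

instance : Mono (affineInvariantHom k) :=
  mono_matRepHom (S := Matrix.single () 1 1) (by decide +kernel)

/-- The left half of the exact sequence `0 ⟶ k ⟶ k ⊗ 𝔽₄² ⟶ k[Fin 4] ⟶ k ⟶ 0`. -/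
noncomputable def affineExtension : ShortExactSeq (unitRep 𝔽₂ k S₄) (matRep k affineRep)
    (kernel (permAugmentation 𝔽₂ k S₄ (Fin 4))) :=
  .ofExact (affineInvariantHom k) (matRepHom affineToPoints permMatrixRep_mul_affineToPoints)
    (permAugmentation 𝔽₂ k S₄ (Fin 4))
    (matRepHom_comp_eq_zero affineToPoints_mul_affineInvariant)
    (matRepHom_comp_eq_zero onesRow_mul_affineToPoints)
    (exact_matRepHom affineToPoints_mul_affineInvariant (S := Matrix.single () 1 1)
      (U := !![0, 0, 1, 0; 0, 0, 0, 0; 0, 1, 0, 0; 0, 1, 1, 1]) (by decide +kernel))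
    (exact_matRepHom onesRow_mul_affineToPoints
      (S := !![0, 0, 0, 0; 0, 0, 1, 0; 0, 1, 0, 0; 0, 1, 1, 1])
      (U := Matrix.single 0 () 1) (by decide +kernel))

/-- The boundary map from the edges to the vertices of a tetrahedron. -/
def edgeBoundaryHom : permRep 𝔽₂ k S₄ Pair ⟶ permRep 𝔽₂ k S₄ (Fin 4) :=
  matRepHom edgeBoundary permMatrixRep_mul_edgeBoundary

/-- The left third of the augmented chain complex of the boundary of a tetrahedron. -/
noncomputable def faceExtension : ShortExactSeq (unitRep 𝔽₂ k S₄) (permRep 𝔽₂ k S₄ (Fin 4))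
    (kernel (edgeBoundaryHom k)) :=
  .ofExact (permDiagonal 𝔽₂ k S₄ (Fin 4)) (matRepHom faceBoundary permMatrixRep_mul_faceBoundary)
    (edgeBoundaryHom k) (matRepHom_comp_eq_zero faceBoundary_mul_onesColumn)
    (matRepHom_comp_eq_zero edgeBoundary_mul_faceBoundary)
    (exact_matRepHom faceBoundary_mul_onesColumn
      onesColumn_mul_single_add_edgeCone_mul_faceBoundary)
    (exact_matRepHom edgeBoundary_mul_faceBoundary
      faceBoundary_mul_edgeCone_add_vertexCone_mul_edgeBoundary)

/-- The middle third of the augmented chain complex of the boundary of a tetrahedron. -/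
noncomputable def edgeExtension : ShortExactSeq (kernel (edgeBoundaryHom k))
    (permRep 𝔽₂ k S₄ Pair) (kernel (permAugmentation 𝔽₂ k S₄ (Fin 4))) :=
  .ofExact (kernel.ι (edgeBoundaryHom k)) (edgeBoundaryHom k) (permAugmentation 𝔽₂ k S₄ (Fin 4))
    (kernel.condition _) (matRepHom_comp_eq_zero onesRow_mul_edgeBoundary)
    (ShortComplex.exact_kernel _)
    (exact_matRepHom onesRow_mul_edgeBoundary edgeBoundary_mul_vertexCone_add_single_mul_onesRow)

variable {k} (M : Rep.{u} k S₄)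

instance projective_points_tensor_sign_tensor :
    Projective (permRep 𝔽₂ k S₄ (Fin 4) ⊗ permRep 𝔽₂ k S₄ ℤˣ ⊗ M) :=
  ((EquivariantPartition.ofPerm 𝔽₂ k S₄ ℤˣ).tensorRight M).projective_matRep_tensor
    (Matrix.single 0 0 1) 1 (by decide +kernel)

/-- The partition of `k[Pair] ⊗ k[ℤˣ] ⊗ M` indexed by pairs and signs. -/
noncomputable def pairSignPartition :
    EquivariantPartition (Pair × ℤˣ) (permRep 𝔽₂ k S₄ Pair ⊗ permRep 𝔽₂ k S₄ ℤˣ ⊗ M) :=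
  (EquivariantPartition.ofPerm 𝔽₂ k S₄ Pair).tensor
    ((EquivariantPartition.ofPerm 𝔽₂ k S₄ ℤˣ).tensorRight M)

/-- The pair `{0, 1}` with sign `1`; over the group algebra of its stabilizer
`{1, (0 1)(2 3)}`, both `k[Fin 4]` and `k ⊗ 𝔽₄²` are free. -/
def basePairSign : Pair × ℤˣ := (⟨{0, 1}, rfl⟩, 1)

instance projective_affine_tensor_pairs_tensor_sign_tensor :
    Projective (matRep k affineRep ⊗ permRep 𝔽₂ k S₄ Pair ⊗ permRep 𝔽₂ k S₄ ℤˣ ⊗ M) :=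
  (pairSignPartition M).projective_matRep_tensor (Matrix.single 1 1 1 + Matrix.single 2 2 1)
    basePairSign (by decide +kernel)

instance projective_points_tensor_pairs_tensor_sign_tensor :
    Projective (permRep 𝔽₂ k S₄ (Fin 4) ⊗ permRep 𝔽₂ k S₄ Pair ⊗ permRep 𝔽₂ k S₄ ℤˣ ⊗ M) :=
  (pairSignPartition M).projective_matRep_tensor (Matrix.single 1 1 1 + Matrix.single 3 3 1)
    basePairSign (by decide +kernel)

end SymmetricGroupFour

theorem isExtAcyclic_of_isExtSparse_perm_fin_four {k : Type u} [Field k] [CharP k 2]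
    {N M : Rep.{u} k (Equiv.Perm (Fin 4))} (hM : IsExtSparse.{u} N M) : IsExtAcyclic.{u} N M :=
  letI := ZMod.algebra k 2
  isExtAcyclic_of_isExtSparse (unitRepIso (ZMod 2) k _) (signExtension k) (affineExtension k)
    (.ofEpi _) (faceExtension k) (edgeExtension k) (.ofEpi _) isExtAcyclic_of_projective
    isExtAcyclic_of_projective isExtAcyclic_of_projective isExtAcyclic_of_projective hM

theorem subsingleton_ext_moduleCat_iff {k : Type u} [Field k] {G : Type} [Group G]
    (M N : ModuleCat.{u} (MonoidAlgebra k G)) (n : ℕ) :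
    Subsingleton (((_root_.Ext k (ModuleCat.{u} (MonoidAlgebra k G)) (n + 1)).obj
      (Opposite.op M)).obj N) ↔
      Subsingleton (Abelian.Ext.{u} (Rep.ofModuleMonoidAlgebra.obj M)
        (Rep.ofModuleMonoidAlgebra.obj N) (n + 1)) :=
  (subsingleton_ext_succ_iff M N n).trans (subsingleton_ext_map_iff _ M N (n + 1)).symm

end ExtPeriodicity

open ExtPeriodicity in
theorem stmt_14_general {k : Type u} [Field k] [CharP k 2] (M N : Type u) [AddCommGroup M]
    [Module (MonoidAlgebra k (Equiv.Perm (Fin 4))) M]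
    [AddCommGroup N] [Module (MonoidAlgebra k (Equiv.Perm (Fin 4))) N]
    (hm : ∃ m : ℕ, 0 < m ∧ Nontrivial
      (((_root_.Ext k (ModuleCat (MonoidAlgebra k (Equiv.Perm (Fin 4)))) m).obj
        (Opposite.op (ModuleCat.of (MonoidAlgebra k (Equiv.Perm (Fin 4))) M))).obj
        (ModuleCat.of (MonoidAlgebra k (Equiv.Perm (Fin 4))) N))) :
    ∃ t : ℕ, t ≤ 5 ∧ ∃ m₀ : ℕ, ∀ m ≥ m₀, m % 6 = t → Nontrivial
      (((_root_.Ext k (ModuleCat (MonoidAlgebra k (Equiv.Perm (Fin 4)))) m).obj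
        (Opposite.op (ModuleCat.of (MonoidAlgebra k (Equiv.Perm (Fin 4))) M))).obj
        (ModuleCat.of (MonoidAlgebra k (Equiv.Perm (Fin 4))) N)) := by
  by_contra! vanishing
  have sparse : IsExtSparse.{u}
      (Rep.ofModuleMonoidAlgebra.obj (.of (MonoidAlgebra k (Equiv.Perm (Fin 4))) N))
      (Rep.ofModuleMonoidAlgebra.obj (.of (MonoidAlgebra k (Equiv.Perm (Fin 4))) M)) := by
    rintro (_ | d) hd
    · contradiction
    obtain ⟨m, hm, hmod, hsub⟩ := vanishing ((d + 1) % 6) (by omega) (d + 1)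
    obtain ⟨j, rfl⟩ : ∃ j, m = (d + 6 * j) + 1 := ⟨(m - (d + 1)) / 6, by omega⟩
    exact ⟨j, add_right_comm d 1 (6 * j) ▸ (subsingleton_ext_moduleCat_iff _ _ _).1 hsub⟩
  obtain ⟨_ | m, hpos, hnontrivial⟩ := hm
  · contradiction
  · exact not_subsingleton_iff_nontrivial.2 hnontrivial <| (subsingleton_ext_moduleCat_iff _ _ m).2
      (isExtAcyclic_of_isExtSparse_perm_fin_four sparse (m + 1) (Nat.succ_pos m))

/-- Let `k = 𝔽₂` and `G = S₄` the symmetric group on four letters, and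
let `M, N` be finitely generated left `kG`-modules.  If `Ext_{kG}^m(M,N) ≠ 0` for some
`m > 0`, then there are integers `t` with `0 ≤ t ≤ 5` and `m₀` such that
`Ext_{kG}^m(M,N) ≠ 0` for every `m ≥ m₀` with `m ≡ t (mod 6)`. -/
theorem stmt_14
    (M N : Type) [AddCommGroup M]
    [Module (MonoidAlgebra (ZMod 2) (Equiv.Perm (Fin 4))) M]
    [Module.Finite (MonoidAlgebra (ZMod 2) (Equiv.Perm (Fin 4))) M]
    [AddCommGroup N] [Module (MonoidAlgebra (ZMod 2) (Equiv.Perm (Fin 4))) N]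
    [Module.Finite (MonoidAlgebra (ZMod 2) (Equiv.Perm (Fin 4))) N]
    (hm : ∃ m : ℕ, 0 < m ∧ Nontrivial
      (((_root_.Ext (ZMod 2) (ModuleCat (MonoidAlgebra (ZMod 2) (Equiv.Perm (Fin 4)))) m).obj
        (Opposite.op (ModuleCat.of (MonoidAlgebra (ZMod 2) (Equiv.Perm (Fin 4))) M))).obj
        (ModuleCat.of (MonoidAlgebra (ZMod 2) (Equiv.Perm (Fin 4))) N))) :
    ∃ t : ℕ, t ≤ 5 ∧ ∃ m₀ : ℕ, ∀ m ≥ m₀, m % 6 = t → Nontrivial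
      (((_root_.Ext (ZMod 2) (ModuleCat (MonoidAlgebra (ZMod 2) (Equiv.Perm (Fin 4)))) m).obj
        (Opposite.op (ModuleCat.of (MonoidAlgebra (ZMod 2) (Equiv.Perm (Fin 4))) M))).obj
        (ModuleCat.of (MonoidAlgebra (ZMod 2) (Equiv.Perm (Fin 4))) N)) :=
  stmt_14_general M N hm
end
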